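/- arXiv:2101.04986 — 2 statements merged into one kernel-verified Lean document; each statement's English description precedes it below -/
import Mathlib

section
/- Let X₁, X₂ be Polish metric spaces, C : X₁ × 𝒫(X₂) → (−∞,+∞] lower semi-continuous, bounded from below, with C(x₁,·) convex for every x₁, and let F₁, F₂ be superlinear admissible entropy functions such that F₂ has property (BM) on X₂. Then Λ_ET^< = Λ_R. -/
open MeasureTheory Filter Set Topology
open scoped ENNReal NNReal BoundedContinuousFunction

noncomputable section

/-- The "positive part" of an extended real number, as an element of `ℝ≥0∞`. -/
def posE (a : EReal) : ℝ≥0∞ := if a = ⊤ then ⊤ else ENNReal.ofReal a.toReal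

/-- Integral of an `EReal`-valued function: positive part minus negative part
(in `EReal`, so that it is always defined). -/
def eIntegral {α : Type*} [MeasurableSpace α] (μ : Measure α) (f : α → EReal) : EReal :=
  ((∫⁻ x, posE (f x) ∂μ : ℝ≥0∞) : EReal) - ((∫⁻ x, posE (-(f x)) ∂μ : ℝ≥0∞) : EReal)

/-- The recession constant `lim_{s→∞} G(s)/s` (as a `limsup`, which coincides with the
limit for convex functions). -/
def recessionOf (G : ℝ → ℝ≥0∞) : ℝ≥0∞ :=
  Filter.limsup (fun s : ℝ => G s / ENNReal.ofReal s) Filter.atTop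

/-- An admissible entropy function: a convex, lower semicontinuous function
`F : [0,∞) → [0,∞]` which is finite at some positive point. -/
structure EntropyFn where
  F : ℝ → ℝ≥0∞
  convex' : ∀ a ∈ Ici (0:ℝ), ∀ b ∈ Ici (0:ℝ), ∀ t : ℝ, 0 ≤ t → t ≤ 1 →
    F (t * a + (1 - t) * b) ≤ ENNReal.ofReal t * F a + ENNReal.ofReal (1 - t) * F b
  lsc : LowerSemicontinuousOn F (Ici (0:ℝ))
  dom : ∃ s : ℝ, 0 < s ∧ F s ≠ ∞

namespace EntropyFn

/-- The recession constant `F'_∞ = lim_{s→∞} F(s)/s`. -/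
def recC (F : EntropyFn) : ℝ≥0∞ := recessionOf F.F

/-- `F` is superlinear if `F'_∞ = ∞`. -/
def Superlinear (F : EntropyFn) : Prop := F.recC = ∞

/-- `F°(φ) := inf_{s ≥ 0} (φ·s + F(s))`, extended to `EReal` arguments. -/
def circ (F : EntropyFn) (φ : EReal) : EReal :=
  ⨅ s : Ici (0:ℝ), φ * ((s : ℝ) : EReal) + ((F.F (s : ℝ) : ℝ≥0∞) : EReal)

/-- The (interior of the) domain of `F°` is taken inside the set where `F°` is not `-∞`. -/
def circDom (F : EntropyFn) : Set ℝ := {φ : ℝ | F.circ (φ : EReal) ≠ ⊥}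

/-- The reverse entropy function `R(r) = r·F(1/r)` for `r > 0`, with `R(0) = F'_∞`. -/
def revF (F : EntropyFn) (r : ℝ) : ℝ≥0∞ :=
  if 0 < r then ENNReal.ofReal r * F.F (1 / r) else F.recC

/-- The Legendre conjugate `R*(ψ) = sup_{s ≥ 0} (s·ψ − R(s))` of the reverse function. -/
def revConj (F : EntropyFn) (ψ : ℝ) : EReal :=
  ⨆ s : Ici (0:ℝ), (((s : ℝ) * ψ : ℝ) : EReal) - ((F.revF (s : ℝ) : ℝ≥0∞) : EReal)

end EntropyFn

/-- The entropy functional `ℱ(γ|μ) = ∫ F(dγ/dμ) dμ + F'_∞ · γ^⊥(X)`, where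
`γ = (dγ/dμ)·μ + γ^⊥` is the Lebesgue decomposition of `γ` with respect to `μ`. -/
def entF {X : Type*} [MeasurableSpace X] (F : EntropyFn) (γ μ : Measure X) : ℝ≥0∞ :=
  (∫⁻ x, F.F ((γ.rnDeriv μ x).toReal) ∂μ) + F.recC * (γ.singularPart μ) Set.univ

/-- The reverse entropy functional `ℛ(μ|γ) = ∫ R(dμ/dγ) dγ + R'_∞ · μ^⊥(X)`. -/
def revEntF {X : Type*} [MeasurableSpace X] (F : EntropyFn) (μ γ : Measure X) : ℝ≥0∞ :=
  (∫⁻ x, F.revF ((μ.rnDeriv γ x).toReal) ∂γ) + recessionOf F.revF * (μ.singularPart γ) Set.univ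

section WOET

variable {X₁ X₂ : Type*} [MeasurableSpace X₁] [MeasurableSpace X₂]

/-- The weak entropy-transport cost
`ℰ_C(γ|μ₁,μ₂) = ℱ₁(γ₁|μ₁) + ℱ₂(γ₂|μ₂) + ∫ C(x₁, γ_{x₁}) dγ₁(x₁)`. -/
def wCost [StandardBorelSpace X₂] [Nonempty X₂]
    (C : X₁ → ProbabilityMeasure X₂ → EReal) (F₁ F₂ : EntropyFn)
    (μ₁ : Measure X₁) (μ₂ : Measure X₂)
    (γ : Measure (X₁ × X₂)) (hγ : IsFiniteMeasure γ) : EReal :=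
  haveI := hγ
  ((entF F₁ γ.fst μ₁ : ℝ≥0∞) : EReal) + ((entF F₂ γ.snd μ₂ : ℝ≥0∞) : EReal) +
    eIntegral γ.fst (fun x₁ => C x₁ ⟨γ.condKernel x₁, inferInstance⟩)

/-- The weak optimal entropy-transport value `ℰ_C(μ₁,μ₂)`. -/
def wOpt [StandardBorelSpace X₂] [Nonempty X₂]
    (C : X₁ → ProbabilityMeasure X₂ → EReal) (F₁ F₂ : EntropyFn)
    (μ₁ : Measure X₁) (μ₂ : Measure X₂) : EReal :=
  sInf { e : EReal | ∃ (γ : Measure (X₁ × X₂)) (hγ : IsFiniteMeasure γ),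
    e = wCost C F₁ F₂ μ₁ μ₂ γ hγ }

variable [TopologicalSpace X₁] [TopologicalSpace X₂]

/-- The dual feasible set `Λ`. -/
def lamSet (C : X₁ → ProbabilityMeasure X₂ → EReal) (F₁ F₂ : EntropyFn) :
    Set ((X₁ →ᵇ ℝ) × (X₂ →ᵇ ℝ)) :=
  { φ | (∀ x, φ.1 x ∈ interior F₁.circDom) ∧ (∀ x, φ.2 x ∈ interior F₂.circDom) ∧
      ∀ (x₁ : X₁) (p : ProbabilityMeasure X₂),
        ((φ.1 x₁ + ∫ x₂, φ.2 x₂ ∂(p : Measure X₂) : ℝ) : EReal) ≤ C x₁ p }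

/-- The dual feasible set `Λ_R`. -/
def lamRSet (C : X₁ → ProbabilityMeasure X₂ → EReal) (F₁ F₂ : EntropyFn) :
    Set ((X₁ →ᵇ ℝ) × (X₂ →ᵇ ℝ)) :=
  { φ | (∃ b : ℝ, ((b : ℝ) : EReal) < ((F₁.F 0 : ℝ≥0∞) : EReal) ∧ ∀ x, φ.1 x ≤ b) ∧
        (∃ b : ℝ, ((b : ℝ) : EReal) < ((F₂.F 0 : ℝ≥0∞) : EReal) ∧ ∀ x, φ.2 x ≤ b) ∧
        ∀ (x₁ : X₁) (p : ProbabilityMeasure X₂),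
          F₁.revConj (φ.1 x₁) + eIntegral (p : Measure X₂) (fun x₂ => F₂.revConj (φ.2 x₂))
            ≤ C x₁ p }

/-- The dual feasible set `Λ_ET` (constraints tested against all pairs of nonnegative finite
measures; on all other signed measures `ET = +∞`, so those constraints are vacuous). -/
def lamETSet [StandardBorelSpace X₂] [Nonempty X₂]
    (C : X₁ → ProbabilityMeasure X₂ → EReal) (F₁ F₂ : EntropyFn) :
    Set ((X₁ →ᵇ ℝ) × (X₂ →ᵇ ℝ)) :=
  { φ | ∀ (μ₁ : Measure X₁) (μ₂ : Measure X₂), IsFiniteMeasure μ₁ → IsFiniteMeasure μ₂ →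
      (((∫ x, φ.1 x ∂μ₁) + ∫ x, φ.2 x ∂μ₂ : ℝ) : EReal) ≤ wOpt C F₁ F₂ μ₁ μ₂ }

/-- The set `Λ_ET^<`. -/
def lamETltSet [StandardBorelSpace X₂] [Nonempty X₂]
    (C : X₁ → ProbabilityMeasure X₂ → EReal) (F₁ F₂ : EntropyFn) :
    Set ((X₁ →ᵇ ℝ) × (X₂ →ᵇ ℝ)) :=
  { φ ∈ lamETSet C F₁ F₂ |
      (∃ b : ℝ, ((b : ℝ) : EReal) < ((F₁.F 0 : ℝ≥0∞) : EReal) ∧ ∀ x, φ.1 x ≤ b) ∧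
      (∃ b : ℝ, ((b : ℝ) : EReal) < ((F₂.F 0 : ℝ≥0∞) : EReal) ∧ ∀ x, φ.2 x ≤ b) }

/-- `R_C φ(x₁) := inf_{p ∈ 𝒫(X₂)} (C(x₁,p) + ∫ φ dp)`. -/
def RCfun (C : X₁ → ProbabilityMeasure X₂ → EReal) (φ : X₂ →ᵇ ℝ) (x₁ : X₁) : EReal :=
  ⨅ p : ProbabilityMeasure X₂, C x₁ p + ((∫ x₂, φ x₂ ∂(p : Measure X₂) : ℝ) : EReal)

/-- Property (BM) of an admissible entropy function on a space `X`. -/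
def HasBM (X : Type*) [TopologicalSpace X] [MeasurableSpace X] (F : EntropyFn) : Prop :=
  ∀ ψ : X →ᵇ ℝ, (∃ b : ℝ, ((b : ℝ) : EReal) < ((F.F 0 : ℝ≥0∞) : EReal) ∧ ∀ x, ψ x ≤ b) →
    ∃ s : X → ℝ, Measurable s ∧ (∃ M : ℝ, ∀ x, |s x| ≤ M) ∧ (∀ x, 0 < s x) ∧
      ∀ x, ((F.revF (s x) : ℝ≥0∞) : EReal) + F.revConj (ψ x) = ((s x * ψ x : ℝ) : EReal)

end WOET

/-- The functional `ET` extended to pairs of finite signed measures: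
it equals `ℰ_C(μ₁,μ₂)` when both arguments are (induced by) nonnegative finite measures,
and `+∞` otherwise. -/
def ETsgn {X₁ X₂ : Type*} [MeasurableSpace X₁] [MeasurableSpace X₂]
    [StandardBorelSpace X₂] [Nonempty X₂]
    (C : X₁ → ProbabilityMeasure X₂ → EReal) (F₁ F₂ : EntropyFn)
    (ν₁ : SignedMeasure X₁) (ν₂ : SignedMeasure X₂) : EReal :=
  sInf { e : EReal | ∃ (μ₁ : Measure X₁) (h₁ : IsFiniteMeasure μ₁)
      (μ₂ : Measure X₂) (h₂ : IsFiniteMeasure μ₂),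
      ν₁ = @Measure.toSignedMeasure X₁ _ μ₁ h₁ ∧ ν₂ = @Measure.toSignedMeasure X₂ _ μ₂ h₂ ∧
      e = wOpt C F₁ F₂ μ₁ μ₂ }

section Martingale

variable {X : Set ℝ}

/-- The martingale condition for a finite measure on `X × X`:
`∫ y dγ_x(y) = x` for `γ₁`-a.e. `x`. -/
def martCond [StandardBorelSpace ↥X] [Nonempty ↥X]
    (γ : Measure (↥X × ↥X)) (hγ : IsFiniteMeasure γ) : Prop :=
  haveI := hγ
  ∀ᵐ x ∂γ.fst, (∫ y, (y : ℝ) ∂(γ.condKernel x)) = (x : ℝ)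

/-- The martingale optimal entropy transport value `ℰ_M(μ₁,μ₂)` (with an `EReal`-valued
cost `c`). -/
def eMart [StandardBorelSpace ↥X] [Nonempty ↥X]
    (c : ↥X → ↥X → EReal) (F₁ F₂ : EntropyFn) (μ₁ μ₂ : Measure ↥X) : EReal :=
  sInf { e : EReal | ∃ (γ : Measure (↥X × ↥X)) (hγ : IsFiniteMeasure γ), martCond γ hγ ∧
    e = ((entF F₁ γ.fst μ₁ : ℝ≥0∞) : EReal) + ((entF F₂ γ.snd μ₂ : ℝ≥0∞) : EReal) +
        eIntegral γ (fun q => c q.1 q.2) }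

/-- The martingale optimal entropy transport value `ℰ_M(μ₁,μ₂)` (with a `[0,∞]`-valued
cost `c`). -/
def eMartNN [StandardBorelSpace ↥X] [Nonempty ↥X]
    (c : ↥X → ↥X → ℝ≥0∞) (F₁ F₂ : EntropyFn) (μ₁ μ₂ : Measure ↥X) : EReal :=
  sInf { e : EReal | ∃ (γ : Measure (↥X × ↥X)) (hγ : IsFiniteMeasure γ), martCond γ hγ ∧
    e = ((entF F₁ γ.fst μ₁ + entF F₂ γ.snd μ₂ + ∫⁻ q, c q.1 q.2 ∂γ : ℝ≥0∞) : EReal) }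

/-- The dual feasible set `Λ_M` for the martingale problem. -/
def lamM (c : ↥X → ↥X → EReal) (F₁ F₂ : EntropyFn) : Set ((↥X →ᵇ ℝ) × (↥X →ᵇ ℝ)) :=
  { φ | (∀ x, φ.1 x ∈ interior F₁.circDom) ∧ (∀ x, φ.2 x ∈ interior F₂.circDom) ∧
      ∃ h : ↥X →ᵇ ℝ, ∀ x₁ x₂ : ↥X,
        ((φ.1 x₁ + φ.2 x₂ + h x₁ * ((x₂ : ℝ) - (x₁ : ℝ)) : ℝ) : EReal) ≤ c x₁ x₂ }

/-- The perspective function `r·F(θ/r)` with the convention `r·F(θ/r) = θ·F'_∞` for `r = 0`. -/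
def perspFn (F : EntropyFn) (r θ : ℝ) : ℝ≥0∞ :=
  if r = 0 then ENNReal.ofReal θ * F.recC else ENNReal.ofReal r * F.F (θ / r)

/-- The homogeneous marginal perspective cost `H(x₁,r₁;x₂,r₂)` (the dependence on
`(x₁,x₂)` is through the value `c = c(x₁,x₂)`). -/
def Hcost (F₁ F₂ : EntropyFn) (c : ℝ≥0∞) (r₁ r₂ : ℝ) : ℝ≥0∞ :=
  if c ≠ ∞ then
    ⨅ θ : Ioi (0:ℝ), perspFn F₁ r₁ (θ : ℝ) + perspFn F₂ r₂ (θ : ℝ) + ENNReal.ofReal (θ : ℝ) * c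
  else F₁.F 0 * ENNReal.ofReal r₁ + F₂.F 0 * ENNReal.ofReal r₂

/-- The functional `ℋ(μ₁,μ₂|γ)`. -/
def hMargFun (F₁ F₂ : EntropyFn) (c : ↥X → ↥X → ℝ≥0∞) (μ₁ μ₂ : Measure ↥X)
    (γ : Measure (↥X × ↥X)) : ℝ≥0∞ :=
  (∫⁻ q, Hcost F₁ F₂ (c q.1 q.2) ((μ₁.rnDeriv γ.fst q.1).toReal)
      ((μ₂.rnDeriv γ.snd q.2).toReal) ∂γ)
    + F₁.F 0 * (μ₁.singularPart γ.fst) Set.univ + F₂.F 0 * (μ₂.singularPart γ.snd) Set.univ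

/-- The functional `ℛ(μ₁,μ₂|γ)`. -/
def rMargFun (F₁ F₂ : EntropyFn) (c : ↥X → ↥X → ℝ≥0∞) (μ₁ μ₂ : Measure ↥X)
    (γ : Measure (↥X × ↥X)) : ℝ≥0∞ :=
  revEntF F₁ μ₁ γ.fst + revEntF F₂ μ₂ γ.snd + ∫⁻ q, c q.1 q.2 ∂γ

/-- The first `p`-homogeneous marginal of a measure on `Y × Y`, `Y = X × [0,∞)`. -/
def hMarg1 (p : ℝ) (α : Measure ((↥X × ℝ≥0) × (↥X × ℝ≥0))) : Measure ↥X :=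
  Measure.map (fun q => q.1.1) (α.withDensity fun q => (q.1.2 : ℝ≥0∞) ^ p)

/-- The second `p`-homogeneous marginal of a measure on `Y × Y`, `Y = X × [0,∞)`. -/
def hMarg2 (p : ℝ) (α : Measure ((↥X × ℝ≥0) × (↥X × ℝ≥0))) : Measure ↥X :=
  Measure.map (fun q => q.2.1) (α.withDensity fun q => (q.2.2 : ℝ≥0∞) ^ p)

/-- Membership in the homogeneous constraint set `ℋ^p_{M,≤}(μ₁,μ₂)`. -/
def memHpM (p : ℝ) (μ₁ μ₂ : Measure ↥X) (α : Measure ((↥X × ℝ≥0) × (↥X × ℝ≥0))) : Prop :=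
  IsFiniteMeasure α ∧ (∫⁻ q, (q.1.2 : ℝ≥0∞) ^ p + (q.2.2 : ℝ≥0∞) ^ p ∂α) ≠ ∞ ∧
    hMarg1 p α ≤ μ₁ ∧ hMarg2 p α ≤ μ₂ ∧
    ∀ h : ↥X →ᵇ ℝ, (∫ q, h q.1.1 * ((q.2.1 : ℝ) - (q.1.1 : ℝ)) ∂α) = 0

end Martingale

namespace Stmt12Aux

lemma coe_E (a : ℝ≥0∞) (h : a ≠ ∞) : (a : EReal) = ((a.toReal : ℝ) : EReal) := by
  rw [EReal.coe_ennreal_toReal h]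

lemma posE_coe (a : ℝ) : posE (a : EReal) = ENNReal.ofReal a := by
  simp [posE]

lemma posE_mono {a b : EReal} (h : a ≤ b) : posE a ≤ posE b := by
  induction b using EReal.rec with
  | bot => simp at h; simp [h]
  | top => simp [posE]
  | coe b =>
    induction a using EReal.rec with
    | bot => simp [posE]
    | top => simp at h
    | coe a =>
      rw [posE_coe, posE_coe]
      exact ENNReal.ofReal_le_ofReal (by exact_mod_cast h)

lemma posE_sub (a : EReal) : ((posE a : ℝ≥0∞) : EReal) - ((posE (-a) : ℝ≥0∞) : EReal) = a := by
  induction a using EReal.rec with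
  | bot => simp [posE]
  | top => simp [posE]
  | coe a =>
    rw [← EReal.coe_neg, posE_coe, posE_coe, EReal.coe_ennreal_ofReal, EReal.coe_ennreal_ofReal]
    rcases le_total 0 a with h | h
    · simp [h]
    · rw [max_eq_right h, max_eq_left (by linarith)]
      norm_cast; simp

lemma eIntegral_mono {α : Type*} [MeasurableSpace α] (μ : Measure α) {f g : α → EReal}
    (h : ∀ x, f x ≤ g x) : eIntegral μ f ≤ eIntegral μ g := by
  unfold eIntegral
  apply EReal.sub_le_sub
  · exact_mod_cast lintegral_mono fun x => posE_mono (h x)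
  · exact_mod_cast lintegral_mono fun x => posE_mono (EReal.neg_le_neg_iff.2 (h x))

lemma eIntegral_coe {α : Type*} [MeasurableSpace α] (μ : Measure α) {f : α → ℝ}
    (h : Integrable f μ) : eIntegral μ (fun x => (f x : EReal)) = ((∫ x, f x ∂μ : ℝ) : EReal) := by
  unfold eIntegral
  have h1 : ∀ x, posE (-(f x : EReal)) = ENNReal.ofReal (-f x) := fun x => by
    rw [← EReal.coe_neg, posE_coe]
  simp only [posE_coe, h1]
  rw [integral_eq_lintegral_pos_part_sub_lintegral_neg_part h, EReal.coe_sub,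
    EReal.coe_ennreal_toReal h.lintegral_lt_top.ne, EReal.coe_ennreal_toReal]
  exact h.neg.lintegral_lt_top.ne

lemma eIntegral_dirac {α : Type*} [MeasurableSpace α] [MeasurableSingletonClass α] (a : α)
    (f : α → EReal) : eIntegral (Measure.dirac a) f = f a := by
  unfold eIntegral
  rw [lintegral_dirac, lintegral_dirac, posE_sub]

/-- upper bound for the conjugate -/
lemma upper (F : EntropyFn) (b : ℝ) (hb : (b : EReal) < ((F.F 0 : ℝ≥0∞) : EReal)) :
    ∃ M : ℝ, 0 ≤ M ∧ ∀ ψ : ℝ, ψ ≤ b → F.revConj ψ ≤ ((M * |ψ| : ℝ) : EReal) := by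
  rcases lt_or_ge b 0 with h0 | h0
  · refine ⟨0, le_rfl, fun ψ hψ => iSup_le fun s => ?_⟩
    have hs : (0:ℝ) ≤ s := s.2
    refine (EReal.sub_le_sub (le_refl _) (EReal.coe_ennreal_nonneg _)).trans ?_
    rw [sub_zero]
    exact_mod_cast (by nlinarith : (s:ℝ) * ψ ≤ 0 * |ψ|)
  · have hb' : ENNReal.ofReal b < F.F 0 := by
      rw [← EReal.coe_ennreal_lt_coe_ennreal_iff, EReal.coe_ennreal_ofReal, max_eq_left h0]
      exact hb
    have hl := F.lsc 0 (by simp) _ hb'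
    rw [eventually_nhdsWithin_iff, Metric.eventually_nhds_iff] at hl
    obtain ⟨δ, hδ, hl⟩ := hl
    refine ⟨1 / δ, by positivity, fun ψ hψ => iSup_le fun s => ?_⟩
    have hs : (0:ℝ) ≤ s := s.2
    rcases le_or_gt (s:ℝ) (1/δ) with h1 | h1
    · refine (EReal.sub_le_sub (le_refl _) (EReal.coe_ennreal_nonneg _)).trans ?_
      rw [sub_zero]
      have : (s:ℝ) * ψ ≤ 1 / δ * |ψ| :=
        (mul_le_mul_of_nonneg_left (le_abs_self ψ) hs).trans
          (mul_le_mul_of_nonneg_right h1 (abs_nonneg ψ))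
      exact_mod_cast this
    · have hs' : (0:ℝ) < s := lt_of_le_of_lt (by positivity) h1
      have h2 : ENNReal.ofReal (s * b) ≤ F.revF s := by
        rw [EntropyFn.revF, if_pos hs', ENNReal.ofReal_mul hs]
        gcongr
        refine (hl (y := 1 / (s:ℝ)) ?_ (by simp [hs])).le
        rw [Real.dist_eq, sub_zero, abs_of_pos (by positivity)]
        rw [div_lt_iff₀ hδ] at h1
        rw [div_lt_iff₀ hs']; linarith
      have h3 : ((s * b : ℝ) : EReal) ≤ F.revF s := by
        refine le_trans ?_ (EReal.coe_ennreal_le_coe_ennreal_iff.2 h2)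
        rw [EReal.coe_ennreal_ofReal]; exact_mod_cast le_max_left _ _
      refine (EReal.sub_le_sub (le_refl _) h3).trans ?_
      rw [← EReal.coe_sub]
      have h4 : (s:ℝ) * ψ - s * b ≤ 0 := by nlinarith
      have h5 : 0 ≤ 1 / δ * |ψ| := by positivity
      exact_mod_cast h4.trans h5

lemma lower (F : EntropyFn) : ∃ s₀ c : ℝ, 0 < s₀ ∧ ∀ ψ : ℝ,
    ((s₀ * ψ - c : ℝ) : EReal) ≤ F.revConj ψ := by
  obtain ⟨s, hs, hF⟩ := F.dom
  refine ⟨1 / s, (F.revF (1/s)).toReal, by positivity, fun ψ => ?_⟩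
  have hne : F.revF (1/s) ≠ ∞ := by
    rw [EntropyFn.revF, if_pos (by positivity)]
    exact ENNReal.mul_ne_top ENNReal.ofReal_ne_top (by simpa using hF)
  rw [EReal.coe_sub, EReal.coe_ennreal_toReal hne]
  exact le_iSup (fun s : Ici (0:ℝ) => (((s : ℝ) * ψ : ℝ) : EReal) - ((F.revF (s : ℝ) : ℝ≥0∞) : EReal))
    ⟨1/s, by simp [hs.le]⟩

lemma revConj_mono (F : EntropyFn) : Monotone F.revConj := by
  intro a b hab
  refine iSup_mono fun s => EReal.sub_le_sub ?_ le_rfl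
  exact_mod_cast mul_le_mul_of_nonneg_left hab s.2

lemma conj_real (F : EntropyFn) {X : Type*} [TopologicalSpace X] [MeasurableSpace X]
    [BorelSpace X] (ψ : X →ᵇ ℝ)
    (h : ∃ b : ℝ, ((b : ℝ) : EReal) < ((F.F 0 : ℝ≥0∞) : EReal) ∧ ∀ x, ψ x ≤ b) :
    ∃ g : X → ℝ, Measurable g ∧ (∃ B : ℝ, ∀ x, |g x| ≤ B) ∧
      ∀ x, F.revConj (ψ x) = (g x : EReal) := by
  obtain ⟨b, hb, hψ⟩ := h
  obtain ⟨M, hM, hu⟩ := upper F b hb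
  obtain ⟨s₀, c, hs₀, hl⟩ := lower F
  have hg : ∀ x, F.revConj (ψ x) = ((F.revConj (ψ x)).toReal : EReal) := fun x => by
    rw [EReal.coe_toReal]
    · exact ne_top_of_le_ne_top (EReal.coe_ne_top _) (hu _ (hψ x))
    · exact ne_bot_of_le_ne_bot (EReal.coe_ne_bot _) (hl _)
  refine ⟨fun x => (F.revConj (ψ x)).toReal, ?_, ⟨M * ‖ψ‖ + s₀ * ‖ψ‖ + |c|, fun x => ?_⟩, hg⟩
  · exact ((revConj_mono F).measurable.comp ψ.continuous.measurable).ereal_toReal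
  · have h1 := hu _ (hψ x)
    have h2 := hl (ψ x)
    rw [hg x] at h1 h2
    have h1' : (F.revConj (ψ x)).toReal ≤ M * |ψ x| := by exact_mod_cast h1
    have h2' : s₀ * ψ x - c ≤ (F.revConj (ψ x)).toReal := by exact_mod_cast h2
    have h3 : |ψ x| ≤ ‖ψ‖ := ψ.norm_coe_le_norm x
    have h4 := neg_abs_le (ψ x)
    have h5 := le_abs_self c
    have h6 := norm_nonneg ψ
    have h7 := abs_nonneg c
    rw [abs_le]
    constructor
    · nlinarith
    · nlinarith

/-- Fenchel-type inequality -/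
lemma fenchel (F : EntropyFn) (ψ g f b : ℝ) (hf : 0 ≤ f)
    (hb : (b : EReal) < ((F.F 0 : ℝ≥0∞) : EReal)) (hψ : ψ ≤ b) (hg : F.revConj ψ = (g : EReal)) :
    ENNReal.ofReal (ψ - f * g) ≤ F.F f := by
  rcases hf.eq_or_lt with h0 | h0
  · subst h0
    rw [← EReal.coe_ennreal_le_coe_ennreal_iff, EReal.coe_ennreal_ofReal, EReal.coe_strictMono.monotone.map_max]
    refine max_le ?_ (EReal.coe_ennreal_nonneg (F.F 0))
    rw [zero_mul, sub_zero]
    exact le_trans (by exact_mod_cast hψ) hb.le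
  · by_cases hT : F.F f = ∞
    · simp [hT]
    have h1 := le_iSup (fun s : Ici (0:ℝ) => (((s : ℝ) * ψ : ℝ) : EReal) -
      ((F.revF (s : ℝ) : ℝ≥0∞) : EReal)) ⟨1/f, by simp [hf]⟩
    change _ ≤ F.revConj ψ at h1
    rw [hg] at h1
    have h2 : F.revF (1/f) = ENNReal.ofReal (1 / f * (F.F f).toReal) := by
      rw [EntropyFn.revF, if_pos (by positivity), one_div_one_div,
        ENNReal.ofReal_mul (by positivity), ENNReal.ofReal_toReal hT]
    simp only [h2] at h1
    rw [EReal.coe_ennreal_ofReal, max_eq_left (by positivity), ← EReal.coe_sub] at h1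
    have h3 : 1 / f * ψ - 1 / f * (F.F f).toReal ≤ g := by exact_mod_cast h1
    refine ENNReal.ofReal_le_of_le_toReal ?_
    have h4 := mul_le_mul_of_nonneg_left h3 hf
    have h5 : f * (1 / f * ψ - 1 / f * (F.F f).toReal) = ψ - (F.F f).toReal := by
      field_simp
    linarith

lemma bdd_int {X : Type*} [MeasurableSpace X] (μ : Measure X) [IsFiniteMeasure μ] {g : X → ℝ}
    (hg : Measurable g) (hB : ∃ B : ℝ, ∀ x, |g x| ≤ B) : Integrable g μ := by
  obtain ⟨B, hB⟩ := hB
  exact Integrable.of_bound hg.aestronglyMeasurable B (ae_of_all _ hB)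

lemma ent_lower (F : EntropyFn) (hF : F.Superlinear) {X : Type*} [TopologicalSpace X]
    [MeasurableSpace X]
    [BorelSpace X] (ψ : X →ᵇ ℝ)
    (h : ∃ b : ℝ, ((b : ℝ) : EReal) < ((F.F 0 : ℝ≥0∞) : EReal) ∧ ∀ x, ψ x ≤ b)
    (g : X → ℝ) (hgm : Measurable g) (hgB : ∃ B : ℝ, ∀ x, |g x| ≤ B)
    (hg : ∀ x, F.revConj (ψ x) = (g x : EReal))
    (γ μ : Measure X) [IsFiniteMeasure γ] [IsFiniteMeasure μ] (hfin : entF F γ μ ≠ ∞) :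
    ∫ x, ψ x ∂μ ≤ (entF F γ μ).toReal + ∫ x, g x ∂γ := by
  obtain ⟨b, hb, hψ⟩ := h
  have hrec : F.recC = ∞ := hF
  unfold entF at hfin ⊢
  rw [hrec] at hfin ⊢
  have hs : (γ.singularPart μ) Set.univ = 0 := by
    by_contra hne
    rw [ENNReal.top_mul hne] at hfin
    simp at hfin
  rw [hs, mul_zero, add_zero] at hfin ⊢
  have hac : γ ≪ μ := by
    rw [← Measure.singularPart_eq_zero]
    exact Measure.measure_univ_eq_zero.1 hs
  rw [← integral_toReal_rnDeriv_mul hac]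
  have hi1 : Integrable (fun x => (γ.rnDeriv μ x).toReal * g x) μ :=
    (integrable_toReal_rnDeriv_mul_iff hac).2 (bdd_int γ hgm hgB)
  have hi2 : Integrable (fun x => ψ x) μ := ψ.integrable μ
  suffices hh : ∫ x, (ψ x - (γ.rnDeriv μ x).toReal * g x) ∂μ ≤
      (∫⁻ x, F.F ((γ.rnDeriv μ x).toReal) ∂μ).toReal by
    rw [integral_sub hi2 hi1] at hh
    linarith
  have hi3 : Integrable (fun x => ψ x - (γ.rnDeriv μ x).toReal * g x) μ := hi2.sub hi1
  rw [integral_eq_lintegral_pos_part_sub_lintegral_neg_part hi3]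
  refine (sub_le_self _ ENNReal.toReal_nonneg).trans ?_
  refine ENNReal.toReal_mono hfin (lintegral_mono fun x => ?_)
  exact fenchel F _ _ _ b ENNReal.toReal_nonneg hb (hψ x) (hg x)

lemma ent_upper (F : EntropyFn) {X : Type*} [MeasurableSpace X] (p : Measure X)
    [IsFiniteMeasure p] (s : X → ℝ) (hs : Measurable s) (hpos : ∀ x, 0 < s x) :
    entF F p (p.withDensity fun x => ENNReal.ofReal (s x)) ≤ ∫⁻ x, F.revF (s x) ∂p := by
  have hm : Measurable fun x => ENNReal.ofReal (s x) := hs.ennreal_ofReal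
  have h0 : ∀ᵐ x ∂p, ENNReal.ofReal (s x) ≠ 0 := ae_of_all _ fun x => by simp [hpos x]
  have ht : ∀ᵐ x ∂p, ENNReal.ofReal (s x) ≠ ∞ := ae_of_all _ fun x => ENNReal.ofReal_ne_top
  have hac : p ≪ p.withDensity fun x => ENNReal.ofReal (s x) :=
    withDensity_absolutelyContinuous' hm.aemeasurable h0
  have : SigmaFinite (p.withDensity fun x => ENNReal.ofReal (s x)) :=
    SigmaFinite.withDensity_of_ne_top ht
  unfold entF
  rw [(Measure.singularPart_eq_zero _ _).2 hac]
  simp only [Measure.coe_zero, Pi.zero_apply, mul_zero, add_zero]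
  have hr := Measure.rnDeriv_withDensity_right p p hm.aemeasurable h0 ht
  have hr2 := Measure.rnDeriv_self p
  refine (lintegral_withDensity_le_lintegral_mul p hm _).trans (lintegral_mono_ae ?_)
  filter_upwards [hr, hr2] with x hx hx2
  simp only [Pi.mul_apply]
  rw [hx, hx2, mul_one, EntropyFn.revF, if_pos (hpos x), ENNReal.toReal_inv,
    ENNReal.toReal_ofReal (hpos x).le, one_div]

end Stmt12Aux

open Stmt12Aux

theorem stmt12
    {X₁ : Type*} [MetricSpace X₁] [PolishSpace X₁] [MeasurableSpace X₁] [BorelSpace X₁]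
    {X₂ : Type*} [MetricSpace X₂] [PolishSpace X₂] [MeasurableSpace X₂] [BorelSpace X₂]
    [Nonempty X₂]
    (C : X₁ → ProbabilityMeasure X₂ → EReal)
    (hClsc : LowerSemicontinuous fun q : X₁ × ProbabilityMeasure X₂ => C q.1 q.2)
    (hCbdd : ∃ K : ℝ, ∀ x p, (K : EReal) ≤ C x p)
    (hCconv : ∀ (x : X₁) (p q m : ProbabilityMeasure X₂) (t : ℝ), 0 ≤ t → t ≤ 1 →
      (m : Measure X₂) = ENNReal.ofReal t • (p : Measure X₂)
          + ENNReal.ofReal (1 - t) • (q : Measure X₂) →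
      C x m ≤ (t : EReal) * C x p + ((1 - t : ℝ) : EReal) * C x q)
    (F₁ F₂ : EntropyFn) (hF₁ : F₁.Superlinear) (hF₂ : F₂.Superlinear) (hBM : HasBM X₂ F₂) :
    lamETltSet C F₁ F₂ = lamRSet C F₁ F₂ := by
  ext φ
  constructor
  · rintro ⟨hET, h1, h2⟩
    refine ⟨h1, h2, fun x₁ p => ?_⟩
    obtain ⟨g₂, hg₂m, hg₂B, hg₂⟩ := conj_real F₂ φ.2 h2
    obtain ⟨s, hsm, hsB, hspos, hs⟩ := hBM φ.2 h2
    have hgi : Integrable g₂ (p : Measure X₂) := bdd_int _ hg₂m hg₂B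
    simp only [hg₂]
    rw [eIntegral_coe _ hgi]
    have hsi : Integrable (fun x => s x * φ.2 x) (p : Measure X₂) := by
      refine bdd_int _ (hsm.mul φ.2.continuous.measurable) ?_
      obtain ⟨M, hM⟩ := hsB
      refine ⟨M * ‖φ.2‖, fun x => ?_⟩
      rw [abs_mul]
      exact mul_le_mul (hM x) (φ.2.norm_coe_le_norm x) (abs_nonneg _)
        ((abs_nonneg _).trans (hM x))
    have hR : ∀ x, F₂.revF (s x) = ENNReal.ofReal (s x * φ.2 x - g₂ x) := by
      intro x
      have h := hs x
      rw [hg₂] at h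
      have hne : F₂.revF (s x) ≠ ∞ := by
        intro h'
        rw [h', EReal.coe_ennreal_top, EReal.top_add_coe] at h
        exact EReal.coe_ne_top _ h.symm
      rw [coe_E _ hne] at h
      have h' : (F₂.revF (s x)).toReal + g₂ x = s x * φ.2 x := by exact_mod_cast h
      rw [← h', add_sub_cancel_right, ENNReal.ofReal_toReal hne]
    have hRn : ∀ x, 0 ≤ s x * φ.2 x - g₂ x := by
      intro x
      have h := hs x
      rw [hg₂] at h
      have hne : F₂.revF (s x) ≠ ∞ := by
        intro h'
        rw [h', EReal.coe_ennreal_top, EReal.top_add_coe] at h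
        exact EReal.coe_ne_top _ h.symm
      rw [coe_E _ hne] at h
      have h' : (F₂.revF (s x)).toReal + g₂ x = s x * φ.2 x := by exact_mod_cast h
      rw [← h', add_sub_cancel_right]
      exact ENNReal.toReal_nonneg
    have hent2 : entF F₂ (p : Measure X₂)
        ((p : Measure X₂).withDensity fun x => ENNReal.ofReal (s x)) ≤
        ENNReal.ofReal (∫ x, (s x * φ.2 x - g₂ x) ∂(p : Measure X₂)) := by
      refine (ent_upper F₂ _ s hsm hspos).trans ?_
      have hi3 : Integrable (fun x => s x * φ.2 x - g₂ x) (p : Measure X₂) := hsi.sub hgi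
      rw [ofReal_integral_eq_lintegral_ofReal hi3 (ae_of_all _ hRn)]
      simp only [hR]
      exact le_rfl
    rw [← EReal.le_sub_iff_add_le (by simp) (by simp)]
    refine iSup_le fun t => ?_
    have ht0 : (0:ℝ) ≤ t := t.2
    rw [EReal.le_sub_iff_add_le (by simp) (by simp)]
    by_cases hRt : F₁.revF t = ∞
    · rw [hRt]; simp
    have htpos : (0:ℝ) < t := by
      rcases ht0.eq_or_lt with h | h
      · exfalso; apply hRt
        rw [← h, EntropyFn.revF, if_neg (lt_irrefl _)]; exact hF₁
      · exact h
    have hent1 : entF F₁ (Measure.dirac x₁)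
        ((Measure.dirac x₁).withDensity fun _ => ENNReal.ofReal (t:ℝ)) ≤ F₁.revF t := by
      refine (ent_upper F₁ _ (fun _ => (t:ℝ)) measurable_const (fun _ => htpos)).trans ?_
      simp
    set μ₁ := (Measure.dirac x₁).withDensity fun _ => ENNReal.ofReal (t:ℝ) with hμ₁
    set μ₂ := (p : Measure X₂).withDensity fun x => ENNReal.ofReal (s x) with hμ₂
    have hf1 : IsFiniteMeasure μ₁ := isFiniteMeasure_withDensity (by simp)
    have hf2 : IsFiniteMeasure μ₂ := by
      obtain ⟨M, hM⟩ := hsB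
      refine isFiniteMeasure_withDensity_ofReal (bdd_int _ hsm ⟨M, hM⟩).2
    have key := hET μ₁ μ₂ hf1 hf2
    set γ : Measure (X₁ × X₂) := (Measure.dirac x₁).prod (p : Measure X₂) with hγ
    have hγf : IsFiniteMeasure γ := inferInstance
    have hfst : γ.fst = Measure.dirac x₁ := by simp [hγ]
    have hsnd : γ.snd = (p : Measure X₂) := by simp [hγ]
    have hck : (⟨γ.condKernel x₁, inferInstance⟩ : ProbabilityMeasure X₂) = p := by
      apply Subtype.ext
      have h := ProbabilityTheory.eq_condKernel_of_measure_eq_compProd (ρ := γ)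
        (ProbabilityTheory.Kernel.const X₁ (p : Measure X₂)) (by
          rw [hfst, Measure.compProd_const])
      rw [hfst, ae_dirac_eq] at h
      simpa using h.symm
    have hcost : wCost C F₁ F₂ μ₁ μ₂ γ hγf ≤ ((F₁.revF t : ℝ≥0∞) : EReal) +
        ((∫ x, (s x * φ.2 x - g₂ x) ∂(p : Measure X₂) : ℝ) : EReal) + C x₁ p := by
      unfold wCost
      rw [hfst, hsnd, eIntegral_dirac, hck]
      refine add_le_add (add_le_add ?_ ?_) le_rfl
      · exact_mod_cast hent1
      · refine (EReal.coe_ennreal_le_coe_ennreal_iff.2 hent2).trans ?_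
        rw [EReal.coe_ennreal_ofReal, max_eq_left (integral_nonneg hRn)]
    have hle : wOpt C F₁ F₂ μ₁ μ₂ ≤ wCost C F₁ F₂ μ₁ μ₂ γ hγf := sInf_le ⟨γ, hγf, rfl⟩
    have key2 := key.trans (hle.trans hcost)
    have hi1 : ∫ x, φ.1 x ∂μ₁ = t * φ.1 x₁ := by
      rw [hμ₁, integral_withDensity_eq_integral_toReal_smul (by fun_prop) (by simp),
        integral_dirac]
      simp [ht0]
    have hi2 : ∫ x, φ.2 x ∂μ₂ = ∫ x, s x * φ.2 x ∂(p : Measure X₂) := by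
      rw [hμ₂, integral_withDensity_eq_integral_toReal_smul hsm.ennreal_ofReal (by simp)]
      refine integral_congr_ae (ae_of_all _ fun x => ?_)
      simp [(hspos x).le]
    rw [hi1, hi2, integral_sub hsi hgi, coe_E _ hRt] at key2
    rw [coe_E _ hRt]
    revert key2
    induction C x₁ p using EReal.rec with
    | bot => intro h; simp at h; exact absurd h (by exact_mod_cast EReal.coe_ne_bot _)
    | top => intro _; exact le_top
    | coe c =>
      intro h
      have h' : t * φ.1 x₁ + ∫ x, s x * φ.2 x ∂(p : Measure X₂) ≤ (F₁.revF t).toReal +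
        (∫ x, s x * φ.2 x ∂(p : Measure X₂) - ∫ x, g₂ x ∂(p : Measure X₂)) + c := by
        exact_mod_cast h
      have h'' : t * φ.1 x₁ - (F₁.revF t).toReal + ∫ x, g₂ x ∂(p : Measure X₂) ≤ c := by linarith
      exact_mod_cast h''
  · rintro ⟨h1, h2, hR⟩
    refine ⟨fun μ₁ μ₂ hμ₁ hμ₂ => le_sInf ?_, h1, h2⟩
    rintro e ⟨γ, hγ, rfl⟩
    obtain ⟨g₁, hg₁m, hg₁B, hg₁⟩ := conj_real F₁ φ.1 h1
    obtain ⟨g₂, hg₂m, hg₂B, hg₂⟩ := conj_real F₂ φ.2 h2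
    have hR' : ∀ (x : X₁) (p : ProbabilityMeasure X₂),
        ((g₁ x + ∫ y, g₂ y ∂(p : Measure X₂) : ℝ) : EReal) ≤ C x p := by
      intro x p
      have h := hR x p
      simp only [hg₁, hg₂] at h
      rw [eIntegral_coe _ (bdd_int _ hg₂m hg₂B)] at h
      exact_mod_cast h
    unfold wCost
    have hfm : IsFiniteMeasure γ.fst := inferInstance
    have hsm : IsFiniteMeasure γ.snd := inferInstance
    have hg2γ : Integrable (fun q : X₁ × X₂ => g₂ q.2) γ := by
      obtain ⟨B, hB⟩ := hg₂B
      exact bdd_int _ (hg₂m.comp measurable_snd) ⟨B, fun q => hB q.2⟩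
    have hgi1 : Integrable g₁ γ.fst := bdd_int _ hg₁m hg₁B
    have hgi2 : Integrable (fun x => ∫ y, g₂ y ∂(γ.condKernel x)) γ.fst :=
      hg2γ.integral_condKernel
    have hlow : ((∫ x, (g₁ x + ∫ y, g₂ y ∂(γ.condKernel x)) ∂γ.fst : ℝ) : EReal) ≤
        eIntegral γ.fst (fun x₁ => C x₁ ⟨γ.condKernel x₁, inferInstance⟩) := by
      have hi3 : Integrable (fun x => g₁ x + ∫ y, g₂ y ∂(γ.condKernel x)) γ.fst := hgi1.add hgi2
      rw [← eIntegral_coe _ hi3]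
      refine eIntegral_mono _ fun x => ?_
      exact hR' x ⟨γ.condKernel x, inferInstance⟩
    have hsum : ∫ x, (g₁ x + ∫ y, g₂ y ∂(γ.condKernel x)) ∂γ.fst =
        ∫ x, g₁ x ∂γ.fst + ∫ y, g₂ y ∂γ.snd := by
      rw [integral_add hgi1 hgi2, Measure.integral_condKernel hg2γ, Measure.snd,
        integral_map measurable_snd.aemeasurable hg₂m.aestronglyMeasurable]
    rw [hsum] at hlow
    refine le_trans ?_ (add_le_add le_rfl hlow)
    by_cases hT1 : entF F₁ γ.fst μ₁ = ∞
    · rw [hT1, EReal.coe_ennreal_top, EReal.top_add_of_ne_bot (by simp), EReal.top_add_coe]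
      exact le_top
    by_cases hT2 : entF F₂ γ.snd μ₂ = ∞
    · rw [hT2, EReal.coe_ennreal_top, EReal.add_top_of_ne_bot (by simp), EReal.top_add_coe]
      exact le_top
    have e1 := ent_lower F₁ hF₁ φ.1 h1 g₁ hg₁m hg₁B hg₁ γ.fst μ₁ hT1
    have e2 := ent_lower F₂ hF₂ φ.2 h2 g₂ hg₂m hg₂B hg₂ γ.snd μ₂ hT2
    rw [coe_E _ hT1, coe_E _ hT2]
    have e3 : (∫ x, φ.1 x ∂μ₁) + ∫ x, φ.2 x ∂μ₂ ≤ (entF F₁ γ.fst μ₁).toReal +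
      (entF F₂ γ.snd μ₂).toReal + (∫ x, g₁ x ∂γ.fst + ∫ y, g₂ y ∂γ.snd) := by linarith
    exact_mod_cast e3
end
end

section
/- Let X₁, X₂ be locally compact Polish metric spaces, C : X₁ × 𝒫(X₂) → (−∞,+∞] lower semi-continuous, bounded from below, with C(x₁,·) convex for every x₁, and let F₁, F₂ be superlinear admissible entropy functions such that F₂ has property (BM) on X₂. Then for every μ₁ ∈ ℳ(X₁), μ₂ ∈ ℳ(X₂): ℰ_C(μ₁,μ₂) = sup_{(φ₁,φ₂)∈Λ_R} Σ_{i=1}^2 ∫_{X_i} φ_i dμ_i. -/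
open MeasureTheory Filter Set Topology
open scoped ENNReal NNReal BoundedContinuousFunction

noncomputable section

namespace EntropyFn

/-- effective domain of `R*` -/
def DD (F : EntropyFn) : Set ℝ := {ψ | (ψ : EReal) < ((F.F 0 : ℝ≥0∞) : EReal)}

def rset (F : EntropyFn) (ψ : ℝ) : Set ℝ :=
  {v | ∃ s : ℝ, 0 < s ∧ F.F s ≠ ∞ ∧ v = (ψ - (F.F s).toReal) / s}

/-- real version of `R*` -/
def rr (F : EntropyFn) (ψ : ℝ) : ℝ := sSup (F.rset ψ)

lemma rset_nonempty (F : EntropyFn) (ψ : ℝ) : (F.rset ψ).Nonempty := by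
  obtain ⟨s, hs, h⟩ := F.dom
  exact ⟨_, s, hs, h, rfl⟩

lemma DD_of_neg (F : EntropyFn) {ψ : ℝ} (h : ψ < 0) : ψ ∈ F.DD := by
  have h1 : (ψ : EReal) < 0 := by exact_mod_cast h
  exact lt_of_lt_of_le h1 (EReal.coe_ennreal_nonneg _)

lemma DD_down (F : EntropyFn) {ψ χ : ℝ} (h : ψ ≤ χ) (hχ : χ ∈ F.DD) : ψ ∈ F.DD :=
  lt_of_le_of_lt (EReal.coe_le_coe_iff.2 h) hχ

lemma DD_open (F : EntropyFn) : IsOpen F.DD :=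
  isOpen_lt continuous_coe_real_ereal continuous_const

lemma DD_convex (F : EntropyFn) : Convex ℝ F.DD :=
  Set.OrdConnected.convex ⟨fun _ _ _ hy _ hz => F.DD_down hz.2 hy⟩

lemma toReal_lt_of (a : ℝ≥0∞) (ha : a ≠ ∞) {ψ : ℝ} : (ψ : EReal) < (a : EReal) ↔ ψ < a.toReal := by
  lift a to ℝ≥0 using ha
  simp only [ENNReal.coe_toReal]
  exact EReal.coe_lt_coe_iff

lemma near_zero (F : EntropyFn) {ψ : ℝ} (hψ : ψ ∈ F.DD) :
    ∃ δ > 0, ∀ s, 0 ≤ s → s < δ → (ψ : EReal) < ((F.F s : ℝ≥0∞) : EReal) := by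
  rcases lt_or_ge ψ 0 with h | h
  · refine ⟨1, one_pos, fun s _ _ => ?_⟩
    have h1 : (ψ : EReal) < 0 := by exact_mod_cast h
    exact lt_of_lt_of_le h1 (EReal.coe_ennreal_nonneg _)
  · have key : ∀ a : ℝ≥0∞, (ψ : EReal) < (a : EReal) ↔ ENNReal.ofReal ψ < a := by
      intro a
      rw [← EReal.coe_ennreal_lt_coe_ennreal_iff, EReal.coe_ennreal_ofReal, max_eq_left h]
    have h0 : ENNReal.ofReal ψ < F.F 0 := (key _).1 hψ
    have := F.lsc 0 (by simp) _ h0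
    rw [eventually_nhdsWithin_iff, Metric.eventually_nhds_iff] at this
    obtain ⟨δ, hδ, H⟩ := this
    refine ⟨δ, hδ, fun s hs hs' => (key _).2 (H ?_ hs)⟩
    simpa [Real.dist_eq, abs_of_nonneg hs] using hs'

lemma rset_bdd (F : EntropyFn) {ψ : ℝ} (hψ : ψ ∈ F.DD) : BddAbove (F.rset ψ) := by
  obtain ⟨δ, hδ, H⟩ := F.near_zero hψ
  refine ⟨|ψ| / δ, ?_⟩
  rintro v ⟨s, hs, hF, rfl⟩
  rcases lt_or_ge s δ with h | h
  · have := (toReal_lt_of _ hF).1 (H s hs.le h)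
    have h1 : (ψ - (F.F s).toReal) / s ≤ 0 := div_nonpos_of_nonpos_of_nonneg (by linarith) hs.le
    exact h1.trans (by positivity)
  · have : 0 ≤ (F.F s).toReal := ENNReal.toReal_nonneg
    apply div_le_div₀ (abs_nonneg _) _ hδ h
    linarith [le_abs_self ψ]

lemma fenchel (F : EntropyFn) {ψ : ℝ} (hψ : ψ ∈ F.DD) {f : ℝ} (hf : 0 ≤ f) (hF : F.F f ≠ ∞) :
    ψ - f * F.rr ψ ≤ (F.F f).toReal := by
  rcases hf.eq_or_lt with rfl | hf
  · have := (toReal_lt_of _ hF).1 hψ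
    linarith
  · have : (ψ - (F.F f).toReal) / f ≤ F.rr ψ := le_csSup (F.rset_bdd hψ) ⟨f, hf, hF, rfl⟩
    rw [div_le_iff₀ hf] at this
    linarith

lemma fenchelE (F : EntropyFn) {ψ : ℝ} (hψ : ψ ∈ F.DD) {f : ℝ} (hf : 0 ≤ f) :
    ENNReal.ofReal (ψ - f * F.rr ψ) ≤ F.F f := by
  by_cases hF : F.F f = ∞
  · simp [hF]
  · exact ENNReal.ofReal_le_of_le_toReal (F.fenchel hψ hf hF)

lemma rr_convex (F : EntropyFn) : ConvexOn ℝ F.DD F.rr := by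
  refine ⟨F.DD_convex, ?_⟩
  intro a ha b hb t u ht hu htu
  apply csSup_le (F.rset_nonempty _)
  rintro v ⟨s, hs, hF, rfl⟩
  have h1 := le_csSup (F.rset_bdd ha) ⟨s, hs, hF, rfl⟩
  have h2 := le_csSup (F.rset_bdd hb) ⟨s, hs, hF, rfl⟩
  calc _ = t * ((a - (F.F s).toReal) / s) + u * ((b - (F.F s).toReal) / s) := by
        have : u = 1 - t := by linarith
        subst this
        simp only [smul_eq_mul]; field_simp; ring
    _ ≤ _ := add_le_add (mul_le_mul_of_nonneg_left h1 ht) (mul_le_mul_of_nonneg_left h2 hu)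

lemma rr_cont (F : EntropyFn) : ContinuousOn F.rr F.DD :=
  F.rr_convex.continuousOn F.DD_open

lemma rr_mono (F : EntropyFn) {a b : ℝ} (hab : a ≤ b) (hb : b ∈ F.DD) : F.rr a ≤ F.rr b := by
  apply csSup_le (F.rset_nonempty _)
  rintro v ⟨s, hs, hF, rfl⟩
  refine le_trans ?_ (le_csSup (F.rset_bdd hb) ⟨s, hs, hF, rfl⟩)
  gcongr

lemma superlin (F : EntropyFn) (hF : F.Superlinear) (M : ℝ) (hM : 0 ≤ M) :
    ∃ c : ℝ, ∀ s, 0 ≤ s → F.F s ≠ ∞ → M * s - c ≤ (F.F s).toReal := by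
  obtain ⟨f, hf, hFf⟩ := F.dom
  have h1 : ∃ᶠ s : ℝ in atTop,
      ENNReal.ofReal (M + (F.F f).toReal) < F.F s / ENNReal.ofReal s := by
    apply frequently_lt_of_lt_limsup
    · isBoundedDefault
    · change _ < F.recC
      rw [show F.recC = ∞ from hF]; exact ENNReal.ofReal_lt_top
  obtain ⟨s₀, h2, h3⟩ := (h1.and_eventually (eventually_gt_atTop (max f 1))).exists
  have hs0f : f < s₀ := (le_max_left _ _).trans_lt h3
  have hs01 : 1 < s₀ := (le_max_right _ _).trans_lt h3
  have hnn : 0 ≤ (F.F f).toReal := ENNReal.toReal_nonneg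
  -- F s₀ > F f + M (s₀ - f)
  have h4 : F.F s₀ ≠ ∞ → (F.F f).toReal + M * (s₀ - f) < (F.F s₀).toReal := by
    intro hne
    rw [ENNReal.lt_div_iff_mul_lt (by simp) (by simp),
      ← ENNReal.ofReal_mul (by positivity), ENNReal.ofReal_lt_iff_lt_toReal (by positivity) hne] at h2
    nlinarith
  refine ⟨M * s₀, fun s hs hFs => ?_⟩
  rcases le_or_gt s s₀ with h | h
  · have : 0 ≤ (F.F s).toReal := ENNReal.toReal_nonneg
    nlinarith
  · have hpos : 0 < s - f := by linarith
    set t := (s - s₀) / (s - f) with ht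
    have ht0 : 0 ≤ t := div_nonneg (by linarith) hpos.le
    have ht1 : t ≤ 1 := (div_le_one hpos).2 (by linarith)
    have hconv := F.convex' f hf.le s hs t ht0 ht1
    have hts : t * (s - f) = s - s₀ := by rw [ht]; field_simp
    have e1 : t * f + (1 - t) * s = s₀ := by nlinarith
    rw [e1] at hconv
    have hfin : ENNReal.ofReal t * F.F f + ENNReal.ofReal (1 - t) * F.F s ≠ ∞ :=
      ENNReal.add_ne_top.2 ⟨ENNReal.mul_ne_top (by simp) hFf, ENNReal.mul_ne_top (by simp) hFs⟩
    have h5 := h4 (ne_top_of_le_ne_top hfin hconv)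
    have h6 := ENNReal.toReal_mono hfin hconv
    rw [ENNReal.toReal_add (ENNReal.mul_ne_top (by simp) hFf) (ENNReal.mul_ne_top (by simp) hFs),
      ENNReal.toReal_mul, ENNReal.toReal_mul, ENNReal.toReal_ofReal ht0,
      ENNReal.toReal_ofReal (by linarith)] at h6
    by_contra hcon
    push Not at hcon
    have h7 : (1 - t) * (F.F s).toReal ≤ (1 - t) * (M * s - M * s₀) :=
      mul_le_mul_of_nonneg_left hcon.le (by linarith)
    have h9 : (1 - t) * (s - f) = s₀ - f := by nlinarith
    have h10 : M * ((1 - t) * (s - f)) = M * (s₀ - f) := by rw [h9]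
    have h11 : 0 ≤ (1 - t) * (M * (s₀ - f)) := mul_nonneg (by linarith) (mul_nonneg hM (by linarith))
    nlinarith

lemma rr_neg (F : EntropyFn) (hF : F.Superlinear) (M : ℝ) :
    ∃ k : ℝ, k < 0 ∧ ∀ ψ ≤ k, F.rr ψ ≤ -M := by
  obtain ⟨c, hc⟩ := F.superlin hF (max M 0) (le_max_right _ _)
  refine ⟨min (-c) (-1), by simp, fun ψ hψ => ?_⟩
  apply csSup_le (F.rset_nonempty _)
  rintro v ⟨s, hs, hFs, rfl⟩
  have h1 := hc s hs.le hFs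
  have h2 : ψ ≤ -c := hψ.trans (min_le_left _ _)
  rw [div_le_iff₀ hs]
  have : M * s ≤ max M 0 * s := by gcongr; exact le_max_left _ _
  linarith

lemma revConj_eq (F : EntropyFn) (hF : F.Superlinear) {ψ : ℝ} (hψ : ψ ∈ F.DD) :
    F.revConj ψ = (F.rr ψ : EReal) := by
  have key : ∀ s : ℝ, 0 < s → F.F (1/s) ≠ ∞ →
      ((s * ψ : ℝ) : EReal) - ((F.revF s : ℝ≥0∞) : EReal)
        = (((ψ - (F.F (1/s)).toReal) / (1/s) : ℝ) : EReal) := by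
    intro s hs hne
    unfold revF
    rw [if_pos hs]
    lift F.F (1/s) to ℝ≥0 using hne with a ha
    rw [ENNReal.ofReal, ← ENNReal.coe_mul]
    have : ((((s.toNNReal * a : ℝ≥0) : ℝ≥0∞)) : EReal) = ((s * a : ℝ) : EReal) := by
      change (((s.toNNReal * a : ℝ≥0) : ℝ) : EReal) = _; rw [NNReal.coe_mul, Real.coe_toNNReal _ hs.le]
    rw [this, ← EReal.coe_sub]
    congr 1
    simp
    field_simp
  apply le_antisymm
  · apply iSup_le
    rintro ⟨s, hs⟩
    rcases (show (0:ℝ) ≤ s from hs).eq_or_lt with h | h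
    · have : F.revF s = ∞ := by simp [revF, ← h, show F.recC = ∞ from hF]
      simp [this]
    · by_cases hne : F.F (1/s) = ∞
      · have : F.revF s = ∞ := by
          simp only [revF, if_pos h, hne]
          exact ENNReal.mul_top (by simpa using h)
        simp [this]
      · simp only []
        rw [key s h hne, EReal.coe_le_coe_iff]
        exact le_csSup (F.rset_bdd hψ) ⟨1/s, by positivity, hne, rfl⟩
  · rw [← EReal.ge_of_forall_gt_iff_ge]
    intro z hz
    have hz' : z < F.rr ψ := by exact_mod_cast hz
    obtain ⟨v, ⟨s, hs, hne, rfl⟩, hv⟩ := exists_lt_of_lt_csSup (F.rset_nonempty ψ) hz'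
    refine le_trans ?_ (le_iSup _ (⟨1/s, by simp; positivity⟩ : Ici (0:ℝ)))
    have := key (1/s) (by positivity) (by simpa using hne)
    simp only [] 
    rw [this]
    rw [EReal.coe_le_coe_iff]
    simpa using hv.le

end EntropyFn

namespace EntropyFn

lemma lt_key {c : ℝ} {a : ℝ≥0∞} (h : (c : EReal) < (a : EReal)) (hc : 0 ≤ c) :
    ENNReal.ofReal c < a := by
  rwa [← EReal.coe_ennreal_lt_coe_ennreal_iff, EReal.coe_ennreal_ofReal, max_eq_left hc]

def epi (F : EntropyFn) : Set (ℝ × ℝ) := {q | 0 ≤ q.1 ∧ 0 ≤ q.2 ∧ F.F q.1 ≤ ENNReal.ofReal q.2}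

lemma epi_closed (F : EntropyFn) : IsClosed F.epi := by
  rw [← isOpen_compl_iff, isOpen_iff_eventually]
  rintro ⟨s, v⟩ h
  by_cases hs : 0 ≤ s
  · by_cases hv : 0 ≤ v
    · have h2 : ENNReal.ofReal v < F.F s := by
        by_contra hh
        exact h ⟨hs, hv, not_lt.1 hh⟩
      obtain ⟨m, hm1, hm2⟩ := exists_between h2
      have h3 := F.lsc s hs m hm2
      rw [eventually_nhdsWithin_iff] at h3
      have h4 : ∀ᶠ w in 𝓝 v, ENNReal.ofReal w < m :=
        (ENNReal.continuous_ofReal.tendsto v).eventually_lt_const hm1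
      rw [nhds_prod_eq]
      filter_upwards [h3.prod_mk h4] with q hq
      rintro ⟨a, b, c⟩
      exact absurd (hq.1 a) (not_lt.2 (c.trans hq.2.le))
    · have : ∀ᶠ q : ℝ × ℝ in 𝓝 (s, v), q.2 < 0 :=
        (continuous_snd.tendsto (s, v)).eventually_lt_const (not_le.1 hv)
      filter_upwards [this] with q hq
      rintro ⟨a, b, c⟩; linarith
  · have : ∀ᶠ q : ℝ × ℝ in 𝓝 (s, v), q.1 < 0 :=
        (continuous_fst.tendsto (s, v)).eventually_lt_const (not_le.1 hs)
    filter_upwards [this] with q hq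
    rintro ⟨a, b, c⟩; linarith

lemma epi_convex (F : EntropyFn) : Convex ℝ F.epi := by
  rintro ⟨s, v⟩ ⟨h1, h2, h3⟩ ⟨s', v'⟩ ⟨h1', h2', h3'⟩ a b ha hb hab
  simp only at *
  have hb' : b = 1 - a := by linarith
  subst hb'
  refine ⟨by simp; positivity, by simp; positivity, ?_⟩
  simp only [Prod.smul_mk, smul_eq_mul, Prod.mk_add_mk]
  refine (F.convex' s h1 s' h1' a ha (by linarith)).trans ?_
  rw [ENNReal.ofReal_add (by positivity) (by positivity), ENNReal.ofReal_mul ha, ENNReal.ofReal_mul hb]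
  gcongr

lemma minorant (F : EntropyFn) {f c : ℝ} (hf : 0 ≤ f) (hc : (c : EReal) < ((F.F f : ℝ≥0∞) : EReal)) :
    ∃ a b : ℝ, c < a + b * f ∧ ∀ s, 0 ≤ s → F.F s ≠ ∞ → a + b * s ≤ (F.F s).toReal := by
  have hnot : ((f, c) : ℝ × ℝ) ∉ F.epi := by
    rintro ⟨h1, h2, h3⟩
    exact absurd (lt_key hc h2) (not_lt.2 h3)
  obtain ⟨g, u, hg1, hg2⟩ := geometric_hahn_banach_point_closed F.epi_convex F.epi_closed hnot
  set α := g (1, 0)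
  set β := g (0, 1)
  have hg : ∀ s v, g (s, v) = α * s + β * v := by
    intro s v
    have : ((s, v) : ℝ × ℝ) = s • ((1, 0) : ℝ × ℝ) + v • ((0, 1) : ℝ × ℝ) := by simp
    rw [this, map_add, map_smul, map_smul]; simp [α, β]; ring
  rw [hg] at hg1
  have hmem : ∀ s v, 0 ≤ s → F.F s ≠ ∞ → (F.F s).toReal ≤ v → u < α * s + β * v := by
    intro s v hs hne hv
    rw [← hg]
    refine hg2 _ ⟨hs, ENNReal.toReal_nonneg.trans hv, ?_⟩
    exact (ENNReal.le_ofReal_iff_toReal_le hne (ENNReal.toReal_nonneg.trans hv)).2 hv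
  obtain ⟨s₀, hs₀, hF₀⟩ := F.dom
  have hβ : 0 ≤ β := by
    by_contra hb
    push Not at hb
    have := hmem s₀ (max (F.F s₀).toReal ((u - α * s₀) / β)) hs₀.le hF₀ (le_max_left _ _)
    have h2 : β * max (F.F s₀).toReal ((u - α * s₀) / β) ≤ β * ((u - α * s₀) / β) :=
      mul_le_mul_of_nonpos_left (le_max_right _ _) hb.le
    rw [mul_div_cancel₀ _ hb.ne] at h2
    linarith
  rcases hβ.eq_or_lt with hb | hb
  · rw [← hb] at hg1 hmem
    have hd : 0 < u - α * f := by linarith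
    set n := (|c| + 1) / (u - α * f) with hn
    have hn0 : 0 < n := by positivity
    refine ⟨n * u, -(n * α), ?_, fun s hs hne => ?_⟩
    · have : n * (u - α * f) = |c| + 1 := by rw [hn]; field_simp
      nlinarith [le_abs_self c]
    · have := hmem s _ hs hne le_rfl
      have h3 : 0 ≤ (F.F s).toReal := ENNReal.toReal_nonneg
      nlinarith
  · refine ⟨u / β, -α / β, ?_, fun s hs hne => ?_⟩
    · rw [show u / β + -α / β * f = (u - α * f) / β by ring, lt_div_iff₀ hb]; linarith
    · have := hmem s _ hs hne le_rfl
      rw [show u / β + -α / β * s = (u - α * s) / β by ring, div_le_iff₀ hb]; linarith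

lemma fenchel_dual (F : EntropyFn) {f c : ℝ} (hf : 0 ≤ f)
    (hc : (c : EReal) < ((F.F f : ℝ≥0∞) : EReal)) : ∃ ψ ∈ F.DD, c < ψ - f * F.rr ψ := by
  obtain ⟨a, b, h1, h2⟩ := F.minorant hf hc
  set ε := (a + b * f - c) / 2 with hε
  have hε0 : 0 < ε := by rw [hε]; linarith
  have hD : a - ε ∈ F.DD := by
    change ((a - ε : ℝ) : EReal) < _
    by_cases h0 : F.F 0 = ∞
    · rw [h0]; exact EReal.coe_lt_top _
    · rw [toReal_lt_of _ h0]
      have := h2 0 le_rfl h0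
      linarith
  refine ⟨a - ε, hD, ?_⟩
  have h3 : F.rr (a - ε) ≤ -b := by
    apply csSup_le (F.rset_nonempty _)
    rintro v ⟨s, hs, hne, rfl⟩
    rw [div_le_iff₀ hs]
    have := h2 s hs.le hne
    linarith
  have := mul_le_mul_of_nonneg_left h3 hf
  linarith

/-- countable dense version -/
lemma fenchel_dual_rat (F : EntropyFn) {f c : ℝ} (hf : 0 ≤ f)
    (hc : (c : EReal) < ((F.F f : ℝ≥0∞) : EReal)) :
    ∃ ψ : ℚ, (ψ : ℝ) ∈ F.DD ∧ c < ψ - f * F.rr ψ := by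
  obtain ⟨ψ, hψ, h⟩ := F.fenchel_dual hf hc
  have h1 : ContinuousAt (fun ψ => ψ - f * F.rr ψ) ψ :=
    continuousAt_id.sub (continuousAt_const.mul (F.rr_cont.continuousAt (F.DD_open.mem_nhds hψ)))
  have h2 : ∀ᶠ x in 𝓝 ψ, c < x - f * F.rr x ∧ x ∈ F.DD :=
    (h1.eventually_const_lt h).and (F.DD_open.mem_nhds hψ)
  obtain ⟨q, hq⟩ := Rat.isDenseEmbedding_coe_real.dense.exists_mem_open isOpen_interior
    ⟨ψ, mem_interior_iff_mem_nhds.2 h2⟩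
  exact ⟨q, (interior_subset hq).2, (interior_subset hq).1⟩

end EntropyFn

namespace EntropyFn

def Phi (F : EntropyFn) (X : Type*) [TopologicalSpace X] : Set (X →ᵇ ℝ) :=
  {φ | ∃ b ∈ F.DD, ∀ x, φ x ≤ b}

section
variable {X : Type*} [TopologicalSpace X]

lemma Phi_mem {F : EntropyFn} {φ : X →ᵇ ℝ} (h : φ ∈ F.Phi X) (x : X) : φ x ∈ F.DD := by
  obtain ⟨b, hb, h⟩ := h
  exact F.DD_down (h x) hb

lemma rr_abs (F : EntropyFn) {A b ψ : ℝ} (hb : b ∈ F.DD) (h1 : A ≤ ψ) (h2 : ψ ≤ b) :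
    ‖F.rr ψ‖ ≤ |F.rr A| + |F.rr b| := by
  have h3 := F.rr_mono h1 (F.DD_down h2 hb)
  have h4 := F.rr_mono h2 hb
  rw [Real.norm_eq_abs, abs_le]
  constructor
  · linarith [neg_abs_le (F.rr A), abs_nonneg (F.rr b)]
  · linarith [le_abs_self (F.rr b), abs_nonneg (F.rr A)]

lemma rr_comp_cont {F : EntropyFn} {φ : X →ᵇ ℝ} (h : φ ∈ F.Phi X) :
    Continuous (fun x => F.rr (φ x)) :=
  F.rr_cont.comp_continuous φ.continuous (Phi_mem h)

lemma rr_comp_bdd {F : EntropyFn} {φ : X →ᵇ ℝ} (h : φ ∈ F.Phi X) :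
    ∃ C : ℝ, ∀ x, ‖F.rr (φ x)‖ ≤ C := by
  obtain ⟨b, hb, h⟩ := h
  exact ⟨_, fun x => F.rr_abs hb (neg_le_of_abs_le (φ.norm_coe_le_norm x)) (h x)⟩

/-- `rr ∘ φ` as bounded continuous function -/
def rbc (F : EntropyFn) (φ : X →ᵇ ℝ) : X →ᵇ ℝ :=
  open Classical in
  if h : φ ∈ F.Phi X then
    BoundedContinuousFunction.ofNormedAddCommGroup (fun x => F.rr (φ x)) (rr_comp_cont h) _
      (rr_comp_bdd h).choose_spec
  else 0

lemma rbc_apply {F : EntropyFn} {φ : X →ᵇ ℝ} (h : φ ∈ F.Phi X) (x : X) :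
    F.rbc φ x = F.rr (φ x) := by
  simp [rbc, h]

end

section
variable {X : Type*} [TopologicalSpace X] [MeasurableSpace X] [OpensMeasurableSpace X]

lemma integral_le_toReal_lintegral {X : Type*} [MeasurableSpace X] {μ : Measure X} {g : X → ℝ}
    (hg : Integrable g μ) {G : X → ℝ≥0∞} (h : ∀ᵐ x ∂μ, ENNReal.ofReal (g x) ≤ G x)
    (hG : ∫⁻ x, G x ∂μ ≠ ∞) : ∫ x, g x ∂μ ≤ (∫⁻ x, G x ∂μ).toReal := by
  rw [integral_eq_lintegral_pos_part_sub_lintegral_neg_part hg]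
  have := ENNReal.toReal_mono hG (lintegral_mono_ae h)
  have h2 : 0 ≤ (∫⁻ (a : X), ENNReal.ofReal (-g a) ∂μ).toReal := ENNReal.toReal_nonneg
  linarith

lemma entropy_weak (F : EntropyFn) (hF : F.Superlinear) {φ : X →ᵇ ℝ} (h : φ ∈ F.Phi X)
    (γ μ : Measure X) [IsFiniteMeasure γ] [IsFiniteMeasure μ] :
    ((∫ x, φ x ∂μ - ∫ x, F.rbc φ x ∂γ : ℝ) : EReal) ≤ ((entF F γ μ : ℝ≥0∞) : EReal) := by
  by_cases htop : entF F γ μ = ∞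
  · rw [htop]; exact le_top
  have hs : γ.singularPart μ = 0 := by
    by_contra hne
    apply htop
    rw [entF, show F.recC = ∞ from hF, ENNReal.top_mul (by simpa using hne)]
    simp
  have hac := (Measure.singularPart_eq_zero _ _).1 hs
  have he : entF F γ μ = ∫⁻ x, F.F ((γ.rnDeriv μ x).toReal) ∂μ := by simp [entF, hs]
  rw [he] at htop ⊢
  rw [← integral_rnDeriv_smul hac, ← integral_sub (φ.integrable μ)]
  · have h1 : ∀ᵐ x ∂μ, ENNReal.ofReal (φ x - (γ.rnDeriv μ x).toReal • F.rbc φ x)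
        ≤ F.F ((γ.rnDeriv μ x).toReal) := by
      refine Eventually.of_forall fun x => ?_
      rw [rbc_apply h]
      exact F.fenchelE (Phi_mem h x) ENNReal.toReal_nonneg
    have h2 := integral_le_toReal_lintegral ((φ.integrable μ).sub ?_) h1 htop
    · rw [← EReal.coe_toReal (x := ((∫⁻ x, F.F ((γ.rnDeriv μ x).toReal) ∂μ : ℝ≥0∞) : EReal))
        (by simpa using htop) (by simp), EReal.coe_le_coe_iff]
      simpa using h2
    · exact (integrable_rnDeriv_smul_iff hac).2 ((F.rbc φ).integrable γ)
  · exact (integrable_rnDeriv_smul_iff hac).2 ((F.rbc φ).integrable γ)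

end
end EntropyFn

namespace EntropyFn

section
variable {X : Type*} [MeasurableSpace X]

lemma rr_nonpos (F : EntropyFn) {ψ : ℝ} (h : ψ ≤ 0) : F.rr ψ ≤ 0 := by
  apply csSup_le (F.rset_nonempty _)
  rintro v ⟨s, hs, hne, rfl⟩
  have h3 : 0 ≤ (F.F s).toReal := ENNReal.toReal_nonneg
  exact div_nonpos_of_nonpos_of_nonneg (by linarith) hs.le

/-- argmax index -/
def argJ (g : ℕ → X → ℝ) : ℕ → X → ℕ
  | 0, _ => 0
  | n + 1, x => open Classical in if g (argJ g n x) x < g (n+1) x then n + 1 else argJ g n x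

lemma argJ_le (g : ℕ → X → ℝ) (n : ℕ) (x : X) : argJ g n x ≤ n := by
  induction n with
  | zero => simp [argJ]
  | succ n ih => rw [argJ]; split_ifs <;> omega

lemma argJ_mono (g : ℕ → X → ℝ) (n : ℕ) (x : X) :
    g (argJ g n x) x ≤ g (argJ g (n+1) x) x := by
  rw [argJ]; split_ifs with h
  · exact h.le
  · exact le_rfl

lemma argJ_ge (g : ℕ → X → ℝ) (n : ℕ) (x : X) : g n x ≤ g (argJ g n x) x := by
  cases n with
  | zero => simp [argJ]
  | succ n =>
    rw [argJ]; split_ifs with h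
    · exact le_rfl
    · exact not_lt.1 h

lemma measurable_gJ {g : ℕ → X → ℝ} (hg : ∀ n, Measurable (g n)) {J : X → ℕ} (hJ : Measurable J) :
    Measurable (fun x => g (J x) x) := by
  have : Measurable (fun q : ℕ × X => g q.1 q.2) := measurable_from_prod_countable_right hg
  exact this.comp (hJ.prodMk measurable_id)

lemma argJ_meas {g : ℕ → X → ℝ} (hg : ∀ n, Measurable (g n)) (n : ℕ) : Measurable (argJ g n) := by
  induction n with
  | zero => exact measurable_const
  | succ n ih =>
    have : argJ g (n+1) = fun x => open Classical in if g (argJ g n x) x < g (n+1) x then n + 1 else argJ g n x := by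
      ext x; rw [argJ]
    rw [this]
    exact Measurable.ite (measurableSet_lt (measurable_gJ hg ih) (hg _)) measurable_const ih

lemma borel_dual1 (F : EntropyFn) (μ : Measure X) [IsFiniteMeasure μ] {f : X → ℝ}
    (hfm : Measurable f) (hf0 : ∀ x, 0 ≤ f x) (hfi : Integrable f μ) {a : ℝ}
    (ha : (a : EReal) < ((∫⁻ x, F.F (f x) ∂μ : ℝ≥0∞) : EReal)) :
    ∃ (ψ : ℕ → ℝ) (J : X → ℕ) (n : ℕ), Measurable J ∧ (∀ x, J x ≤ n) ∧ (∀ j, ψ j ∈ F.DD) ∧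
      a < ∫ x, (ψ (J x) - f x * F.rr (ψ (J x))) ∂μ := by
  obtain ⟨a', h1, h2⟩ := EReal.lt_iff_exists_real_btwn.1 ha
  have h1 : a < a' := by exact_mod_cast h1
  set δ := (a' - a) / (μ.real univ + 1) with hδ
  have hm : 0 ≤ μ.real univ := measureReal_nonneg
  have hδ0 : 0 < δ := div_pos (by linarith) (by linarith)
  have hδa : δ * μ.real univ ≤ a' - a := by
    have : δ * (μ.real univ + 1) = a' - a := by rw [hδ]; field_simp
    linarith
  set S : Set ℝ := F.DD ∩ range ((↑) : ℚ → ℝ)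
  have hSc : S.Countable := (countable_range _).mono inter_subset_right
  have hSn : S.Nonempty := ⟨-1, F.DD_of_neg (by norm_num), -1, by simp⟩
  obtain ⟨e, he⟩ := hSc.exists_eq_range hSn
  let ψ : ℕ → ℝ := fun n => Nat.casesOn n (-δ) e
  have hψ : ∀ j, ψ j ∈ F.DD := by
    intro j
    cases j with
    | zero => exact F.DD_of_neg (by simpa [ψ] using hδ0)
    | succ j => exact (he.symm ▸ mem_range_self j : e j ∈ S).1
  let g : ℕ → X → ℝ := fun j x => ψ j - f x * F.rr (ψ j)
  have hg : ∀ j, Measurable (g j) := fun j => measurable_const.sub (hfm.mul_const _)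
  have hG0 : ∀ n x, -δ ≤ g (argJ g n x) x := by
    intro n x
    have h0 : -δ ≤ g 0 x := by
      have : F.rr (-δ) ≤ 0 := F.rr_nonpos (by linarith)
      have : f x * F.rr (-δ) ≤ 0 := mul_nonpos_of_nonneg_of_nonpos (hf0 x) this
      change -δ ≤ -δ - f x * F.rr (-δ)
      linarith
    induction n with
    | zero => exact h0.trans (argJ_ge g 0 x)
    | succ n ih => exact ih.trans (argJ_mono g n x)
  have hint : ∀ n, Integrable (fun x => g (argJ g n x) x) μ := by
    intro n
    have hsum1 : Integrable (fun x => ∑ j ∈ Finset.range (n+1), |g j x|) μ := by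
      apply integrable_finsetSum
      intro j _
      exact ((integrable_const _).sub (hfi.mul_const _)).abs
    refine hsum1.mono' (measurable_gJ hg (argJ_meas hg n)).aestronglyMeasurable ?_
    refine Eventually.of_forall fun x => ?_
    rw [Real.norm_eq_abs]
    exact Finset.single_le_sum (f := fun j => |g j x|) (fun j _ => abs_nonneg _)
      (Finset.mem_range.2 (Nat.lt_succ_of_le (argJ_le g n x)))
  have hsup : ∀ x, F.F (f x) ≤ ⨆ n, ENNReal.ofReal (g (argJ g n x) x + δ) := by
    intro x
    refine le_of_forall_lt fun c hc => ?_
    obtain ⟨d, hd1, hd2⟩ := ENNReal.lt_iff_exists_nnreal_btwn.1 hc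
    have hd3 : (((d : ℝ≥0) : ℝ) : EReal) < ((F.F (f x) : ℝ≥0∞) : EReal) := by
      have := EReal.coe_ennreal_lt_coe_ennreal_iff.2 hd2
      simpa [EReal.coe_nnreal_eq_coe_real] using this
    obtain ⟨q, hq1, hq2⟩ := F.fenchel_dual_rat (hf0 x) hd3
    have : (q : ℝ) ∈ range e := he ▸ (⟨hq1, mem_range_self q⟩ : (q : ℝ) ∈ S)
    obtain ⟨j, hj⟩ := this
    have h5 : (d : ℝ) < g (argJ g (j+1) x) x := by
      refine lt_of_lt_of_le ?_ (argJ_ge g (j+1) x)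
      change (d : ℝ) < e j - f x * F.rr (e j)
      rw [hj]; exact hq2
    refine lt_of_lt_of_le (hd1.trans ?_) (le_iSup _ (j+1))
    rw [← ENNReal.ofReal_coe_nnreal]
    exact (ENNReal.ofReal_lt_ofReal_iff (by linarith [d.2])).2 (by linarith)
  have hsupI : ∫⁻ x, F.F (f x) ∂μ ≤ ⨆ n, ∫⁻ x, ENNReal.ofReal (g (argJ g n x) x + δ) ∂μ := by
    rw [← lintegral_iSup]
    · exact lintegral_mono hsup
    · intro n
      exact ((measurable_gJ hg (argJ_meas hg n)).add_const _).ennreal_ofReal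
    · refine monotone_nat_of_le_succ fun n x => ?_
      exact ENNReal.ofReal_le_ofReal (by linarith [argJ_mono g n x])
  have hex : ∃ n, a' < ∫ x, (g (argJ g n x) x + δ) ∂μ := by
    rcases lt_or_ge a' 0 with h | h
    · exact ⟨0, h.trans_le (integral_nonneg fun x => by simpa using (by linarith [hG0 0 x] : 0 ≤ g (argJ g 0 x) x + δ))⟩
    · obtain ⟨n, hn⟩ := lt_iSup_iff.1 ((lt_key h2 h).trans_le hsupI)
      rw [← ofReal_integral_eq_lintegral_ofReal (f := fun x => g (argJ g n x) x + δ) ((hint n).add (integrable_const _))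
        (Eventually.of_forall fun x => by simpa using (by linarith [hG0 n x] : 0 ≤ g (argJ g n x) x + δ))] at hn
      exact ⟨n, (ENNReal.ofReal_lt_ofReal_iff_of_nonneg h).1 hn⟩
  obtain ⟨n, hn⟩ := hex
  refine ⟨ψ, argJ g n, n, argJ_meas hg n, argJ_le g n, hψ, ?_⟩
  rw [integral_add (hint n) (integrable_const _), integral_const, smul_eq_mul] at hn
  change a < ∫ x, g (argJ g n x) x ∂μ
  nlinarith

/-- bounded Borel version of entropy duality -/
lemma borel_dual (F : EntropyFn) (hF : F.Superlinear) (γ μ : Measure X) [IsFiniteMeasure γ]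
    [IsFiniteMeasure μ] {a : ℝ} (ha : (a : EReal) < ((entF F γ μ : ℝ≥0∞) : EReal)) :
    ∃ (φ : X → ℝ) (A b : ℝ), Measurable φ ∧ (∀ x, A ≤ φ x ∧ φ x ≤ b) ∧ b ∈ F.DD ∧
      a < ∫ x, φ x ∂μ - ∫ x, F.rr (φ x) ∂γ := by
  set f : X → ℝ := fun x => (γ.rnDeriv μ x).toReal with hf
  have hfm : Measurable f := (Measure.measurable_rnDeriv γ μ).ennreal_toReal
  have hf0 : ∀ x, 0 ≤ f x := fun x => ENNReal.toReal_nonneg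
  have hfi : Integrable f μ := Measure.integrable_toReal_rnDeriv
  set σ := γ.singularPart μ with hσ
  have hm0 : 0 ≤ σ.real univ := measureReal_nonneg
  have step : ∃ (ψ : ℕ → ℝ) (J : X → ℕ) (n : ℕ) (M : ℝ), Measurable J ∧ (∀ x, J x ≤ n) ∧
      (∀ j, ψ j ∈ F.DD) ∧
      a < ∫ x, (ψ (J x) - f x * F.rr (ψ (J x))) ∂μ + M * σ.real univ := by
    by_cases hz : σ = 0
    · have : entF F γ μ = ∫⁻ x, F.F (f x) ∂μ := by simp [entF, ← hσ, hz, hf]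
      rw [this] at ha
      obtain ⟨ψ, J, n, h1, h2, h3, h4⟩ := F.borel_dual1 μ hfm hf0 hfi ha
      exact ⟨ψ, J, n, 0, h1, h2, h3, by simpa using h4⟩
    · have hm : 0 < σ.real univ := by
        rw [measureReal_def, ENNReal.toReal_pos_iff]
        exact ⟨by simpa [pos_iff_ne_zero] using hz, measure_lt_top _ _⟩
      set I := ∫ x, ((-1) - f x * F.rr (-1)) ∂μ with hI
      refine ⟨fun _ => -1, fun _ => 0, 0, (a - I + 1) / σ.real univ, measurable_const, by simp,
        fun _ => F.DD_of_neg (by norm_num), ?_⟩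
      simp only []
      rw [← hI]
      have : (a - I + 1) / σ.real univ * σ.real univ = a - I + 1 := by field_simp
      rw [this]; linarith
  obtain ⟨ψ, J, n, M, hJm, hJn, hψ, hlt⟩ := step
  obtain ⟨k, hk0, hk⟩ := F.rr_neg hF M
  obtain ⟨N, hNm, hN1, hN2⟩ := Measure.mutuallySingular_singularPart γ μ
  -- σ N = 0, μ Nᶜ = 0
  classical
  let φ : X → ℝ := fun x => if x ∈ N then ψ (J x) else k
  have hne : (Finset.range (n+1)).Nonempty := ⟨0, by simp⟩
  let b := max ((Finset.range (n+1)).sup' hne ψ) k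
  let A := min ((Finset.range (n+1)).inf' hne ψ) k
  have hbD : b ∈ F.DD := by
    rcases max_choice ((Finset.range (n+1)).sup' hne ψ) k with h | h
    · obtain ⟨i, _, hi⟩ := Finset.exists_mem_eq_sup' hne ψ
      change max _ _ ∈ _
      rw [h, hi]; exact hψ i
    · change max _ _ ∈ _
      rw [h]; exact F.DD_of_neg hk0
  have hbound : ∀ x, A ≤ φ x ∧ φ x ≤ b := by
    intro x
    have hmem : J x ∈ Finset.range (n+1) := Finset.mem_range.2 (Nat.lt_succ_of_le (hJn x))
    by_cases hx : x ∈ N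
    · simp only [φ, hx, if_true]
      exact ⟨(min_le_left _ _).trans (Finset.inf'_le _ hmem), (Finset.le_sup' ψ hmem).trans (le_max_left _ _)⟩
    · simp only [φ, hx, if_false]
      exact ⟨min_le_right _ _, le_max_right _ _⟩
  have hψJ : Measurable (fun x => ψ (J x)) := (measurable_from_nat (f := ψ)).comp hJm
  have hrJ : Measurable (fun x => F.rr (ψ (J x))) := (measurable_from_nat (f := fun j => F.rr (ψ j))).comp hJm
  have hφm : Measurable φ := Measurable.ite hNm hψJ measurable_const
  have hrφm : Measurable (fun x => F.rr (φ x)) := by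
    have : (fun x => F.rr (φ x)) = fun x => if x ∈ N then F.rr (ψ (J x)) else F.rr k := by
      ext x; simp only [φ]; split_ifs <;> rfl
    rw [this]
    exact Measurable.ite hNm hrJ measurable_const
  refine ⟨φ, A, b, hφm, hbound, hbD, hlt.trans_le ?_⟩
  have hrb : ∀ x, ‖F.rr (φ x)‖ ≤ |F.rr A| + |F.rr b| := fun x =>
    F.rr_abs hbD (hbound x).1 (hbound x).2
  have hri : ∀ ν : Measure X, IsFiniteMeasure ν → Integrable (fun x => F.rr (φ x)) ν := by
    intro ν _
    exact Integrable.of_bound hrφm.aestronglyMeasurable _ (Eventually.of_forall hrb)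
  have hφi : Integrable φ μ := by
    refine Integrable.of_bound hφm.aestronglyMeasurable (|A| + |b|) (Eventually.of_forall fun x => ?_)
    rw [Real.norm_eq_abs, abs_le]
    obtain ⟨h1, h2⟩ := hbound x
    constructor
    · linarith [neg_abs_le A, abs_nonneg b]
    · linarith [le_abs_self b, abs_nonneg A]
  have hdec : γ = σ + μ.withDensity (γ.rnDeriv μ) := Measure.haveLebesgueDecomposition_add γ μ
  have hle : μ.withDensity (γ.rnDeriv μ) ≤ γ := Measure.withDensity_rnDeriv_le _ _
  have hfin : IsFiniteMeasure (μ.withDensity (γ.rnDeriv μ)) := isFiniteMeasure_of_le γ hle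
  have e1 : ∫ x, F.rr (φ x) ∂γ = ∫ x, F.rr (φ x) ∂σ + ∫ x, f x * F.rr (φ x) ∂μ := by
    conv_lhs => rw [hdec]
    rw [integral_add_measure (hri _ inferInstance) (hri _ hfin),
      integral_withDensity_eq_integral_toReal_smul (Measure.measurable_rnDeriv γ μ)
        (Measure.rnDeriv_lt_top γ μ)]
    rfl
  have hσN : ∀ᵐ x ∂σ, x ∉ N := by
    rw [ae_iff]; simpa using hN1
  have hμN : ∀ᵐ x ∂μ, x ∈ N := by
    rw [ae_iff]; exact hN2
  have e2 : ∫ x, F.rr (φ x) ∂σ = F.rr k * σ.real univ := by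
    have : ∫ x, F.rr (φ x) ∂σ = ∫ x, F.rr k ∂σ := by
      apply integral_congr_ae
      filter_upwards [hσN] with x hx
      simp [φ, hx]
    rw [this, integral_const, smul_eq_mul, mul_comm]
  have e3 : ∫ x, (ψ (J x) - f x * F.rr (ψ (J x))) ∂μ = ∫ x, φ x ∂μ - ∫ x, f x * F.rr (φ x) ∂μ := by
    rw [← integral_sub hφi]
    · apply integral_congr_ae
      filter_upwards [hμN] with x hx
      simp [φ, hx]
    · exact Integrable.mul_bdd (c := |F.rr A| + |F.rr b|) hfi hrφm.aestronglyMeasurable (Eventually.of_forall hrb)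
  rw [e1, e2, e3]
  have : F.rr k * σ.real univ ≤ -M * σ.real univ := mul_le_mul_of_nonneg_right (hk k le_rfl) hm0
  linarith

end

lemma entropy_strong {X : Type*} [MetricSpace X] [MeasurableSpace X] [BorelSpace X]
    (F : EntropyFn) (hF : F.Superlinear) (γ μ : Measure X) [IsFiniteMeasure γ]
    [IsFiniteMeasure μ] {a : ℝ} (ha : (a : EReal) < ((entF F γ μ : ℝ≥0∞) : EReal)) :
    ∃ φ ∈ F.Phi X, a < ∫ x, φ x ∂μ - ∫ x, F.rbc φ x ∂γ := by
  obtain ⟨φ, A, b, hφm, hb, hbD, hlt⟩ := F.borel_dual hF γ μ ha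
  have hL : MemLp φ 1 (μ + γ) := by
    refine MemLp.of_bound hφm.aestronglyMeasurable (|A| + |b|) (Eventually.of_forall fun x => ?_)
    rw [Real.norm_eq_abs, abs_le]
    obtain ⟨h1, h2⟩ := hb x
    constructor
    · linarith [neg_abs_le A, abs_nonneg b]
    · linarith [le_abs_self b, abs_nonneg A]
  have hex : ∀ n : ℕ, ∃ g : X →ᵇ ℝ, eLpNorm (φ - ⇑g) 1 (μ + γ) ≤ ENNReal.ofReal (1 / ((n:ℝ) + 1)) ∧ MemLp (⇑g) 1 (μ + γ) :=
    fun n => hL.exists_boundedContinuous_eLpNorm_sub_le (by simp) (by simp; positivity)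
  choose g hg1 hg2 using hex
  have htm : TendstoInMeasure (μ + γ) (fun n => ⇑(g n)) atTop φ := by
    refine tendstoInMeasure_of_tendsto_eLpNorm one_ne_zero (fun n => (hg2 n).1) hL.1 ?_
    have h0 : Tendsto (fun n : ℕ => ENNReal.ofReal (1 / ((n:ℝ) + 1))) atTop (𝓝 0) := by
      have := ENNReal.tendsto_ofReal (tendsto_one_div_add_atTop_nhds_zero_nat (𝕜 := ℝ))
      simpa using this
    refine tendsto_of_tendsto_of_tendsto_of_le_of_le tendsto_const_nhds h0 (fun _ => zero_le) fun n => ?_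
    simp only []
    rw [eLpNorm_sub_comm]
    exact hg1 n
  obtain ⟨ns, -, hns⟩ := htm.exists_seq_tendsto_ae
  let h : ℕ → X →ᵇ ℝ := fun n =>
    BoundedContinuousFunction.ofNormedAddCommGroup (fun x => max A (min b (g (ns n) x)))
      (by fun_prop) (|A| + |b|) (by
        intro x
        rw [Real.norm_eq_abs, abs_le]
        constructor
        · linarith [neg_abs_le A, abs_nonneg b, le_max_left A (min b (g (ns n) x))]
        · refine max_le ?_ ?_
          · linarith [le_abs_self A, abs_nonneg b]
          · exact (min_le_left _ _).trans (by linarith [le_abs_self b, abs_nonneg A]))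
  have hAb : Nonempty X → A ≤ b := fun ⟨x⟩ => (hb x).1.trans (hb x).2
  have hhb : ∀ n x, A ≤ h n x ∧ h n x ≤ b := fun n x =>
    ⟨le_max_left _ _, max_le (hAb ⟨x⟩) (min_le_left _ _)⟩
  have hΦ : ∀ n, h n ∈ F.Phi X := fun n => ⟨b, hbD, fun x => (hhb n x).2⟩
  have hlim : ∀ᵐ x ∂(μ + γ), Tendsto (fun n => h n x) atTop (𝓝 (φ x)) := by
    filter_upwards [hns] with x hx
    have hc : Continuous (fun t : ℝ => max A (min b t)) := by fun_prop
    have := (hc.tendsto (φ x)).comp hx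
    have e : max A (min b (φ x)) = φ x := by rw [min_eq_right (hb x).2, max_eq_right (hb x).1]
    rw [e] at this
    exact this
  rw [ae_add_measure_iff] at hlim
  have t1 : Tendsto (fun n => ∫ x, h n x ∂μ) atTop (𝓝 (∫ x, φ x ∂μ)) := by
    refine tendsto_integral_of_dominated_convergence (fun _ => |A| + |b|)
      (fun n => (h n).continuous.aestronglyMeasurable) (integrable_const _) (fun n => Eventually.of_forall fun x => ?_) hlim.1
    rw [Real.norm_eq_abs, abs_le]
    obtain ⟨h1, h2⟩ := hhb n x
    constructor
    · linarith [neg_abs_le A, abs_nonneg b]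
    · linarith [le_abs_self b, abs_nonneg A]
  have t2 : Tendsto (fun n => ∫ x, F.rbc (h n) x ∂γ) atTop (𝓝 (∫ x, F.rr (φ x) ∂γ)) := by
    refine tendsto_integral_of_dominated_convergence (fun _ => |F.rr A| + |F.rr b|)
      (fun n => (F.rbc (h n)).continuous.aestronglyMeasurable) (integrable_const _) (fun n => Eventually.of_forall fun x => ?_) ?_
    · rw [rbc_apply (hΦ n)]
      exact F.rr_abs hbD (hhb n x).1 (hhb n x).2
    · filter_upwards [hlim.2] with x hx
      have hc : ContinuousAt F.rr (φ x) :=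
        F.rr_cont.continuousAt (F.DD_open.mem_nhds (F.DD_down (hb x).2 hbD))
      have := hc.tendsto.comp hx
      refine this.congr fun n => ?_
      rw [rbc_apply (hΦ n)]; rfl
  obtain ⟨n, hn⟩ := ((t1.sub t2).eventually_const_lt hlt).exists
  exact ⟨h n, hΦ n, hn⟩

end EntropyFn

lemma posE_mono {a b : EReal} (h : a ≤ b) : posE a ≤ posE b := by
  unfold posE
  split_ifs with h1 h2 h2
  · exact le_rfl
  · subst h1; exact absurd (top_le_iff.1 h) h2
  · exact le_top
  · by_cases hb : a = ⊥
    · simp [hb]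
    · exact ENNReal.ofReal_le_ofReal (EReal.toReal_le_toReal h hb h2)

lemma posE_coe (a : ℝ) : posE (a : EReal) = ENNReal.ofReal a := by simp [posE]

lemma eIntegral_mono {α : Type*} [MeasurableSpace α] {μ : Measure α} {f g : α → EReal}
    (h : ∀ᵐ x ∂μ, f x ≤ g x) : eIntegral μ f ≤ eIntegral μ g := by
  unfold eIntegral
  refine EReal.sub_le_sub ?_ ?_
  · rw [EReal.coe_ennreal_le_coe_ennreal_iff]
    exact lintegral_mono_ae (h.mono fun x hx => posE_mono hx)
  · rw [EReal.coe_ennreal_le_coe_ennreal_iff]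
    exact lintegral_mono_ae (h.mono fun x hx => posE_mono (EReal.neg_le_neg_iff.2 hx))

lemma coe_toReal_E {a : ℝ≥0∞} (h : a ≠ ∞) : (a : EReal) = ((a.toReal : ℝ) : EReal) := by
  lift a to ℝ≥0 using h
  rfl

lemma eIntegral_real {α : Type*} [MeasurableSpace α] {μ : Measure α} {g : α → ℝ}
    (h : Integrable g μ) : eIntegral μ (fun x => (g x : EReal)) = ((∫ x, g x ∂μ : ℝ) : EReal) := by
  unfold eIntegral
  simp only [← EReal.coe_neg, posE_coe]
  rw [integral_eq_lintegral_pos_part_sub_lintegral_neg_part h, EReal.coe_sub,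
    coe_toReal_E h.lintegral_lt_top.ne]
  congr 1
  exact coe_toReal_E h.neg.lintegral_lt_top.ne

section
variable {X₁ : Type*} [MetricSpace X₁] [MeasurableSpace X₁] [BorelSpace X₁]
    {X₂ : Type*} [MetricSpace X₂] [MeasurableSpace X₂] [BorelSpace X₂]

lemma lamR_iff (C : X₁ → ProbabilityMeasure X₂ → EReal)
    (F₁ F₂ : EntropyFn) (hF₁ : F₁.Superlinear) (hF₂ : F₂.Superlinear) (φ : (X₁ →ᵇ ℝ) × (X₂ →ᵇ ℝ)) :
    φ ∈ lamRSet C F₁ F₂ ↔ φ.1 ∈ F₁.Phi X₁ ∧ φ.2 ∈ F₂.Phi X₂ ∧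
      ∀ x (p : ProbabilityMeasure X₂),
        ((F₁.rbc φ.1 x + ∫ y, F₂.rbc φ.2 y ∂(p : Measure X₂) : ℝ) : EReal) ≤ C x p := by
  have key : φ.1 ∈ F₁.Phi X₁ → φ.2 ∈ F₂.Phi X₂ → ∀ x (p : ProbabilityMeasure X₂),
      F₁.revConj (φ.1 x) + eIntegral (p : Measure X₂) (fun x₂ => F₂.revConj (φ.2 x₂)) =
      ((F₁.rbc φ.1 x + ∫ y, F₂.rbc φ.2 y ∂(p : Measure X₂) : ℝ) : EReal) := by
    intro h1 h2 x p
    rw [F₁.revConj_eq hF₁ (EntropyFn.Phi_mem h1 x), ← EntropyFn.rbc_apply h1, EReal.coe_add,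
      ← eIntegral_real ((F₂.rbc φ.2).integrable _)]
    congr 2
    ext y
    rw [F₂.revConj_eq hF₂ (EntropyFn.Phi_mem h2 y), ← EntropyFn.rbc_apply h2]
  constructor
  · rintro ⟨h1, h2, h3⟩
    exact ⟨h1, h2, fun x p => by rw [← key h1 h2]; exact h3 x p⟩
  · rintro ⟨h1, h2, h3⟩
    exact ⟨h1, h2, fun x p => by rw [key h1 h2]; exact h3 x p⟩

lemma weak_duality [PolishSpace X₂] [Nonempty X₂] (C : X₁ → ProbabilityMeasure X₂ → EReal)
    (F₁ F₂ : EntropyFn) (hF₁ : F₁.Superlinear) (hF₂ : F₂.Superlinear)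
    (μ₁ : Measure X₁) (μ₂ : Measure X₂) [IsFiniteMeasure μ₁] [IsFiniteMeasure μ₂]
    (φ : (X₁ →ᵇ ℝ) × (X₂ →ᵇ ℝ)) (hφ : φ ∈ lamRSet C F₁ F₂) :
    (((∫ x, φ.1 x ∂μ₁) + ∫ x, φ.2 x ∂μ₂ : ℝ) : EReal) ≤ wOpt C F₁ F₂ μ₁ μ₂ := by
  obtain ⟨h1, h2, h3⟩ := (lamR_iff C F₁ F₂ hF₁ hF₂ φ).1 hφ
  refine le_sInf ?_
  rintro e ⟨γ, hγ, rfl⟩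
  have w1 := F₁.entropy_weak hF₁ h1 γ.fst μ₁
  have w2 := F₂.entropy_weak hF₂ h2 γ.snd μ₂
  have hi1 : Integrable (fun x => F₁.rbc φ.1 x) γ.fst := (F₁.rbc φ.1).integrable _
  have hi2' : Integrable (fun z : X₁ × X₂ => F₂.rbc φ.2 z.2) γ := by
    have := (F₂.rbc φ.2).integrable γ.snd
    exact this.comp_measurable measurable_snd
  have hi2 : Integrable (fun x => ∫ y, F₂.rbc φ.2 y ∂(γ.condKernel x)) γ.fst :=
    hi2'.integral_condKernel
  have e2 : ∫ x, ∫ y, F₂.rbc φ.2 y ∂(γ.condKernel x) ∂γ.fst = ∫ y, F₂.rbc φ.2 y ∂γ.snd := by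
    rw [Measure.integral_condKernel hi2', Measure.snd,
      integral_map measurable_snd.aemeasurable (F₂.rbc φ.2).continuous.aestronglyMeasurable]
  have w3 : ((∫ x, F₁.rbc φ.1 x ∂γ.fst + ∫ y, F₂.rbc φ.2 y ∂γ.snd : ℝ) : EReal) ≤
      eIntegral γ.fst (fun x₁ => C x₁ ⟨γ.condKernel x₁, inferInstance⟩) := by
    rw [← e2, ← integral_add hi1 hi2]
    refine le_trans (le_of_eq (eIntegral_real (hi1.add hi2)).symm) ?_
    exact eIntegral_mono (Eventually.of_forall fun x => h3 x ⟨γ.condKernel x, inferInstance⟩)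
  refine le_trans (le_of_eq ?_) (add_le_add (add_le_add w1 w2) w3)
  rw [← EReal.coe_add, ← EReal.coe_add]
  congr 1
  ring
end

section PM
variable {X : Type*} [TopologicalSpace X] [TopologicalSpace.MetrizableSpace X] [SecondCountableTopology X]
  [MeasurableSpace X] [BorelSpace X]

def pmSub (X : Type*) [TopologicalSpace X] [SecondCountableTopology X] [MeasurableSpace X] :
    Set (Set (ProbabilityMeasure X)) :=
  (fun q : Set (Set X) × ℚ≥0 => {p : ProbabilityMeasure X | ((q.2 : ℝ≥0) : ℝ≥0∞) < (p : Measure X) (⋃₀ q.1)}) ''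
    ({s : Set (Set X) | s.Finite ∧ s ⊆ TopologicalSpace.countableBasis X} ×ˢ univ)

lemma pmSub_countable : (pmSub X).Countable := by
  refine (Countable.prod ?_ countable_univ).image _
  exact countable_ofPred_finite_subset (TopologicalSpace.countable_countableBasis X)

lemma pm_isOpen {G : Set X} (hG : IsOpen G) (r : ℝ≥0∞) :
    IsOpen {p : ProbabilityMeasure X | r < (p : Measure X) G} := by
  rw [isOpen_iff_eventually]
  intro p hp
  have h := ProbabilityMeasure.le_liminf_measure_open_of_tendsto (L := 𝓝 p) (μs := id) tendsto_id hG
  exact eventually_lt_of_lt_liminf (lt_of_lt_of_le hp h)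

lemma pm_top : (inferInstance : TopologicalSpace (ProbabilityMeasure X))
    = TopologicalSpace.generateFrom (pmSub X) := by
  set τ' := TopologicalSpace.generateFrom (pmSub X) with hτ'
  apply le_antisymm
  · apply le_generateFrom
    rintro _ ⟨⟨s, r⟩, ⟨⟨hs1, hs2⟩, -⟩, rfl⟩
    refine pm_isOpen (isOpen_sUnion fun t ht => ?_) _
    exact (TopologicalSpace.isBasis_countableBasis X).isOpen (hs2 ht)
  · rw [le_iff_nhds]
    intro p
    have hsc : @SecondCountableTopology _ τ' := ⟨⟨pmSub X, pmSub_countable, rfl⟩⟩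
    haveI : (@nhds _ τ' p).IsCountablyGenerated :=
      @FirstCountableTopology.nhds_generated_countable _ τ'
        (@TopologicalSpace.SecondCountableTopology.to_firstCountableTopology _ τ' hsc) p
    have := tendsto_of_forall_isOpen_le_liminf' (μ := p) (μs := id) (L := @nhds _ τ' p) ?_
    · exact this
    intro G hG
    refine le_of_forall_lt fun c hc => ?_
    obtain ⟨d, hd1, hd2⟩ := exists_between hc
    obtain ⟨r, hr0, hr1, hr2⟩ := ENNReal.lt_iff_exists_rat_btwn.1 hd2
    obtain ⟨S, hS, hSc, hGS⟩ := (TopologicalSpace.isBasis_countableBasis X).exists_countable_biUnion_of_isOpen hG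
    -- finite subfamily
    have hfin : ∃ s : Finset (Set X), (s : Set (Set X)) ⊆ S ∧ ((Real.toNNReal r : ℝ≥0) : ℝ≥0∞) < (p : Measure X) (⋃₀ (s : Set (Set X))) := by
      haveI := hSc.to_subtype
      have hdir : Directed (· ⊆ ·) (fun t : Finset S => ⋃ a ∈ t, (a : Set X)) := by
        classical
        intro t u
        exact ⟨t ∪ u, biUnion_subset_biUnion_left (by simp), biUnion_subset_biUnion_left (by simp)⟩
      have e : G = ⋃ t : Finset S, ⋃ a ∈ t, (a : Set X) := by
        rw [hGS]
        ext x
        simp only [mem_iUnion]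
        constructor
        · rintro ⟨a, ha, hx⟩
          exact ⟨{⟨a, ha⟩}, ⟨a, ha⟩, by simp, hx⟩
        · rintro ⟨t, a, _, hx⟩
          exact ⟨a, a.2, hx⟩
      rw [e, hdir.measure_iUnion] at hr2
      obtain ⟨t, ht⟩ := lt_iSup_iff.1 hr2
      refine ⟨t.map ⟨Subtype.val, Subtype.val_injective⟩, ?_, ?_⟩
      · intro a ha
        simp at ha
        exact ha.1
      · convert ht using 2
        ext x; simp
    obtain ⟨s, hs1, hs2⟩ := hfin
    have hrr : Real.toNNReal r = (((r.toNNRat : ℚ≥0) : ℝ≥0)) := by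
      apply NNReal.coe_injective
      rw [Real.coe_toNNReal _ (by exact_mod_cast hr0)]
      have : ((r.toNNRat : ℚ≥0) : ℚ) = r := Rat.coe_toNNRat r hr0
      conv_lhs => rw [← this]
      push_cast
      rfl
    have hop : IsOpen[τ'] {q : ProbabilityMeasure X | (((r.toNNRat : ℚ≥0) : ℝ≥0) : ℝ≥0∞) < (q : Measure X) (⋃₀ (s : Set (Set X)))} :=
      TopologicalSpace.isOpen_generateFrom_of_mem ⟨⟨s, r.toNNRat⟩, ⟨⟨s.finite_toSet, hs1.trans hS⟩, trivial⟩, rfl⟩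
    have hev : ∀ᶠ q : ProbabilityMeasure X in @nhds (ProbabilityMeasure X) τ' p, d ≤ (q : Measure X) G := by
      refine mem_of_superset (@IsOpen.mem_nhds _ τ' p _ hop (by rw [← hrr]; exact hs2)) ?_
      intro q hq
      rw [← hrr] at hq
      replace hq : ((Real.toNNReal r : ℝ≥0) : ℝ≥0∞) < (q : Measure X) (⋃₀ (s : Set (Set X))) := hq
      refine (hr1.trans hq).le.trans (measure_mono ?_)
      rw [hGS]
      intro x hx
      obtain ⟨a, ha, hx⟩ := hx
      exact mem_biUnion (hs1 ha) hx
    exact hd1.trans_le (le_liminf_of_le (by isBoundedDefault) hev)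

instance pm_secondCountable : SecondCountableTopology (ProbabilityMeasure X) :=
  ⟨⟨pmSub X, pmSub_countable, pm_top⟩⟩

lemma pm_meas_coe : Measurable (fun p : ProbabilityMeasure X => (p : Measure X)) := measurable_subtype_coe

instance pm_borel : BorelSpace (ProbabilityMeasure X) := by
  constructor
  apply le_antisymm
  · -- Giry ≤ Borel
    have h : @Measurable _ _ (borel (ProbabilityMeasure X)) _ (fun p : ProbabilityMeasure X => (p : Measure X)) := by
      letI := borel (ProbabilityMeasure X)
      haveI : BorelSpace (ProbabilityMeasure X) := ⟨rfl⟩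
      refine Measurable.measure_of_isPiSystem_of_isProbabilityMeasure (S := {s : Set X | IsOpen s})
        (by rw [BorelSpace.measurable_eq (α := X)]; rfl) isPiSystem_isOpen ?_
      intro s hs
      refine measurable_of_Ioi fun r => (pm_isOpen hs r).measurableSet
    exact h.comap_le
  · rw [borel_eq_generateFrom_of_subbasis (pm_top (X := X))]
    apply MeasurableSpace.generateFrom_le
    rintro _ ⟨⟨s, r⟩, ⟨⟨hs1, hs2⟩, -⟩, rfl⟩
    have hm : MeasurableSet (⋃₀ s) := by
      refine (isOpen_sUnion fun t ht => ?_).measurableSet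
      exact (TopologicalSpace.isBasis_countableBasis X).isOpen (hs2 ht)
    exact ((Measure.measurable_coe hm).comp pm_meas_coe) measurableSet_Ioi
end PM

lemma polish_compact (X : Type*) [TopologicalSpace X] [CompactSpace X]
    [TopologicalSpace.MetrizableSpace X] : PolishSpace X := by
  letI := TopologicalSpace.metrizableSpaceMetric X
  infer_instance

lemma MeasurableEmbedding.standardBorel' {α β : Type*} [MeasurableSpace α] [MeasurableSpace β]
    [StandardBorelSpace β] {f : α → β} (hf : MeasurableEmbedding f) : StandardBorelSpace α := by
  haveI : StandardBorelSpace (range f) := hf.measurableSet_range.standardBorel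
  let e : α ≃ᵐ range f := hf.equivRange
  letI := upgradeStandardBorel (range f)
  letI : TopologicalSpace α := TopologicalSpace.induced e inferInstance
  haveI : PolishSpace α := e.toEquiv.polishSpace_induced
  haveI : BorelSpace α := by
    constructor
    rw [borel_comap, ← BorelSpace.measurable_eq]
    exact e.measurableEmbedding.comap_eq.symm
  infer_instance

instance pm_standard {X : Type*} [MeasurableSpace X] [StandardBorelSpace X] [Nonempty X] :
    StandardBorelSpace (ProbabilityMeasure X) := by
  obtain ⟨f₀, hf₀⟩ := exists_measurableEmbedding_real X
  let f : X → EReal := fun x => (f₀ x : EReal)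
  have hf : MeasurableEmbedding f := EReal.measurableEmbedding_coe.comp hf₀
  obtain ⟨g, hg, hgf⟩ := hf.exists_measurable_extend measurable_id (fun _ => inferInstance)
  haveI := polish_compact (ProbabilityMeasure EReal)
  haveI : StandardBorelSpace (ProbabilityMeasure EReal) := inferInstance
  let f' : ProbabilityMeasure X → ProbabilityMeasure EReal := fun p => p.map hf.measurable.aemeasurable
  let g' : ProbabilityMeasure EReal → ProbabilityMeasure X := fun p => p.map hg.aemeasurable
  have hf' : Measurable f' := ((Measure.measurable_map f hf.measurable).comp measurable_subtype_coe).subtype_mk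
  have hg' : Measurable g' := ((Measure.measurable_map g hg).comp measurable_subtype_coe).subtype_mk
  have hinv : Function.LeftInverse g' f' := by
    intro p
    apply Subtype.ext
    change Measure.map g (Measure.map f (p : Measure X)) = p
    rw [Measure.map_map hg hf.measurable, hgf, Measure.map_id]
  have hr : range f' = {q : ProbabilityMeasure EReal | (q : Measure EReal) (range f)ᶜ = 0} := by
    ext q
    constructor
    · rintro ⟨p, rfl⟩
      change Measure.map f (p : Measure X) (range f)ᶜ = 0
      rw [Measure.map_apply hf.measurable hf.measurableSet_range.compl]
      simp
    · intro hq
      refine ⟨g' q, ?_⟩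
      apply Subtype.ext
      change Measure.map f (Measure.map g (q : Measure EReal)) = q
      rw [Measure.map_map hf.measurable hg]
      have : f ∘ g =ᵐ[(q : Measure EReal)] id := by
        have h2 : ∀ᵐ x ∂(q : Measure EReal), x ∈ range f := hq
        filter_upwards [h2] with y hy
        obtain ⟨x, rfl⟩ := hy
        have : g (f x) = x := congrFun hgf x
        simp [this]
      rw [Measure.map_congr this, Measure.map_id]
  have hrm : MeasurableSet (range f') := by
    rw [hr]
    exact ((Measure.measurable_coe hf.measurableSet_range.compl).comp pm_meas_coe)
      (measurableSet_singleton 0)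
  exact (MeasurableEmbedding.of_measurable_inverse hf' hrm hg' hinv).standardBorel'

section Jensen
variable {X : Type*} [TopologicalSpace X] [TopologicalSpace.MetrizableSpace X] [SecondCountableTopology X]
  [MeasurableSpace X] [BorelSpace X]

def pmEv (p : ProbabilityMeasure X) : (X →ᵇ ℝ) → ℝ := fun f => ∫ x, f x ∂(p : Measure X)

lemma pmEv_cont (f : X →ᵇ ℝ) : Continuous fun p : ProbabilityMeasure X => ∫ x, f x ∂(p : Measure X) := by
  rw [continuous_iff_continuousAt]
  intro p
  exact (ProbabilityMeasure.tendsto_iff_forall_integral_tendsto (F := 𝓝 p) (μs := id)).1 tendsto_id f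

lemma pmEv_nhds (p : ProbabilityMeasure X) : 𝓝 p = comap pmEv (𝓝 (pmEv p)) := by
  apply le_antisymm
  · apply map_le_iff_le_comap.1
    exact (continuous_pi (fun f => pmEv_cont f)).tendsto p
  · have : Tendsto id (comap pmEv (𝓝 (pmEv p))) (𝓝 p) := by
      rw [ProbabilityMeasure.tendsto_iff_forall_integral_tendsto]
      intro f
      exact ((continuous_apply f).tendsto (pmEv p)).comp (tendsto_comap (f := pmEv))
    exact this

lemma pm_jensen (ρ : Measure (ProbabilityMeasure X)) [IsProbabilityMeasure ρ] (m : ProbabilityMeasure X)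
    (hm : ∀ f : X →ᵇ ℝ, ∫ x, f x ∂(m : Measure X) = ∫ p, (∫ x, f x ∂(p : ProbabilityMeasure X).1) ∂ρ)
    (g : ProbabilityMeasure X → ℝ≥0∞) (hg : LowerSemicontinuous g)
    (hconv : ∀ (p q m : ProbabilityMeasure X) (t : ℝ), 0 ≤ t → t ≤ 1 →
      (m : Measure X) = ENNReal.ofReal t • (p : Measure X)
          + ENNReal.ofReal (1 - t) • (q : Measure X) →
      g m ≤ ENNReal.ofReal t * g p + ENNReal.ofReal (1 - t) * g q) :
    g m ≤ ∫⁻ p, g p ∂ρ := by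
  by_contra! hlt
  obtain ⟨c, hc1, hc2⟩ := ENNReal.lt_iff_exists_nnreal_btwn.1 hlt
  have hfin : ∫⁻ p, g p ∂ρ ≠ ∞ := (hc1.trans ENNReal.coe_lt_top).ne
  have hgm : Measurable g := hg.measurable
  have hae : ∀ᵐ p ∂ρ, g p < ∞ := ae_lt_top hgm hfin
  have hnh : {q | (c : ℝ≥0∞) < g q} ∈ 𝓝 m := hg m c hc2
  rw [pmEv_nhds, mem_comap] at hnh
  obtain ⟨U, hU, hUs⟩ := hnh
  obtain ⟨V, hVU, hVo, hmV⟩ := mem_nhds_iff.1 hU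
  obtain ⟨I, u, hu, hIu⟩ := isOpen_pi_iff.1 hVo _ hmV
  let A : Set ((I → ℝ) × ℝ) := {w | ∃ q : ProbabilityMeasure X, (∀ i : I, ∫ x, i.1 x ∂(q : Measure X) = w.1 i)
    ∧ g q ≤ ENNReal.ofReal w.2 ∧ 0 ≤ w.2}
  have hA : Convex ℝ A := by
    rintro ⟨v, s⟩ ⟨p, hp1, hp2, hp3⟩ ⟨w, r⟩ ⟨q, hq1, hq2, hq3⟩ a b ha hb hab
    have hb' : b = 1 - a := by linarith
    let μ : Measure X := ENNReal.ofReal a • (p : Measure X) + ENNReal.ofReal (1 - a) • (q : Measure X)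
    have hμ : IsProbabilityMeasure μ := ⟨by
      simp only [μ, Measure.add_apply, Measure.smul_apply, measure_univ, smul_eq_mul, mul_one]
      rw [← ENNReal.ofReal_add ha (by linarith)]; simp⟩
    refine ⟨⟨μ, hμ⟩, ?_, ?_, ?_⟩
    · intro i
      change ∫ x, i.1 x ∂μ = a * v i + b * w i
      rw [integral_add_measure, integral_smul_measure, integral_smul_measure, ENNReal.toReal_ofReal ha,
        ENNReal.toReal_ofReal (by linarith), hp1, hq1, hb']
      · rfl
      · exact (i.1.integrable _).smul_measure ENNReal.ofReal_ne_top
      · exact (i.1.integrable _).smul_measure ENNReal.ofReal_ne_top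
    · refine (hconv p q ⟨μ, hμ⟩ a ha (by linarith) rfl).trans ?_
      change _ ≤ ENNReal.ofReal (a * s + b * r)
      dsimp at hp2 hq2 hp3 hq3
      rw [ENNReal.ofReal_add (by positivity) (by positivity), ENNReal.ofReal_mul ha, ENNReal.ofReal_mul hb, ← hb']
      gcongr
    · change 0 ≤ a * s + b * r
      dsimp at hp3 hq3
      positivity
  let Ψ : ProbabilityMeasure X → (I → ℝ) × ℝ := fun p => (fun i => ∫ x, i.1 x ∂(p : Measure X), (g p).toReal)
  have hbd : ∀ f : X →ᵇ ℝ, Integrable (fun p : ProbabilityMeasure X => ∫ x, f x ∂(p : Measure X)) ρ := by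
    intro f
    refine Integrable.of_bound (C := ‖f‖) (pmEv_cont f).measurable.aestronglyMeasurable (ae_of_all _ fun p => ?_)
    exact BoundedContinuousFunction.norm_integral_le_norm _ f
  have h1 : Integrable (fun p : ProbabilityMeasure X => fun i : I => ∫ x, i.1 x ∂(p : Measure X)) ρ := by
    exact Integrable.of_eval fun i => hbd i.1
  have h2 : Integrable (fun p => (g p).toReal) ρ := integrable_toReal_of_lintegral_ne_top hgm.aemeasurable hfin
  have hΨ : Integrable Ψ ρ := h1.prodMk h2
  have hmem : ∫ p, Ψ p ∂ρ ∈ closure A := by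
    refine hA.closure.integral_mem isClosed_closure ?_ hΨ
    filter_upwards [hae] with p hp
    refine subset_closure ⟨p, fun i => rfl, ?_, ENNReal.toReal_nonneg⟩
    exact (ENNReal.ofReal_toReal hp.ne).ge
  rw [mem_closure_iff] at hmem
  have hO : IsOpen ({w : (I → ℝ) × ℝ | (∀ i : I, w.1 i ∈ u i.1) ∧ w.2 < c}) := by
    refine IsOpen.inter ?_ (isOpen_lt continuous_snd continuous_const)
    have : {w : (I → ℝ) × ℝ | (∀ i : I, w.1 i ∈ u i.1)} = ⋂ i : I, {w | w.1 i ∈ u i.1} := by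
      ext; simp
    change IsOpen {w : (I → ℝ) × ℝ | (∀ i : I, w.1 i ∈ u i.1)}
    rw [this]
    refine isOpen_iInter_of_finite fun i => (hu i.1 i.2).1.preimage (by fun_prop)
  obtain ⟨w, ⟨hw1, hw2⟩, q, hq1, hq2, hq3⟩ := hmem _ hO (by
    constructor
    · intro i
      rw [integral_pair h1 h2]
      have e := eval_integral (μ := ρ) (f := fun (p : ProbabilityMeasure X) (i : I) => ∫ x, i.1 x ∂(p : Measure X))
        (fun i : I => hbd i.1) i
      have e2 := hm i.1
      change (∫ p, (fun i : I => ∫ x, i.1 x ∂(p : Measure X)) ∂ρ) i ∈ _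
      rw [e]
      refine mem_of_eq_of_mem e2.symm ?_
      exact (hu i.1 i.2).2
    · rw [integral_pair h1 h2]
      change ∫ p, (g p).toReal ∂ρ < c
      rw [integral_toReal hgm.aemeasurable hae]
      have := (ENNReal.toReal_lt_toReal hfin ENNReal.coe_ne_top).2 hc1
      simpa using this)
  have hqU : pmEv q ∈ U := by
    apply hVU
    apply hIu
    intro f hf
    have := hw1 ⟨f, hf⟩
    rw [← hq1] at this
    exact this
  have hcq : (c : ℝ≥0∞) < g q := hUs hqU
  have : g q ≤ c := by
    refine hq2.trans ?_
    rw [← ENNReal.ofReal_coe_nnreal]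
    exact ENNReal.ofReal_le_ofReal hw2.le
  exact absurd hcq (not_lt.2 this)
end Jensen

def cT (K : ℝ) (a : EReal) : ℝ≥0∞ := posE (a - (K : EReal))

lemma cT_cont (K : ℝ) : Continuous (cT K) := by
  have : Continuous fun a : EReal => a - (K : EReal) := by
    rw [continuous_iff_continuousAt]
    intro a
    have h := EReal.continuousAt_add (p := (a, -(K : EReal))) (Or.inr (by simp [← EReal.coe_neg])) (Or.inr (by simp [← EReal.coe_neg]))
    have h2 : ContinuousAt (fun a : EReal => (a, -(K : EReal))) a := by fun_prop
    exact ContinuousAt.comp (f := fun a : EReal => (a, -(K : EReal))) (g := fun p : EReal × EReal => p.1 + p.2) h h2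
  exact EReal.continuous_toENNReal.comp this

lemma cT_mono (K : ℝ) : Monotone (cT K) := fun _ _ h => posE_mono (EReal.sub_le_sub h le_rfl)

lemma cT_coe (K a : ℝ) : cT K (a : EReal) = ENNReal.ofReal (a - K) := by
  unfold cT
  rw [← EReal.coe_sub, posE_coe]

lemma cT_top (K : ℝ) : cT K ⊤ = ∞ := by
  unfold cT
  rw [EReal.top_sub_coe]; simp [posE]

lemma cT_add (K : ℝ) {a : EReal} (h : (K : EReal) ≤ a) : ((cT K a : ℝ≥0∞) : EReal) + (K : EReal) = a := by
  induction a using EReal.rec with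
  | bot => simp at h
  | top => rw [cT_top]; simp
  | coe a =>
    have : K ≤ a := by exact_mod_cast h
    rw [cT_coe, coe_toReal_E ENNReal.ofReal_ne_top, ENNReal.toReal_ofReal (by linarith), ← EReal.coe_add]
    congr 1; ring

lemma cT_convex (K : ℝ) {a b m : EReal} (ha : (K : EReal) ≤ a) (hb : (K : EReal) ≤ b) {t : ℝ} (ht0 : 0 < t)
    (ht1 : t < 1) (h : m ≤ (t : EReal) * a + ((1 - t : ℝ) : EReal) * b) :
    cT K m ≤ ENNReal.ofReal t * cT K a + ENNReal.ofReal (1 - t) * cT K b := by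
  induction a using EReal.rec with
  | bot => simp at ha
  | top =>
    rw [cT_top, ENNReal.mul_top (by simpa using ht0)]; simp
  | coe a =>
    induction b using EReal.rec with
    | bot => simp at hb
    | top =>
      rw [cT_top, ENNReal.mul_top (by simpa using ht1)]; simp
    | coe b =>
      have ha' : K ≤ a := by exact_mod_cast ha
      have hb' : K ≤ b := by exact_mod_cast hb
      refine (cT_mono K h).trans ?_
      rw [← EReal.coe_mul, ← EReal.coe_mul, ← EReal.coe_add, cT_coe, cT_coe, cT_coe,
        ← ENNReal.ofReal_mul ht0.le, ← ENNReal.ofReal_mul (by linarith), ← ENNReal.ofReal_add]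
      · apply ENNReal.ofReal_le_ofReal; nlinarith
      · exact mul_nonneg ht0.le (by linarith)
      · exact mul_nonneg (by linarith) (by linarith)

section
variable {X : Type*} [MeasurableSpace X]

def pmKer (X : Type*) [MeasurableSpace X] : ProbabilityTheory.Kernel (ProbabilityMeasure X) X :=
  ⟨fun p => (p : Measure X), measurable_subtype_coe⟩

lemma pmKer_apply (p : ProbabilityMeasure X) : pmKer X p = (p : Measure X) := rfl

instance pmKer_markov : ProbabilityTheory.IsMarkovKernel (pmKer X) :=
  ⟨fun p => by rw [pmKer_apply]; infer_instance⟩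

/-- barycenter -/
def bary (ν : Measure (ProbabilityMeasure X)) : Measure X := ν.bind (pmKer X)

instance bary_fin (ν : Measure (ProbabilityMeasure X)) [IsFiniteMeasure ν] : IsFiniteMeasure (bary ν) := by
  unfold bary; infer_instance

lemma bary_integral [TopologicalSpace X] [BorelSpace X] (ν : Measure (ProbabilityMeasure X)) [IsFiniteMeasure ν] (f : X →ᵇ ℝ) :
    ∫ x, f x ∂(bary ν) = ∫ p, (∫ x, f x ∂(p : ProbabilityMeasure X).1) ∂ν := by
  unfold bary
  rw [← Measure.snd_compProd, Measure.snd, integral_map measurable_snd.aemeasurable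
    f.continuous.measurable.aestronglyMeasurable, Measure.integral_compProd]
  · rfl
  · have := f.integrable (ν.compProd (pmKer X)).snd
    exact this.comp_measurable measurable_snd

lemma bary_apply (ν : Measure (ProbabilityMeasure X)) {s : Set X} (hs : MeasurableSet s) :
    bary ν s = ∫⁻ p, (p : ProbabilityMeasure X).1 s ∂ν := by
  unfold bary
  rw [Measure.bind_apply hs (ProbabilityTheory.Kernel.aemeasurable _)]
  rfl
end

section
variable {X₁ : Type*} [MetricSpace X₁] [PolishSpace X₁] [MeasurableSpace X₁] [BorelSpace X₁]
    {X₂ : Type*} [MetricSpace X₂] [PolishSpace X₂] [MeasurableSpace X₂] [BorelSpace X₂] [Nonempty X₂]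

open ProbabilityTheory in
lemma primal_of_Gamma (C : X₁ → ProbabilityMeasure X₂ → EReal)
    (hClsc : LowerSemicontinuous fun q : X₁ × ProbabilityMeasure X₂ => C q.1 q.2)
    (K : ℝ) (hK : ∀ x p, (K : EReal) ≤ C x p)
    (hCconv : ∀ (x : X₁) (p q m : ProbabilityMeasure X₂) (t : ℝ), 0 ≤ t → t ≤ 1 →
      (m : Measure X₂) = ENNReal.ofReal t • (p : Measure X₂)
          + ENNReal.ofReal (1 - t) • (q : Measure X₂) →
      C x m ≤ (t : EReal) * C x p + ((1 - t : ℝ) : EReal) * C x q)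
    (Γ : Measure (X₁ × ProbabilityMeasure X₂)) [IsFiniteMeasure Γ]
    (hfin : ∫⁻ q, cT K (C q.1 q.2) ∂Γ ≠ ∞) :
    ∃ (γ : Measure (X₁ × X₂)) (_ : IsFiniteMeasure γ), γ.fst = Γ.fst ∧ γ.snd = bary Γ.snd ∧
      eIntegral γ.fst (fun x₁ => C x₁ ⟨γ.condKernel x₁, inferInstance⟩) ≤
        (((∫⁻ q, cT K (C q.1 q.2) ∂Γ).toReal + K * Γ.real univ : ℝ) : EReal) := by
  haveI : Nonempty (ProbabilityMeasure X₂) := ⟨⟨Measure.dirac (Classical.arbitrary X₂), inferInstance⟩⟩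
  let κ : Kernel X₁ X₂ := pmKer X₂ ∘ₖ Γ.condKernel
  have hcl : LowerSemicontinuous fun q : X₁ × ProbabilityMeasure X₂ => cT K (C q.1 q.2) :=
    (cT_cont K).comp_lowerSemicontinuous hClsc (cT_mono K)
  have hcm : Measurable fun q : X₁ × ProbabilityMeasure X₂ => cT K (C q.1 q.2) := hcl.measurable
  have hfst : (Γ.fst ⊗ₘ κ).fst = Γ.fst := Measure.fst_compProd _ _
  refine ⟨Γ.fst ⊗ₘ κ, inferInstance, hfst, ?_, ?_⟩
  · rw [Measure.snd_compProd]
    unfold bary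
    rw [← Measure.comp_assoc]
    congr 1
    rw [← Measure.snd_compProd, Measure.disintegrate]
  · have hae := eq_condKernel_of_measure_eq_compProd (ρ := Γ.fst ⊗ₘ κ) κ (by rw [hfst])
    let J : X₁ → ℝ≥0∞ := fun x => ∫⁻ p, cT K (C x p) ∂(Γ.condKernel x)
    have hJm : Measurable J := hcm.lintegral_kernel_prod_right' 
    have hJi : ∫⁻ x, J x ∂Γ.fst = ∫⁻ q, cT K (C q.1 q.2) ∂Γ := Measure.lintegral_condKernel hcm
    have hJf : ∀ᵐ x ∂Γ.fst, J x < ∞ := ae_lt_top hJm (by rw [hJi]; exact hfin)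
    rw [hfst] at hae ⊢
    have hle : eIntegral Γ.fst (fun x₁ => C x₁ ⟨(Γ.fst ⊗ₘ κ).condKernel x₁, inferInstance⟩) ≤
        eIntegral Γ.fst (fun x => (((J x).toReal + K : ℝ) : EReal)) := by
      apply eIntegral_mono
      filter_upwards [hae, hJf] with x hx hJx
      have hj := pm_jensen (Γ.condKernel x) ⟨(Γ.fst ⊗ₘ κ).condKernel x, inferInstance⟩
        (fun f => by
          change ∫ y, f y ∂((Γ.fst ⊗ₘ κ).condKernel x) = _
          rw [← hx]
          change ∫ y, f y ∂((pmKer X₂ ∘ₖ Γ.condKernel) x) = _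
          rw [Kernel.comp_apply]
          exact bary_integral _ f) (fun p => cT K (C x p))
        (LowerSemicontinuous.comp (f := fun q : X₁ × ProbabilityMeasure X₂ => cT K (C q.1 q.2)) (g := fun p => (x, p)) hcl (by fun_prop : Continuous fun p : ProbabilityMeasure X₂ => (x, p)))
        (fun p q m t ht0 ht1 h => by
          rcases ht0.eq_or_lt with rfl | ht0
          · have : m = q := Subtype.ext (by simpa using h)
            simp [this]
          rcases ht1.eq_or_lt with rfl | ht1
          · have : m = p := Subtype.ext (by simpa using h)
            simp [this]
          exact cT_convex K (hK _ _) (hK _ _) ht0 ht1 (hCconv x p q m t ht0.le ht1.le h))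
      refine (cT_add K (hK x ⟨(Γ.fst ⊗ₘ κ).condKernel x, inferInstance⟩)).ge.trans ?_
      rw [EReal.coe_add, ← coe_toReal_E hJx.ne]
      gcongr
      exact_mod_cast hj
    refine hle.trans (le_of_eq ?_)
    have hi : Integrable (fun x => (J x).toReal) Γ.fst :=
      integrable_toReal_of_lintegral_ne_top hJm.aemeasurable (by rw [hJi]; exact hfin)
    refine (eIntegral_real (hi.add (integrable_const K))).trans ?_
    rw [integral_add' hi (integrable_const K),
      integral_toReal hJm.aemeasurable hJf, hJi, integral_const]
    have : Γ.fst.real univ = Γ.real univ := by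
      rw [Measure.real, Measure.real, Measure.fst_univ]
    rw [this, smul_eq_mul, mul_comm]
end

def dya {Y : Type*} (c : Y → ℝ≥0∞) (n : ℕ) (y : Y) : ℝ≥0∞ :=
  ∑ k ∈ Finset.range ((n + 1) * (n + 1)), {z | (((k + 1 : ℕ) : ℝ≥0∞) / ((n + 1 : ℕ) : ℝ≥0∞)) < c z}.indicator (fun _ => ((n + 1 : ℕ) : ℝ≥0∞)⁻¹) y

open Classical in
lemma dya_eq {Y : Type*} (c : Y → ℝ≥0∞) (n : ℕ) (y : Y) : dya c n y =
    (((Finset.range ((n + 1) * (n + 1))).filter (fun k : ℕ => (((k + 1 : ℕ) : ℝ≥0∞) / ((n + 1 : ℕ) : ℝ≥0∞)) < c y)).card : ℝ≥0∞)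
      / ((n + 1 : ℕ) : ℝ≥0∞) := by
  unfold dya
  simp only [indicator_apply]
  rw [div_eq_mul_inv, ← nsmul_eq_mul, ← Finset.sum_const, Finset.sum_filter]
  rfl

lemma dya_le {Y : Type*} (c : Y → ℝ≥0∞) (n : ℕ) (y : Y) : dya c n y ≤ c y := by
  classical
  rw [dya_eq]
  set S := (Finset.range ((n + 1) * (n + 1))).filter (fun k : ℕ => (((k + 1 : ℕ) : ℝ≥0∞) / ((n + 1 : ℕ) : ℝ≥0∞)) < c y)
  rcases S.eq_empty_or_nonempty with h | h
  · simp [h]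
  · have hm := S.max'_mem h
    have h2 := (Finset.mem_filter.1 hm).2
    refine le_trans ?_ h2.le
    gcongr
    have : S ⊆ Finset.range (S.max' h + 1) := fun k hk => by
      rw [Finset.mem_range]
      exact Nat.lt_succ_of_le (S.le_max' k hk)
    simpa using Finset.card_le_card this

lemma dya_ge {Y : Type*} (c : Y → ℝ≥0∞) (y : Y) : c y ≤ liminf (fun n => dya c n y) atTop := by
  classical
  refine le_of_forall_lt_imp_le_of_dense fun a ha => ?_
  obtain ⟨b, hb1, hb2⟩ := ENNReal.lt_iff_exists_nnreal_btwn.1 ha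
  lift a to ℝ≥0 using (hb1.trans ENNReal.coe_lt_top).ne
  have hab : (a : ℝ) < b := by exact_mod_cast hb1
  refine le_liminf_of_le (by isBoundedDefault) ?_
  obtain ⟨N₁, hN₁⟩ := exists_nat_gt (b : ℝ)
  obtain ⟨N₂, hN₂⟩ := exists_nat_gt (1 / ((b : ℝ) - a))
  filter_upwards [eventually_ge_atTop N₁, eventually_ge_atTop N₂] with n h1 h2
  rw [dya_eq]
  set S := (Finset.range ((n + 1) * (n + 1))).filter (fun k : ℕ => (((k + 1 : ℕ) : ℝ≥0∞) / ((n + 1 : ℕ) : ℝ≥0∞)) < c y)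
  have hn0 : (0 : ℝ) < n + 1 := by positivity
  have hn1 : (N₁ : ℝ) ≤ n := by exact_mod_cast h1
  have hn2 : (N₂ : ℝ) ≤ n := by exact_mod_cast h2
  let j := ⌊(b : ℝ) * (n + 1)⌋₊
  have hj1 : (j : ℝ) ≤ b * (n + 1) := Nat.floor_le (by positivity)
  have hj2 : b * (n + 1) < (j : ℝ) + 1 := Nat.lt_floor_add_one _
  have hsub : Finset.range j ⊆ S := by
    intro k hk
    have hk' : k + 1 ≤ j := by simpa using hk
    have hk2 : (k : ℝ) + 1 ≤ j := by exact_mod_cast hk'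
    rw [Finset.mem_filter, Finset.mem_range]
    constructor
    · have : (k : ℝ) < (n + 1) * (n + 1) := by nlinarith
      exact_mod_cast this
    · refine lt_of_le_of_lt ?_ hb2
      apply ENNReal.div_le_of_le_mul
      have : ((k + 1 : ℕ) : ℝ≥0) ≤ b * ((n + 1 : ℕ) : ℝ≥0) := by
        rw [← NNReal.coe_le_coe]; push_cast; linarith
      exact_mod_cast this
  have hcard : j ≤ S.card := by simpa using Finset.card_le_card hsub
  have hcard' : (j : ℝ) ≤ S.card := by exact_mod_cast hcard
  rw [ENNReal.le_div_iff_mul_le (Or.inl (by simp)) (Or.inl (by simp))]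
  have : a * ((n + 1 : ℕ) : ℝ≥0) ≤ (S.card : ℝ≥0) := by
    rw [← NNReal.coe_le_coe]; push_cast
    have h3 : 1 / ((b : ℝ) - a) < n + 1 := by linarith
    rw [div_lt_iff₀ (by linarith)] at h3
    nlinarith
  exact_mod_cast this

section
variable {Y : Type*} [TopologicalSpace Y] [MeasurableSpace Y] [BorelSpace Y] [HasOuterApproxClosed Y]

lemma fm_open_lsc {U : Set Y} (hU : IsOpen U) :
    LowerSemicontinuous fun Γ : FiniteMeasure Y => (Γ : Measure Y) U := by
  intro Γ₀ r hr
  have huniv : ∀ Γ : FiniteMeasure Y, (Γ : Measure Y) univ = (Γ : Measure Y) U + (Γ : Measure Y) Uᶜ :=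
    fun Γ => (measure_add_measure_compl hU.measurableSet).symm
  have h1 : r + (Γ₀ : Measure Y) Uᶜ < (Γ₀ : Measure Y) univ := by
    rw [huniv]
    exact ENNReal.add_lt_add_right (measure_ne_top _ _) hr
  obtain ⟨δ, hδ, h2⟩ := ENNReal.lt_iff_exists_add_pos_lt.1 h1
  have hl := FiniteMeasure.limsup_measure_closed_le_of_tendsto (L := 𝓝 Γ₀) (μs := id) tendsto_id hU.isClosed_compl
  have h3 : (Γ₀ : Measure Y) Uᶜ < (Γ₀ : Measure Y) Uᶜ + δ :=
    ENNReal.lt_add_right (measure_ne_top _ _) (by simpa using hδ.ne')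
  have e1 := eventually_lt_of_limsup_lt (hl.trans_lt h3)
  have hmass : Continuous fun Γ : FiniteMeasure Y => (Γ : Measure Y) univ := by
    have : (fun Γ : FiniteMeasure Y => (Γ : Measure Y) univ) = fun Γ => ((Γ.mass : ℝ≥0) : ℝ≥0∞) := by
      ext Γ; simp
    rw [this]
    exact ENNReal.continuous_coe.comp FiniteMeasure.continuous_mass
  have e2 := (hmass.tendsto Γ₀).eventually_const_lt h2
  filter_upwards [e1, e2] with Γ g1 g2
  by_contra! hle
  have : (Γ : Measure Y) univ ≤ r + (Γ₀ : Measure Y) Uᶜ + δ := by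
    rw [huniv, add_assoc]
    exact add_le_add hle g1.le
  exact absurd g2 (not_lt.2 this)

lemma fm_lintegral_lsc {c : Y → ℝ≥0∞} (hc : LowerSemicontinuous c) :
    LowerSemicontinuous fun Γ : FiniteMeasure Y => ∫⁻ y, c y ∂(Γ : Measure Y) := by
  have hm : ∀ n, Measurable (dya c n) := by
    intro n
    unfold dya
    refine Finset.measurable_sum _ fun k _ => measurable_const.indicator ?_
    exact (hc.isOpen_preimage _).measurableSet
  have hd : ∀ n, LowerSemicontinuous fun Γ : FiniteMeasure Y => ∫⁻ y, dya c n y ∂(Γ : Measure Y) := by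
    intro n
    have e : (fun Γ : FiniteMeasure Y => ∫⁻ y, dya c n y ∂(Γ : Measure Y)) = fun Γ : FiniteMeasure Y =>
        ∑ k ∈ Finset.range ((n + 1) * (n + 1)), ((n + 1 : ℕ) : ℝ≥0∞)⁻¹ * (Γ : Measure Y) {z | (((k + 1 : ℕ) : ℝ≥0∞) / ((n + 1 : ℕ) : ℝ≥0∞)) < c z} := by
      ext Γ
      unfold dya
      rw [lintegral_finsetSum]
      · refine Finset.sum_congr rfl fun k _ => ?_
        rw [lintegral_indicator_const]
        exact (hc.isOpen_preimage _).measurableSet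
      · intro k _ 
        refine measurable_const.indicator ?_
        exact (hc.isOpen_preimage _).measurableSet
    rw [e]
    refine lowerSemicontinuous_sum fun k _ => ?_
    refine Continuous.comp_lowerSemicontinuous (g := fun a => ((n + 1 : ℕ) : ℝ≥0∞)⁻¹ * a) ?_ (fm_open_lsc (hc.isOpen_preimage _)) ?_
    · exact ENNReal.continuous_const_mul (by simp)
    · exact fun a b h => by dsimp; gcongr
  have e : (fun Γ : FiniteMeasure Y => ∫⁻ y, c y ∂(Γ : Measure Y)) = fun Γ : FiniteMeasure Y => ⨆ n, ∫⁻ y, dya c n y ∂(Γ : Measure Y) := by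
    ext Γ
    apply le_antisymm
    · calc ∫⁻ y, c y ∂(Γ : Measure Y) ≤ ∫⁻ y, liminf (fun n => dya c n y) atTop ∂(Γ : Measure Y) := lintegral_mono fun y => dya_ge c y
        _ ≤ liminf (fun n => ∫⁻ y, dya c n y ∂(Γ : Measure Y)) atTop := lintegral_liminf_le hm
        _ ≤ ⨆ n, ∫⁻ y, dya c n y ∂(Γ : Measure Y) := by
          refine liminf_le_of_le (by isBoundedDefault) fun b hb => ?_
          obtain ⟨n, hn⟩ := hb.exists
          exact hn.trans (le_iSup (fun n => ∫⁻ y, dya c n y ∂(Γ : Measure Y)) n)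
    · exact iSup_le fun n => lintegral_mono fun y => dya_le c n y
  rw [e]
  exact lowerSemicontinuous_iSup hd

/-- the sublevel set -/
def Sset (c : Y → ℝ≥0∞) (h : Y →ᵇ ℝ) (r : ℝ) : Set (FiniteMeasure Y) :=
  {Γ | ((∫⁻ y, c y ∂(Γ : Measure Y) : ℝ≥0∞) : EReal) ≤ ((r + ∫ y, h y ∂(Γ : Measure Y) : ℝ) : EReal)}

lemma Sset_closed {c : Y → ℝ≥0∞} (hc : LowerSemicontinuous c) (h : Y →ᵇ ℝ) (r : ℝ) : IsClosed (Sset c h r) := by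
  rw [← isOpen_compl_iff, isOpen_iff_eventually]
  intro Γ hΓ
  have hlt : ((r + ∫ y, h y ∂(Γ : Measure Y) : ℝ) : EReal) < ((∫⁻ y, c y ∂(Γ : Measure Y) : ℝ≥0∞) : EReal) := not_le.1 hΓ
  obtain ⟨z, hz1, hz2⟩ := exists_between hlt
  have l1 : LowerSemicontinuous fun Γ : FiniteMeasure Y => ((∫⁻ y, c y ∂(Γ : Measure Y) : ℝ≥0∞) : EReal) :=
    continuous_coe_ennreal_ereal.comp_lowerSemicontinuous (fm_lintegral_lsc hc) (fun a b h => by exact_mod_cast h)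
  have l2 : Tendsto (fun Γ : FiniteMeasure Y => ((r + ∫ y, h y ∂(Γ : Measure Y) : ℝ) : EReal)) (𝓝 Γ)
      (𝓝 ((r + ∫ y, h y ∂(Γ : Measure Y) : ℝ) : EReal)) := by
    refine (continuous_coe_real_ereal.tendsto _).comp (Tendsto.const_add _ ?_)
    exact (FiniteMeasure.tendsto_iff_forall_integral_tendsto (F := 𝓝 Γ) (μs := id)).1 tendsto_id h
  filter_upwards [l1 Γ z hz2, l2.eventually_lt_const hz1] with Γ' g1 g2
  exact not_le.2 (g2.trans g1)
end

section
variable {X₁ : Type*} [MetricSpace X₁] [PolishSpace X₁] [MeasurableSpace X₁] [BorelSpace X₁]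
    {X₂ : Type*} [MetricSpace X₂] [PolishSpace X₂] [MeasurableSpace X₂] [BorelSpace X₂]

def Tset (M : ℝ≥0) (A : ℕ → Set X₁) (L : ℕ → Set X₂) : Set (FiniteMeasure (X₁ × ProbabilityMeasure X₂)) :=
  {Γ | (Γ : Measure (X₁ × ProbabilityMeasure X₂)) univ ≤ M ∧
    ∀ n, (Γ : Measure (X₁ × ProbabilityMeasure X₂)).fst (A n)ᶜ ≤ (4⁻¹ : ℝ≥0∞) ^ n ∧
      bary (Γ : Measure (X₁ × ProbabilityMeasure X₂)).snd (L n)ᶜ ≤ (4⁻¹ : ℝ≥0∞) ^ n}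

lemma Tset_compact (M : ℝ≥0) (A : ℕ → Set X₁) (L : ℕ → Set X₂) (hA : ∀ n, IsCompact (A n)) (hL : ∀ n, IsCompact (L n)) :
    ∃ 𝒞 : Set (FiniteMeasure (X₁ × ProbabilityMeasure X₂)), IsCompact 𝒞 ∧ Tset M A L ⊆ 𝒞 := by
  let B : ℕ → Set (ProbabilityMeasure X₂) := fun n => {p | ∀ m, p (L (m + n))ᶜ ≤ (2⁻¹ : ℝ≥0) ^ (m + n)}
  have hlim : Tendsto (fun n : ℕ => (2⁻¹ : ℝ≥0) ^ n) atTop (𝓝 0) := by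
    apply NNReal.tendsto_pow_atTop_nhds_zero_of_lt_one
    rw [← NNReal.coe_lt_coe]; norm_num
  have hB : ∀ n, IsCompact (B n) := by
    intro n
    refine isCompact_setOfPred_probabilityMeasure_mass_eq_compl_isCompact_le (K := fun m => L (m + n))
      ?_ (fun m => hL _) (Or.inl inferInstance)
    exact (tendsto_add_atTop_iff_nat n).2 hlim
  have hlim2 : Tendsto (fun n : ℕ => (3 : ℝ≥0) * (2⁻¹ : ℝ≥0) ^ n) atTop (𝓝 0) := by
    simpa using hlim.const_mul 3
  haveI : NormalSpace (X₁ × ProbabilityMeasure X₂) := by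
    letI := TopologicalSpace.metrizableSpaceMetric (X₁ × ProbabilityMeasure X₂)
    infer_instance
  refine ⟨_, isCompact_setOfPred_finiteMeasure_mass_le_compl_isCompact_le (K := fun n => A n ×ˢ B n) M
    hlim2 (fun n => (hA n).prod (hB n)) (Or.inl inferInstance), ?_⟩
  rintro Γ ⟨hM, hΓ⟩
  refine ⟨?_, fun n => ?_⟩
  · rw [← ENNReal.coe_le_coe, FiniteMeasure.ennreal_mass]; exact hM
  · rw [← ENNReal.coe_le_coe, FiniteMeasure.ennreal_coeFn_eq_coeFn_toMeasure]
    set G := (Γ : Measure (X₁ × ProbabilityMeasure X₂))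
    let E : ℕ → Set (ProbabilityMeasure X₂) := fun m => {p | (2⁻¹ : ℝ≥0∞) ^ (m + n) ≤ (p : Measure X₂) (L (m + n))ᶜ}
    have hsub : (A n ×ˢ B n)ᶜ ⊆ Prod.fst ⁻¹' (A n)ᶜ ∪ Prod.snd ⁻¹' (⋃ m, E m) := by
      rintro ⟨x, p⟩ h
      by_cases hx : x ∈ A n
      · right
        have hp : p ∉ B n := fun hp => h ⟨hx, hp⟩
        have : ∃ m, ¬ (p (L (m + n))ᶜ ≤ (2⁻¹ : ℝ≥0) ^ (m + n)) := by
          by_contra! hh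
          exact hp hh
        obtain ⟨m, hm⟩ := this
        refine mem_iUnion.2 ⟨m, ?_⟩
        change (2⁻¹ : ℝ≥0∞) ^ (m + n) ≤ (p : Measure X₂) (L (m + n))ᶜ
        rw [← ProbabilityMeasure.ennreal_coeFn_eq_coeFn_toMeasure]
        have := (not_le.1 hm).le
        rw [← ENNReal.coe_le_coe] at this
        rw [ENNReal.coe_pow, ENNReal.coe_inv (by norm_num)] at this
        exact this
      · exact Or.inl hx
    have hmE : ∀ m, Measurable fun p : ProbabilityMeasure X₂ => (p : Measure X₂) (L (m + n))ᶜ := fun m =>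
      (Measure.measurable_coe (hL _).isClosed.measurableSet.compl).comp pm_meas_coe
    have hE : ∀ m, G.snd (E m) ≤ (2⁻¹ : ℝ≥0∞) ^ (m + n) := by
      intro m
      have h1 := mul_meas_ge_le_lintegral (μ := G.snd) (hmE m) ((2⁻¹ : ℝ≥0∞) ^ (m + n))
      have h2 := (hΓ (m + n)).2
      rw [bary_apply _ (hL _).isClosed.measurableSet.compl] at h2
      have h3 := h1.trans h2
      have e4 : (4⁻¹ : ℝ≥0∞) = 2⁻¹ * 2⁻¹ := by
        rw [← ENNReal.mul_inv (by simp) (by simp)]; norm_num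
      rw [e4, mul_pow] at h3
      exact (ENNReal.mul_le_mul_iff_right (by simp) (by simp)).1 h3
    have hsum : ∑' m : ℕ, (2⁻¹ : ℝ≥0∞) ^ (m + n) = 2 * (2⁻¹ : ℝ≥0∞) ^ n := by
      simp_rw [pow_add]
      rw [ENNReal.tsum_mul_right, ENNReal.tsum_geometric]
      congr 1
      rw [ENNReal.one_sub_inv_two, inv_inv]
    calc G (A n ×ˢ B n)ᶜ ≤ G (Prod.fst ⁻¹' (A n)ᶜ) + G (Prod.snd ⁻¹' (⋃ m, E m)) :=
          (measure_mono hsub).trans (measure_union_le _ _)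
      _ = G.fst (A n)ᶜ + G.snd (⋃ m, E m) := by
          rw [Measure.fst_apply (hA n).isClosed.measurableSet.compl, Measure.snd_apply]
          exact MeasurableSet.iUnion fun m => measurableSet_le measurable_const (hmE m)
      _ ≤ (2⁻¹ : ℝ≥0∞) ^ n + 2 * (2⁻¹ : ℝ≥0∞) ^ n := by
          refine add_le_add ((hΓ n).1.trans ?_) ?_
          · gcongr; norm_num
          · rw [← hsum]
            exact (measure_iUnion_le _).trans (ENNReal.tsum_le_tsum hE)
      _ = ((3 * (2⁻¹ : ℝ≥0) ^ n : ℝ≥0) : ℝ≥0∞) := by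
          push_cast
          ring

lemma tight_fin {X : Type*} [TopologicalSpace X] [PolishSpace X] [MeasurableSpace X] [BorelSpace X]
    (ν : ℕ → Measure X) [∀ n, IsFiniteMeasure (ν n)] (n : ℕ) (A : Set X) (hA : IsCompact A) (ε : ℝ≥0∞) (hε : 0 < ε)
    (h : ∀ k ≥ n, ν k Aᶜ ≤ ε) : ∃ A' : Set X, IsCompact A' ∧ ∀ k, ν k A'ᶜ ≤ ε := by
  have : ∀ k, ∃ B : Set X, IsCompact B ∧ ν k Bᶜ ≤ ε := by
    intro k
    obtain ⟨B, hB, hB'⟩ := isTightMeasureSet_iff_exists_isCompact_measure_compl_le.1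
      (isTightMeasureSet_singleton (μ := ν k)) ε hε
    exact ⟨B, hB, hB' _ rfl⟩
  choose B hB hB' using this
  refine ⟨A ∪ ⋃ k ∈ Finset.range n, B k, hA.union ((Finset.range n).isCompact_biUnion fun k _ => hB k), fun k => ?_⟩
  by_cases hk : n ≤ k
  · exact (measure_mono (compl_subset_compl.2 subset_union_left)).trans (h k hk)
  · refine (measure_mono (compl_subset_compl.2 ?_)).trans (hB' k)
    refine subset_union_of_subset_right ?_ _
    exact subset_biUnion_of_mem (u := B) (Finset.mem_coe.2 (Finset.mem_range.2 (not_le.1 hk)))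

lemma inter_nonempty {ι : Type*} (S : ι → Set (FiniteMeasure (X₁ × ProbabilityMeasure X₂)))
    (hS : ∀ i, IsClosed (S i)) (hfin : ∀ I : Finset ι, (⋂ i ∈ I, S i).Nonempty)
    (M : ℝ≥0) (A : ℕ → Set X₁) (L : ℕ → Set X₂) (hA : ∀ n, IsCompact (A n)) (hL : ∀ n, IsCompact (L n))
    (j0 : ι) (j1 j2 : ℕ → ι)
    (h0 : ∀ Γ ∈ S j0, (Γ : Measure (X₁ × ProbabilityMeasure X₂)) univ ≤ M)
    (h1 : ∀ n, ∀ Γ ∈ S j0, Γ ∈ S (j1 n) → (Γ : Measure (X₁ × ProbabilityMeasure X₂)).fst (A n)ᶜ ≤ (4⁻¹ : ℝ≥0∞) ^ n)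
    (h2 : ∀ n, ∀ Γ ∈ S j0, Γ ∈ S (j2 n) → bary (Γ : Measure (X₁ × ProbabilityMeasure X₂)).snd (L n)ᶜ ≤ (4⁻¹ : ℝ≥0∞) ^ n) :
    (⋂ i, S i).Nonempty := by
  classical
  let 𝒦 : Set (FiniteMeasure (X₁ × ProbabilityMeasure X₂)) := S j0 ∩ ⋂ n, (S (j1 n) ∩ S (j2 n))
  have h𝒦cl : IsClosed 𝒦 := (hS _).inter (isClosed_iInter fun n => (hS _).inter (hS _))
  have h𝒦 : IsCompact 𝒦 := by
    obtain ⟨𝒞, hC, hsub⟩ := Tset_compact M A L hA hL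
    refine hC.of_isClosed_subset h𝒦cl (Subset.trans ?_ hsub)
    rintro Γ ⟨g0, g⟩
    rw [mem_iInter] at g
    exact ⟨h0 Γ g0, fun n => ⟨h1 n Γ g0 (g n).1, h2 n Γ g0 (g n).2⟩⟩
  have key : ∀ I : Finset ι, (𝒦 ∩ ⋂ i ∈ I, S i).Nonempty := by
    intro I
    let J : ℕ → Finset ι := fun k => insert j0 (I ∪ (Finset.range (k + 1)).image j1 ∪ (Finset.range (k + 1)).image j2)
    choose Γ hΓ using fun k => hfin (J k)
    have hΓ' : ∀ k, ∀ i ∈ J k, Γ k ∈ S i := fun k i hi => by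
      have := hΓ k
      simp only [mem_iInter] at this
      exact this i hi
    have g0 : ∀ k, Γ k ∈ S j0 := fun k => hΓ' k _ (by simp [J])
    have gI : ∀ i ∈ I, ∀ k, Γ k ∈ S i := fun i hi k => hΓ' k _ (by simp [J, hi])
    have g1 : ∀ n k, n ≤ k → Γ k ∈ S (j1 n) := fun n k hk => hΓ' k _ (by
      simp only [J, Finset.mem_insert, Finset.mem_union, Finset.mem_image, Finset.mem_range]
      exact Or.inr (Or.inl (Or.inr ⟨n, by omega, rfl⟩)))
    have g2 : ∀ n k, n ≤ k → Γ k ∈ S (j2 n) := fun n k hk => hΓ' k _ (by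
      simp only [J, Finset.mem_insert, Finset.mem_union, Finset.mem_image, Finset.mem_range]
      exact Or.inr (Or.inr ⟨n, by omega, rfl⟩))
    have t1 := fun n => tight_fin (fun k => (Γ k : Measure (X₁ × ProbabilityMeasure X₂)).fst) n (A n) (hA n)
      ((4⁻¹ : ℝ≥0∞) ^ n) (by simp [pos_iff_ne_zero]) (fun k hk => h1 n _ (g0 k) (g1 n k hk))
    have t2 := fun n => tight_fin (fun k => bary (Γ k : Measure (X₁ × ProbabilityMeasure X₂)).snd) n (L n) (hL n)
      ((4⁻¹ : ℝ≥0∞) ^ n) (by simp [pos_iff_ne_zero]) (fun k hk => h2 n _ (g0 k) (g2 n k hk))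
    choose A' hA' hA'' using t1
    choose L' hL' hL'' using t2
    obtain ⟨𝒞, hC, hsub⟩ := Tset_compact M A' L' hA' hL'
    have hmem : ∀ k, Γ k ∈ 𝒞 := fun k => hsub ⟨h0 _ (g0 k), fun n => ⟨hA'' n k, hL'' n k⟩⟩
    obtain ⟨Γl, -, hlim⟩ := hC.ultrafilter_le_nhds ((hyperfilter ℕ).map Γ) (by
      rw [le_principal_iff, Ultrafilter.mem_coe, Ultrafilter.mem_map]
      exact Filter.univ_mem' hmem)
    have hT : Tendsto Γ (hyperfilter ℕ : Filter ℕ) (𝓝 Γl) := hlim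
    have hle : (hyperfilter ℕ : Filter ℕ) ≤ atTop := by
      rw [← Nat.cofinite_eq_atTop]; exact hyperfilter_le_cofinite
    refine ⟨Γl, ⟨?_, ?_⟩, ?_⟩
    · exact (hS j0).mem_of_tendsto hT (Eventually.of_forall g0)
    · rw [mem_iInter]
      intro n
      exact ⟨(hS _).mem_of_tendsto hT (hle ((eventually_ge_atTop n).mono fun k hk => g1 n k hk)),
        (hS _).mem_of_tendsto hT (hle ((eventually_ge_atTop n).mono fun k hk => g2 n k hk))⟩
    · simp only [mem_iInter]
      exact fun i hi => (hS i).mem_of_tendsto hT (Eventually.of_forall (gI i hi))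
  exact (h𝒦.inter_iInter_nonempty S hS key).mono inter_subset_right
end

section
variable {Y : Type*} [TopologicalSpace Y] [MeasurableSpace Y] [BorelSpace Y]

lemma fin_minimax {ι : Type*} [Fintype ι] [Nonempty ι] (c : Y → ℝ≥0∞) (hc : Measurable c)
    (a : ι → ℝ) (h : ι → Y →ᵇ ℝ) (c' : ℝ)
    (H : ∀ l : ι → ℝ, (∀ i, 0 ≤ l i) → ∑ i, l i = 1 → (∀ y, ENNReal.ofReal (∑ i, l i * h i y) ≤ c y) →
      ∑ i, l i * a i < c') :
    ∃ Γ : FiniteMeasure Y, ∀ i, Γ ∈ Sset c (h i) (c' - a i) := by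
  classical
  let Q : Set (ι → ℝ) := {v | ∀ i, v i < c'}
  let V : Measure Y → ι → ℝ := fun Γ i => a i + (∫⁻ y, c y ∂Γ).toReal - ∫ y, h i y ∂Γ
  let A' : Set (ι → ℝ) := {v | ∃ Γ : Measure Y, IsFiniteMeasure Γ ∧ ∫⁻ y, c y ∂Γ ≠ ∞ ∧ v = V Γ}
  have hQo : IsOpen Q := by
    have : Q = ⋂ i, {v : ι → ℝ | v i < c'} := by ext; simp [Q]
    rw [this]
    exact isOpen_iInter_of_finite fun i => isOpen_lt (continuous_apply i) continuous_const
  have hQc : Convex ℝ Q := by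
    have : Q = Set.pi univ fun _ => Iio c' := by ext; simp [Q]
    rw [this]
    exact convex_pi fun i _ => convex_Iio c'
  have hAc : Convex ℝ A' := by
    rintro _ ⟨Γ₁, i₁, f₁, rfl⟩ _ ⟨Γ₂, i₂, f₂, rfl⟩ s t hs ht hst
    refine ⟨s.toNNReal • Γ₁ + t.toNNReal • Γ₂, inferInstance, ?_, ?_⟩
    · rw [lintegral_add_measure, lintegral_smul_measure, lintegral_smul_measure]
      exact ENNReal.add_ne_top.2 ⟨ENNReal.mul_ne_top (by simp) f₁, ENNReal.mul_ne_top (by simp) f₂⟩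
    · ext i
      simp only [V, Pi.add_apply, Pi.smul_apply, smul_eq_mul]
      rw [lintegral_add_measure, lintegral_smul_measure, lintegral_smul_measure,
        integral_add_measure ((h i).integrable _) ((h i).integrable _), integral_smul_nnreal_measure,
        integral_smul_nnreal_measure, ENNReal.smul_def, ENNReal.smul_def, smul_eq_mul, smul_eq_mul,
        ENNReal.toReal_add (ENNReal.mul_ne_top (by simp) f₁)
          (ENNReal.mul_ne_top (by simp) f₂)]
      simp only [ENNReal.smul_def, smul_eq_mul, ENNReal.toReal_mul, ENNReal.coe_toReal, NNReal.smul_def,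
        Real.coe_toNNReal _ hs, Real.coe_toNNReal _ ht]
      have : t = 1 - s := by linarith
      subst this
      ring
  by_cases hd : Disjoint Q A'
  · exfalso
    obtain ⟨f, u, hf1, hf2⟩ := geometric_hahn_banach_open hQc hQo hAc hd
    let l : ι → ℝ := fun i => f (Pi.single i 1)
    have hfl : ∀ v, f v = ∑ i, l i * v i := by
      intro v
      conv_lhs => rw [pi_eq_sum_univ' v]
      rw [map_sum]
      refine Finset.sum_congr rfl fun i _ => ?_
      rw [map_smul, smul_eq_mul, mul_comm]
    have hQv : ∀ v ∈ Q, ∑ i, l i * v i < u := fun v hv => by rw [← hfl]; exact hf1 v hv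
    have hl : ∀ i, 0 ≤ l i := by
      intro i
      by_contra! hi
      have base : (fun _ => c' - 1 : ι → ℝ) ∈ Q := fun i => by simp
      set s := f (fun _ => c' - 1)
      let T := (|u - s| + 1) / (-l i)
      have hT : 0 ≤ T := div_nonneg (by positivity) (by linarith)
      have h2 := hf1 ((fun _ => c' - 1) - T • Pi.single i (1:ℝ)) (by
        intro j
        simp only [Pi.sub_apply, Pi.smul_apply, smul_eq_mul]
        have : 0 ≤ T * (Pi.single i (1:ℝ) : ι → ℝ) j := mul_nonneg hT (by
          by_cases hj : j = i
          · subst hj; simp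
          · simp [Pi.single_eq_of_ne hj])
        linarith)
      rw [map_sub, map_smul, smul_eq_mul] at h2
      have h3 : T * l i = -(|u - s| + 1) := by
        simp only [T]; field_simp [hi.ne]
      change s - T * l i < u at h2
      rw [h3] at h2
      linarith [le_abs_self (u - s), neg_abs_le (u-s)]
    have hA0 : u ≤ ∑ i, l i * a i := by
      have := hf2 (V 0) ⟨0, inferInstance, by simp, rfl⟩
      rw [hfl] at this
      simpa [V] using this
    have hS : 0 < ∑ i, l i := by
      rcases (Finset.sum_nonneg fun i (_ : i ∈ Finset.univ) => hl i).eq_or_lt with h0 | h0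
      · exfalso
        have hz : ∀ i, l i = 0 := fun i =>
          (Finset.sum_eq_zero_iff_of_nonneg fun i _ => hl i).1 h0.symm i (Finset.mem_univ i)
        have := hQv (fun _ => c' - 1) (fun i => by simp)
        simp only [hz, zero_mul, Finset.sum_const_zero] at this hA0
        linarith
      · exact h0
    have hu : c' * ∑ i, l i ≤ u := by
      refine le_of_forall_pos_lt_add fun ε hε => ?_
      have := hQv (fun _ => c' - ε / (∑ i, l i)) (fun i => by simp; positivity)
      rw [← Finset.sum_mul] at this
      have e : (∑ i, l i) * (c' - ε / ∑ i, l i) = c' * (∑ i, l i) - ε := by field_simp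
      linarith
    refine absurd (H (fun i => l i / ∑ i, l i) (fun i => div_nonneg (hl i) hS.le)
      (by rw [← Finset.sum_div]; exact div_self hS.ne') ?_) ?_
    · intro y
      by_cases hy : c y = ∞
      · simp [hy]
      rw [ENNReal.ofReal_le_iff_le_toReal hy]
      have e : ∑ i, l i / (∑ i, l i) * h i y = (∑ i, l i * h i y) / ∑ i, l i := by
        rw [Finset.sum_div]; exact Finset.sum_congr rfl fun i _ => by ring
      rw [e, div_le_iff₀ hS]
      have key : ∀ t : ℝ≥0, u ≤ (∑ i, l i * a i) + t * ((c y).toReal * (∑ i, l i) - ∑ i, l i * h i y) := by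
        intro t
        have := hf2 (V (t • Measure.dirac y)) ⟨t • Measure.dirac y, inferInstance, by
          rw [lintegral_smul_measure, lintegral_dirac' _ hc]
          exact ENNReal.mul_ne_top (by simp) hy, rfl⟩
        rw [hfl] at this
        refine this.trans_eq ?_
        simp only [V]
        rw [lintegral_smul_measure, lintegral_dirac' _ hc]
        have e2 : ∀ i, ∫ z, h i z ∂(t • Measure.dirac y) = t * h i y := fun i => by
          rw [integral_smul_nnreal_measure, integral_dirac' _ _ ((h i).continuous.measurable.stronglyMeasurable)]
          rfl
        simp only [e2]
        simp only [ENNReal.smul_def, smul_eq_mul, ENNReal.toReal_mul, ENNReal.coe_toReal]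
        rw [Finset.mul_sum, ← Finset.sum_sub_distrib, Finset.mul_sum, ← Finset.sum_add_distrib]
        exact Finset.sum_congr rfl fun i _ => by ring
      by_contra! hlt
      set d := ∑ i, l i * h i y - (c y).toReal * ∑ i, l i with hd'
      have hdpos : 0 < d := by linarith
      have := key (Real.toNNReal (((∑ i, l i * a i) - u + 1) / d))
      have e3 : (c y).toReal * (∑ i, l i) - ∑ i, l i * h i y = - d := by rw [hd']; ring
      rw [e3, Real.coe_toNNReal _ (div_nonneg (by linarith) hdpos.le)] at this
      have e4 : ((∑ i, l i * a i) - u + 1) / d * -d = -((∑ i, l i * a i) - u + 1) := by field_simp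
      rw [e4] at this
      linarith
    · have e : ∑ i, l i / (∑ i, l i) * a i = (∑ i, l i * a i) / ∑ i, l i := by
        rw [Finset.sum_div]; exact Finset.sum_congr rfl fun i _ => by ring
      rw [e, not_lt, le_div_iff₀ hS]
      linarith
  · obtain ⟨v, hv, Γ, iΓ, fΓ, rfl⟩ := Set.not_disjoint_iff.1 hd
    refine ⟨⟨Γ, iΓ⟩, fun i => ?_⟩
    change ((∫⁻ y, c y ∂Γ : ℝ≥0∞) : EReal) ≤ ((c' - a i + ∫ y, h i y ∂Γ : ℝ) : EReal)
    rw [coe_toReal_E fΓ, EReal.coe_le_coe_iff]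
    have := hv i
    simp only [V] at this
    linarith
end

lemma cutoff {X : Type*} [MetricSpace X] [PolishSpace X] [MeasurableSpace X] [BorelSpace X] [LocallyCompactSpace X]
    (F : EntropyFn) (hF : F.Superlinear) (μ : Measure X) [IsFiniteMeasure μ] (b J : ℝ) (hb : b < 0) :
    ∃ φ ∈ F.Phi X, ∃ A : Set X, IsCompact A ∧ b * μ.real univ - 1 ≤ ∫ x, φ x ∂μ ∧
      ∀ (ν : Measure X) [IsFiniteMeasure ν], ∫ x, F.rbc φ x ∂ν ≤ F.rr b * ν.real univ - J * ν.real Aᶜ := by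
  obtain ⟨k₀, hk₀, hk₀'⟩ := F.rr_neg hF (J - F.rr b)
  obtain ⟨k, hkb, hk⟩ : ∃ k ≤ b, F.rr k ≤ -(J - F.rr b) :=
    ⟨min k₀ b, min_le_right _ _, hk₀' _ (min_le_left _ _)⟩
  have hpos : 0 < b - k + 1 := by linarith
  obtain ⟨A', hA', hA''⟩ := isTightMeasureSet_iff_exists_isCompact_measure_compl_le.1
      (isTightMeasureSet_singleton (μ := μ)) (ENNReal.ofReal (1 / (b - k + 1))) (by
        rw [ENNReal.ofReal_pos]; positivity)
  have hμA : μ.real A'ᶜ ≤ 1 / (b - k + 1) := by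
    rw [Measure.real]
    exact ENNReal.toReal_le_of_le_ofReal (by positivity) (hA'' _ rfl)
  obtain ⟨f, hf1, -, hfc, hf01⟩ := exists_continuous_one_zero_of_isCompact hA' isClosed_empty (disjoint_empty _)
  let φ : X →ᵇ ℝ := BoundedContinuousFunction.ofNormedAddCommGroup (fun x => b + (k - b) * (1 - f x))
    (by fun_prop) (|b| + |k - b|) (by
      intro x
      have := hf01 x
      refine (norm_add_le _ _).trans (add_le_add le_rfl ?_)
      rw [norm_mul]
      have h1 : ‖1 - f x‖ ≤ 1 := by rw [Real.norm_eq_abs, abs_le]; constructor <;> linarith [this.1, this.2]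
      calc ‖k - b‖ * ‖1 - f x‖ ≤ ‖k - b‖ * 1 := by gcongr
        _ = |k - b| := by simp)
  have hφ : ∀ x, φ x = b + (k - b) * (1 - f x) := fun x => rfl
  have hφb : ∀ x, φ x ≤ b := fun x => by
    rw [hφ]; nlinarith [(hf01 x).1, (hf01 x).2]
  have hφk : ∀ x, k ≤ φ x := fun x => by
    rw [hφ]; nlinarith [(hf01 x).1, (hf01 x).2]
  have hPhi : φ ∈ F.Phi X := ⟨b, F.DD_of_neg hb, hφb⟩
  refine ⟨φ, hPhi, tsupport f, hfc, ?_, ?_⟩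
  · have hm : MeasurableSet A'ᶜ := hA'.isClosed.measurableSet.compl
    have h1 : ∫ x, (b - A'ᶜ.indicator (fun _ => b - k) x) ∂μ ≤ ∫ x, φ x ∂μ := by
      refine integral_mono ((integrable_const _).sub ((integrable_const _).indicator hm)) (φ.integrable μ) fun x => ?_
      by_cases hx : x ∈ A'
      · rw [indicator_of_notMem (by simpa using hx), hφ, hf1 hx]; simp
      · rw [indicator_of_mem (by simpa using hx)]; linarith [hφk x]
    rw [integral_sub (integrable_const _) ((integrable_const _).indicator hm), integral_indicator_const _ hm] at h1
    simp only [integral_const, smul_eq_mul] at h1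
    have h2 : μ.real A'ᶜ * (b - k) ≤ 1 := by
      calc μ.real A'ᶜ * (b - k) ≤ 1 / (b - k + 1) * (b - k) := by
            gcongr
        _ ≤ 1 := by rw [one_div_mul_eq_div, div_le_one hpos]; linarith
    linarith
  · intro ν _
    have hm : MeasurableSet (tsupport f)ᶜ := (isClosed_tsupport _).measurableSet.compl
    have h1 : ∫ x, F.rbc φ x ∂ν ≤ ∫ x, (F.rr b - (tsupport f)ᶜ.indicator (fun _ => J) x) ∂ν := by
      refine integral_mono ((F.rbc φ).integrable ν) ((integrable_const _).sub ((integrable_const _).indicator hm)) fun x => ?_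
      rw [EntropyFn.rbc_apply hPhi]
      by_cases hx : x ∈ tsupport f
      · rw [indicator_of_notMem (by simpa using hx)]
        simpa using F.rr_mono (hφb x) (F.DD_of_neg hb)
      · rw [indicator_of_mem (by simpa using hx), hφ, image_eq_zero_of_notMem_tsupport hx]
        simp only [sub_zero, mul_one]
        rw [show b + (k - b) = k by ring]
        linarith
    rw [integral_sub (integrable_const _) ((integrable_const _).indicator hm), integral_indicator_const _ hm] at h1
    simp only [integral_const, smul_eq_mul] at h1
    linarith

section
variable {X₁ : Type*} [MetricSpace X₁] [PolishSpace X₁] [MeasurableSpace X₁] [BorelSpace X₁]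
    {X₂ : Type*} [MetricSpace X₂] [PolishSpace X₂] [MeasurableSpace X₂] [BorelSpace X₂]

def hB (F₁ F₂ : EntropyFn) (K : ℝ) (φ : (X₁ →ᵇ ℝ) × (X₂ →ᵇ ℝ)) : (X₁ × ProbabilityMeasure X₂) →ᵇ ℝ :=
  BoundedContinuousFunction.ofNormedAddCommGroup
    (fun q => F₁.rbc φ.1 q.1 + ∫ y, F₂.rbc φ.2 y ∂(q.2 : Measure X₂) - K)
    ((((F₁.rbc φ.1).continuous.comp continuous_fst).add ((pmEv_cont (F₂.rbc φ.2)).comp continuous_snd)).sub continuous_const)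
    (‖F₁.rbc φ.1‖ + ‖F₂.rbc φ.2‖ + |K|) (by
      intro q
      refine (norm_sub_le _ _).trans (add_le_add ((norm_add_le _ _).trans (add_le_add ?_ ?_)) le_rfl)
      · exact (F₁.rbc φ.1).norm_coe_le_norm _
      · exact BoundedContinuousFunction.norm_integral_le_norm _ _)

lemma hB_apply (F₁ F₂ : EntropyFn) (K : ℝ) (φ : (X₁ →ᵇ ℝ) × (X₂ →ᵇ ℝ)) (q : X₁ × ProbabilityMeasure X₂) :
    hB F₁ F₂ K φ q = F₁.rbc φ.1 q.1 + ∫ y, F₂.rbc φ.2 y ∂(q.2 : Measure X₂) - K := rfl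

lemma hB_integral (F₁ F₂ : EntropyFn) (K : ℝ) (φ : (X₁ →ᵇ ℝ) × (X₂ →ᵇ ℝ))
    (Γ : Measure (X₁ × ProbabilityMeasure X₂)) [IsFiniteMeasure Γ] :
    ∫ q, hB F₁ F₂ K φ q ∂Γ = ∫ x, F₁.rbc φ.1 x ∂Γ.fst + ∫ x, F₂.rbc φ.2 x ∂(bary Γ.snd) - K * Γ.real univ := by
  have hc : Continuous fun p : ProbabilityMeasure X₂ => ∫ x, F₂.rbc φ.2 x ∂(p : Measure X₂) := pmEv_cont (F₂.rbc φ.2)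
  have i1 : Integrable (fun q : X₁ × ProbabilityMeasure X₂ => F₁.rbc φ.1 q.1) Γ :=
    ((F₁.rbc φ.1).compContinuous ⟨_, continuous_fst⟩).integrable Γ
  have i2 : Integrable (fun q : X₁ × ProbabilityMeasure X₂ => ∫ y, F₂.rbc φ.2 y ∂(q.2 : Measure X₂)) Γ := by
    refine Integrable.of_bound (hc.comp continuous_snd).measurable.aestronglyMeasurable ‖F₂.rbc φ.2‖ ?_
    exact Eventually.of_forall fun q => BoundedContinuousFunction.norm_integral_le_norm _ _
  have e2 : ∫ x, F₂.rbc φ.2 x ∂(bary Γ.snd) = ∫ q : X₁ × ProbabilityMeasure X₂, (∫ y, F₂.rbc φ.2 y ∂(q.2 : Measure X₂)) ∂Γ := by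
    rw [bary_integral]
    exact integral_map measurable_snd.aemeasurable hc.measurable.aestronglyMeasurable
  simp only [hB_apply]
  have i3 : Integrable (fun q : X₁ × ProbabilityMeasure X₂ => F₁.rbc φ.1 q.1 + ∫ y, F₂.rbc φ.2 y ∂(q.2 : Measure X₂)) Γ := i1.add i2
  rw [integral_sub i3 (integrable_const _), integral_add i1 i2, e2, Measure.fst,
    integral_map measurable_fst.aemeasurable (F₁.rbc φ.1).continuous.measurable.aestronglyMeasurable]
  simp [mul_comm]

lemma fst_real_univ (Γ : Measure (X₁ × ProbabilityMeasure X₂)) : Γ.fst.real univ = Γ.real univ := by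
  simp [Measure.real, Measure.fst_univ]

lemma bary_real_univ (Γ : Measure (X₁ × ProbabilityMeasure X₂)) : (bary Γ.snd).real univ = Γ.real univ := by
  simp [Measure.real, bary_apply, Measure.snd_univ]

lemma hB_integral_fin {c : X₁ × ProbabilityMeasure X₂ → ℝ≥0∞} {h : (X₁ × ProbabilityMeasure X₂) →ᵇ ℝ} {r : ℝ}
    {Γ : FiniteMeasure (X₁ × ProbabilityMeasure X₂)} (hΓ : Γ ∈ Sset c h r) :
    ∫⁻ y, c y ∂(Γ : Measure (X₁ × ProbabilityMeasure X₂)) ≠ ∞ ∧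
    (∫⁻ y, c y ∂(Γ : Measure (X₁ × ProbabilityMeasure X₂))).toReal
      ≤ r + ∫ y, h y ∂(Γ : Measure (X₁ × ProbabilityMeasure X₂)) := by
  have hne : ∫⁻ y, c y ∂(Γ : Measure (X₁ × ProbabilityMeasure X₂)) ≠ ∞ := by
    intro h
    unfold Sset at hΓ
    rw [mem_ofPred_eq, h, EReal.coe_ennreal_top, top_le_iff] at hΓ
    exact EReal.coe_ne_top _ hΓ
  refine ⟨hne, ?_⟩
  unfold Sset at hΓ
  rw [mem_ofPred_eq, coe_toReal_E hne, EReal.coe_le_coe_iff] at hΓ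
  exact hΓ
end

lemma fromReal {X : Type*} [MeasurableSpace X] (D : ℝ) (ν : Measure X) [IsFiniteMeasure ν] (B : Set X) (n : ℕ)
    (h : (|D| + 2) * 4 ^ n * ν.real B ≤ D + 1) : ν B ≤ (4⁻¹ : ℝ≥0∞) ^ n := by
  have h1 : ν.real B ≤ (4⁻¹ : ℝ) ^ n := by
    have h2 : (|D| + 2) * (4 ^ n * ν.real B) ≤ (|D| + 2) * 1 := by
      rw [← mul_assoc]; linarith [le_abs_self D]
    have h3 := le_of_mul_le_mul_left h2 (by positivity)
    rw [inv_pow, ← one_div, le_div_iff₀ (by positivity)]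
    linarith
  rw [← ENNReal.ofReal_toReal (measure_ne_top ν B)]
  refine (ENNReal.ofReal_le_ofReal h1).trans_eq ?_
  rw [ENNReal.ofReal_pow (by norm_num), ENNReal.ofReal_inv_of_pos (by norm_num)]
  norm_num

section
variable {X₁ : Type*} [MetricSpace X₁] [PolishSpace X₁] [MeasurableSpace X₁] [BorelSpace X₁] [LocallyCompactSpace X₁]
    {X₂ : Type*} [MetricSpace X₂] [PolishSpace X₂] [MeasurableSpace X₂] [BorelSpace X₂] [LocallyCompactSpace X₂]

lemma Phi_comb {X : Type*} [TopologicalSpace X] (F : EntropyFn) {ι : Type*} [Fintype ι] (φ : ι → X →ᵇ ℝ)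
    (hφ : ∀ i, φ i ∈ F.Phi X) (l : ι → ℝ) (hl : ∀ i, 0 ≤ l i) (hs : ∑ i, l i = 1) :
    (∑ i, l i • φ i) ∈ F.Phi X ∧ ∀ x, F.rbc (∑ i, l i • φ i) x ≤ ∑ i, l i * F.rbc (φ i) x := by
  have happ : ∀ x, (∑ i, l i • φ i) x = ∑ i, l i • φ i x := fun x => by simp
  have hm : (∑ i, l i • φ i) ∈ F.Phi X := by
    choose b hb hb' using hφ
    refine ⟨∑ i, l i • b i, F.DD_convex.sum_mem (fun i _ => hl i) hs (fun i _ => hb i), fun x => ?_⟩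
    rw [happ]
    exact Finset.sum_le_sum fun i _ => smul_le_smul_of_nonneg_left (hb' i x) (hl i)
  refine ⟨hm, fun x => ?_⟩
  rw [EntropyFn.rbc_apply hm, happ]
  refine (F.rr_convex.map_sum_le (fun i _ => hl i) hs (fun i _ => EntropyFn.Phi_mem (hφ i) x)).trans_eq ?_
  exact Finset.sum_congr rfl fun i _ => by rw [EntropyFn.rbc_apply (hφ i), smul_eq_mul]

lemma finite_step (C : X₁ → ProbabilityMeasure X₂ → EReal)
    (hClsc : LowerSemicontinuous fun q : X₁ × ProbabilityMeasure X₂ => C q.1 q.2)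
    (K : ℝ) (hK : ∀ x p, (K : EReal) ≤ C x p)
    (F₁ F₂ : EntropyFn) (hF₁ : F₁.Superlinear) (hF₂ : F₂.Superlinear)
    (μ₁ : Measure X₁) (μ₂ : Measure X₂) [IsFiniteMeasure μ₁] [IsFiniteMeasure μ₂] (c' : ℝ)
    (hc' : ∀ φ ∈ lamRSet C F₁ F₂, (∫ x, φ.1 x ∂μ₁) + ∫ x, φ.2 x ∂μ₂ < c')
    {ι : Type*} [Fintype ι] (φ : ι → (X₁ →ᵇ ℝ) × (X₂ →ᵇ ℝ)) (h1 : ∀ i, (φ i).1 ∈ F₁.Phi X₁) (h2 : ∀ i, (φ i).2 ∈ F₂.Phi X₂) :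
    ∃ Γ : FiniteMeasure (X₁ × ProbabilityMeasure X₂), ∀ i, Γ ∈ Sset (fun q => cT K (C q.1 q.2)) (hB F₁ F₂ K (φ i))
      (c' - ((∫ x, (φ i).1 x ∂μ₁) + ∫ x, (φ i).2 x ∂μ₂)) := by
  rcases isEmpty_or_nonempty ι with hι | hι
  · exact ⟨0, fun i => hι.elim i⟩
  refine fin_minimax (fun q => cT K (C q.1 q.2)) ?_ (fun i => (∫ x, (φ i).1 x ∂μ₁) + ∫ x, (φ i).2 x ∂μ₂) 
    (fun i => hB F₁ F₂ K (φ i)) c' ?_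
  · exact ((cT_cont K).comp_lowerSemicontinuous hClsc (cT_mono K)).measurable
  intro l hl hs hle
  obtain ⟨m1, r1⟩ := Phi_comb F₁ (fun i => (φ i).1) h1 l hl hs
  obtain ⟨m2, r2⟩ := Phi_comb F₂ (fun i => (φ i).2) h2 l hl hs
  have hint1 : ∫ x, (∑ i, l i • (φ i).1) x ∂μ₁ = ∑ i, l i * ∫ x, (φ i).1 x ∂μ₁ := by
    simp only [BoundedContinuousFunction.coe_sum, Finset.sum_apply, BoundedContinuousFunction.coe_smul, smul_eq_mul]
    rw [integral_finset_sum _ fun i _ => ((φ i).1.integrable μ₁).const_mul _]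
    simp only [integral_const_mul]
  have hint2 : ∫ x, (∑ i, l i • (φ i).2) x ∂μ₂ = ∑ i, l i * ∫ x, (φ i).2 x ∂μ₂ := by
    simp only [BoundedContinuousFunction.coe_sum, Finset.sum_apply, BoundedContinuousFunction.coe_smul, smul_eq_mul]
    rw [integral_finset_sum _ fun i _ => ((φ i).2.integrable μ₂).const_mul _]
    simp only [integral_const_mul]
  have hmem : ((∑ i, l i • (φ i).1, ∑ i, l i • (φ i).2) : (X₁ →ᵇ ℝ) × (X₂ →ᵇ ℝ)) ∈ lamRSet C F₁ F₂ := by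
    rw [lamR_iff C F₁ F₂ hF₁ hF₂]
    refine ⟨m1, m2, fun x p => ?_⟩
    have hI : ∫ y, F₂.rbc (∑ i, l i • (φ i).2) y ∂(p : Measure X₂) ≤ ∑ i, l i * ∫ y, F₂.rbc (φ i).2 y ∂(p : Measure X₂) := by
      calc ∫ y, F₂.rbc (∑ i, l i • (φ i).2) y ∂(p : Measure X₂)
          ≤ ∫ y, ∑ i, l i * F₂.rbc (φ i).2 y ∂(p : Measure X₂) :=
            integral_mono ((F₂.rbc _).integrable _)
              (integrable_finset_sum _ fun i _ => ((F₂.rbc (φ i).2).integrable _).const_mul _) r2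
        _ = _ := by
            rw [integral_finset_sum _ fun i _ => ((F₂.rbc (φ i).2).integrable _).const_mul _]
            simp only [integral_const_mul]
    have h3 := hle (x, p)
    simp only [hB_apply] at h3
    have e : ∑ i, l i * (F₁.rbc (φ i).1 x + ∫ y, F₂.rbc (φ i).2 y ∂(p : Measure X₂) - K)
        = ∑ i, l i * F₁.rbc (φ i).1 x + ∑ i, l i * ∫ y, F₂.rbc (φ i).2 y ∂(p : Measure X₂) - K := by
      conv_rhs => rw [← one_mul K, ← hs, Finset.sum_mul]
      rw [← Finset.sum_add_distrib, ← Finset.sum_sub_distrib]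
      exact Finset.sum_congr rfl fun i _ => by ring
    rw [e] at h3
    rw [← cT_add K (hK x p)]
    set v := ∑ i, l i * F₁.rbc (φ i).1 x + ∑ i, l i * ∫ y, F₂.rbc (φ i).2 y ∂(p : Measure X₂) - K
    have h4 : ((v : ℝ) : EReal) ≤ ((cT K (C x p) : ℝ≥0∞) : EReal) := by
      refine le_trans ?_ (EReal.coe_ennreal_le_coe_ennreal_iff.2 h3)
      rw [EReal.coe_ennreal_ofReal, EReal.coe_le_coe_iff]
      exact le_max_left _ _
    calc ((F₁.rbc (∑ i, l i • (φ i).1) x + ∫ y, F₂.rbc (∑ i, l i • (φ i).2) y ∂(p : Measure X₂) : ℝ) : EReal)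
        ≤ ((v + K : ℝ) : EReal) := by
          rw [EReal.coe_le_coe_iff]
          have := r1 x
          simp only [v]
          linarith
      _ = (v : EReal) + (K : EReal) := EReal.coe_add _ _
      _ ≤ _ := by gcongr
  have := hc' _ hmem
  rw [hint1, hint2, ← Finset.sum_add_distrib] at this
  simpa only [mul_add] using this

lemma exists_Gamma (C : X₁ → ProbabilityMeasure X₂ → EReal)
    (hClsc : LowerSemicontinuous fun q : X₁ × ProbabilityMeasure X₂ => C q.1 q.2)
    (K : ℝ) (hK : ∀ x p, (K : EReal) ≤ C x p)
    (F₁ F₂ : EntropyFn) (hF₁ : F₁.Superlinear) (hF₂ : F₂.Superlinear)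
    (μ₁ : Measure X₁) (μ₂ : Measure X₂) [IsFiniteMeasure μ₁] [IsFiniteMeasure μ₂] (c' : ℝ)
    (hc' : ∀ φ ∈ lamRSet C F₁ F₂, (∫ x, φ.1 x ∂μ₁) + ∫ x, φ.2 x ∂μ₂ < c') :
    ∃ Γ : FiniteMeasure (X₁ × ProbabilityMeasure X₂), ∀ φ : (X₁ →ᵇ ℝ) × (X₂ →ᵇ ℝ), φ.1 ∈ F₁.Phi X₁ → φ.2 ∈ F₂.Phi X₂ →
      Γ ∈ Sset (fun q => cT K (C q.1 q.2)) (hB F₁ F₂ K φ) (c' - ((∫ x, φ.1 x ∂μ₁) + ∫ x, φ.2 x ∂μ₂)) := by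
  classical
  let I : Type _ := {φ : (X₁ →ᵇ ℝ) × (X₂ →ᵇ ℝ) // φ.1 ∈ F₁.Phi X₁ ∧ φ.2 ∈ F₂.Phi X₂}
  let S : I → Set (FiniteMeasure (X₁ × ProbabilityMeasure X₂)) := fun φ =>
    Sset (fun q => cT K (C q.1 q.2)) (hB F₁ F₂ K φ.1) (c' - ((∫ x, φ.1.1 x ∂μ₁) + ∫ x, φ.1.2 x ∂μ₂))
  obtain ⟨b₁, hb₁, hb₁'⟩ := F₁.rr_neg hF₁ (|K| + 1)
  have hr₁ := hb₁' b₁ le_rfl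
  have hr₂ : F₂.rr (-1) ≤ 0 := F₂.rr_nonpos (by norm_num)
  set D : ℝ := c' - (b₁ * μ₁.real univ + -1 * μ₂.real univ) with hD
  have hJ : ∀ n : ℕ, (0:ℝ) < (|D| + 2) * 4 ^ n := fun n => by positivity
  choose f₁ hf₁ A hA hfA hfr₁ using fun n : ℕ => cutoff F₁ hF₁ μ₁ b₁ ((|D| + 2) * 4 ^ n) hb₁
  choose f₂ hf₂ L hL hfL hfr₂ using fun n : ℕ => cutoff F₂ hF₂ μ₂ (-1) ((|D| + 2) * 4 ^ n) (by norm_num)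
  let g₁ : X₁ →ᵇ ℝ := BoundedContinuousFunction.const X₁ b₁
  let g₂ : X₂ →ᵇ ℝ := BoundedContinuousFunction.const X₂ (-1)
  have hg₁ : g₁ ∈ F₁.Phi X₁ := ⟨b₁, F₁.DD_of_neg hb₁, fun x => le_rfl⟩
  have hg₂ : g₂ ∈ F₂.Phi X₂ := ⟨-1, F₂.DD_of_neg (by norm_num), fun x => le_rfl⟩
  have ig₁ : ∫ x, g₁ x ∂μ₁ = b₁ * μ₁.real univ := by simp [g₁, mul_comm]
  have ig₂ : ∫ x, g₂ x ∂μ₂ = -1 * μ₂.real univ := by simp [g₂]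
  have rg₁ : ∀ (ν : Measure X₁) [IsFiniteMeasure ν], ∫ x, F₁.rbc g₁ x ∂ν = F₁.rr b₁ * ν.real univ := by
    intro ν _
    simp only [EntropyFn.rbc_apply hg₁]
    simp [g₁, mul_comm]
  have rg₂ : ∀ (ν : Measure X₂) [IsFiniteMeasure ν], ∫ x, F₂.rbc g₂ x ∂ν = F₂.rr (-1) * ν.real univ := by
    intro ν _
    simp only [EntropyFn.rbc_apply hg₂]
    simp [g₂, mul_comm]
  have hneg : ∀ m : ℝ, 0 ≤ m → F₁.rr b₁ * m + F₂.rr (-1) * m - K * m ≤ -m := by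
    intro m hm
    have : F₁.rr b₁ + F₂.rr (-1) - K ≤ -1 := by linarith [neg_abs_le K]
    nlinarith
  have basic : ∀ (i : I) (Γ : FiniteMeasure (X₁ × ProbabilityMeasure X₂)), Γ ∈ S i →
      0 ≤ c' - ((∫ x, i.1.1 x ∂μ₁) + ∫ x, i.1.2 x ∂μ₂) + (∫ x, F₁.rbc i.1.1 x ∂(Γ : Measure (X₁ × ProbabilityMeasure X₂)).fst
        + ∫ x, F₂.rbc i.1.2 x ∂(bary (Γ : Measure (X₁ × ProbabilityMeasure X₂)).snd) - K * (Γ : Measure (X₁ × ProbabilityMeasure X₂)).real univ) := by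
    intro i Γ hΓ
    have h := (hB_integral_fin hΓ).2
    rw [hB_integral] at h
    exact ENNReal.toReal_nonneg.trans h
  have main : (⋂ i, S i).Nonempty := by
    refine inter_nonempty S (fun i => Sset_closed ((cT_cont K).comp_lowerSemicontinuous hClsc (cT_mono K)) _ _) ?_
      D.toNNReal A L hA hL ⟨(g₁, g₂), hg₁, hg₂⟩ (fun n => ⟨(f₁ n, g₂), hf₁ n, hg₂⟩) (fun n => ⟨(g₁, f₂ n), hg₁, hf₂ n⟩) ?_ ?_ ?_
    · intro J
      obtain ⟨Γ, hΓ⟩ := finite_step C hClsc K hK F₁ F₂ hF₁ hF₂ μ₁ μ₂ c' hc' (fun i : J => i.1.1)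
        (fun i => i.1.2.1) (fun i => i.1.2.2)
      refine ⟨Γ, ?_⟩
      simp only [mem_iInter]
      exact fun i hi => hΓ ⟨i, hi⟩
    · intro Γ hΓ
      have h := basic _ Γ hΓ
      dsimp only at h
      rw [ig₁, ig₂, rg₁, rg₂, fst_real_univ, bary_real_univ] at h
      have h2 := hneg ((Γ : Measure (X₁ × ProbabilityMeasure X₂)).real univ) measureReal_nonneg
      have h3 : (Γ : Measure (X₁ × ProbabilityMeasure X₂)).real univ ≤ D := by linarith
      rw [← ENNReal.ofReal_toReal (measure_ne_top (Γ : Measure (X₁ × ProbabilityMeasure X₂)) univ)]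
      exact ENNReal.ofReal_le_ofReal h3
    · intro n Γ _ hΓ
      have h := basic _ Γ hΓ
      dsimp only at h
      rw [ig₂, rg₂, bary_real_univ] at h
      have h1 := hfr₁ n (Γ : Measure (X₁ × ProbabilityMeasure X₂)).fst
      rw [fst_real_univ] at h1
      have h2 := hneg ((Γ : Measure (X₁ × ProbabilityMeasure X₂)).real univ) measureReal_nonneg
      have h4 : 0 ≤ (Γ : Measure (X₁ × ProbabilityMeasure X₂)).real univ := measureReal_nonneg
      have h5 := hfA n
      exact fromReal D _ _ n (by linarith)
    · intro n Γ _ hΓ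
      have h := basic _ Γ hΓ
      dsimp only at h
      rw [ig₁, rg₁, fst_real_univ] at h
      have h1 := hfr₂ n (bary (Γ : Measure (X₁ × ProbabilityMeasure X₂)).snd)
      rw [bary_real_univ] at h1
      have h2 := hneg ((Γ : Measure (X₁ × ProbabilityMeasure X₂)).real univ) measureReal_nonneg
      have h4 : 0 ≤ (Γ : Measure (X₁ × ProbabilityMeasure X₂)).real univ := measureReal_nonneg
      have h5 := hfL n
      exact fromReal D _ _ n (by linarith)
  obtain ⟨Γ, hΓ⟩ := main
  rw [mem_iInter] at hΓ
  exact ⟨Γ, fun φ h1 h2 => hΓ ⟨φ, h1, h2⟩⟩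
end

theorem stmt13
    {X₁ : Type*} [MetricSpace X₁] [PolishSpace X₁] [MeasurableSpace X₁] [BorelSpace X₁]
    [LocallyCompactSpace X₁]
    {X₂ : Type*} [MetricSpace X₂] [PolishSpace X₂] [MeasurableSpace X₂] [BorelSpace X₂]
    [LocallyCompactSpace X₂] [Nonempty X₂]
    (C : X₁ → ProbabilityMeasure X₂ → EReal)
    (hClsc : LowerSemicontinuous fun q : X₁ × ProbabilityMeasure X₂ => C q.1 q.2)
    (hCbdd : ∃ K : ℝ, ∀ x p, (K : EReal) ≤ C x p)
    (hCconv : ∀ (x : X₁) (p q m : ProbabilityMeasure X₂) (t : ℝ), 0 ≤ t → t ≤ 1 →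
      (m : Measure X₂) = ENNReal.ofReal t • (p : Measure X₂)
          + ENNReal.ofReal (1 - t) • (q : Measure X₂) →
      C x m ≤ (t : EReal) * C x p + ((1 - t : ℝ) : EReal) * C x q)
    (F₁ F₂ : EntropyFn) (hF₁ : F₁.Superlinear) (hF₂ : F₂.Superlinear) (hBM : HasBM X₂ F₂)
    (μ₁ : Measure X₁) (μ₂ : Measure X₂) [IsFiniteMeasure μ₁] [IsFiniteMeasure μ₂] :
    wOpt C F₁ F₂ μ₁ μ₂
      = sSup { e : EReal | ∃ φ ∈ lamRSet C F₁ F₂,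
          e = (((∫ x, φ.1 x ∂μ₁) + ∫ x, φ.2 x ∂μ₂ : ℝ) : EReal) } := by
  apply le_antisymm
  · refine EReal.le_of_forall_lt_iff_le.1 fun c' hc' => ?_
    obtain ⟨K, hK⟩ := hCbdd
    have hc2 : ∀ φ ∈ lamRSet C F₁ F₂, (∫ x, φ.1 x ∂μ₁) + ∫ x, φ.2 x ∂μ₂ < c' := by
      intro φ hφ
      rw [← EReal.coe_lt_coe_iff]
      refine lt_of_le_of_lt (le_sSup ?_) hc'
      exact ⟨φ, hφ, rfl⟩
    obtain ⟨Γ, hΓ⟩ := exists_Gamma C hClsc K hK F₁ F₂ hF₁ hF₂ μ₁ μ₂ c' hc2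
    set G : Measure (X₁ × ProbabilityMeasure X₂) := (Γ : Measure (X₁ × ProbabilityMeasure X₂)) with hG
    have hk1 : BoundedContinuousFunction.const X₁ (-1 : ℝ) ∈ F₁.Phi X₁ :=
      ⟨-1, F₁.DD_of_neg (by norm_num), fun x => le_rfl⟩
    have hk2 : BoundedContinuousFunction.const X₂ (-1 : ℝ) ∈ F₂.Phi X₂ :=
      ⟨-1, F₂.DD_of_neg (by norm_num), fun x => le_rfl⟩
    have hfin := (hB_integral_fin (hΓ (_, _) hk1 hk2)).1
    obtain ⟨γ, hγ, hg1, hg2, hg3⟩ := primal_of_Gamma C hClsc K hK hCconv G hfin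
    set w : ℝ := (∫⁻ q, cT K (C q.1 q.2) ∂G).toReal + K * G.real univ with hw
    have hsum : ((entF F₁ γ.fst μ₁ : ℝ≥0∞) : EReal) + ((entF F₂ γ.snd μ₂ : ℝ≥0∞) : EReal) ≤ ((c' - w : ℝ) : EReal) := by
      rw [hg1, hg2]
      refine EReal.add_le_of_forall_lt fun a ha b hb => ?_
      induction a using EReal.rec with
      | bot => simp
      | top => exact absurd ha not_top_lt
      | coe a =>
        induction b using EReal.rec with
        | bot => simp
        | top => exact absurd hb not_top_lt
        | coe b =>
          obtain ⟨φ₁, m1, h1⟩ := EntropyFn.entropy_strong F₁ hF₁ G.fst μ₁ ha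
          obtain ⟨φ₂, m2, h2⟩ := EntropyFn.entropy_strong F₂ hF₂ (bary G.snd) μ₂ hb
          have h3 := (hB_integral_fin (hΓ (φ₁, φ₂) m1 m2)).2
          rw [hB_integral] at h3
          rw [← EReal.coe_add, EReal.coe_le_coe_iff]
          simp only at h3
          linarith
    have hle : wOpt C F₁ F₂ μ₁ μ₂ ≤ wCost C F₁ F₂ μ₁ μ₂ γ hγ := by
      refine sInf_le ?_
      exact ⟨γ, hγ, rfl⟩
    refine hle.trans ?_
    unfold wCost
    calc _ ≤ ((c' - w : ℝ) : EReal) + (w : EReal) := add_le_add hsum hg3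
      _ = (c' : EReal) := by rw [← EReal.coe_add]; simp
  · refine sSup_le ?_
    rintro _ ⟨φ, hφ, rfl⟩
    exact weak_duality C F₁ F₂ hF₁ hF₂ μ₁ μ₂ φ hφ
end
end
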